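/- There is an absolute constant C > 0 such that for all n ≥ 3, sup_{x∈ℝ} | P_n( ( log O_n(σ) − M_n log O_n(σ) ) / ( (1/√3) log^{3/2} n ) < x ) − Φ(x) − (3^{3/2}/(24√(2π))) (1 − x²) e^{−x²/2} / √(log n) | ≤ C ( (log log n)/(log n) )^{2/3}. -/

import Mathlib

/-!
Let `A` be a random set of marks `m < n`, each chosen independently with probability `1 / (m + 1)`.
The gaps between consecutive elements of `A ∪ {n}` are distributed like the cycle lengths of a
uniform random permutation, since both follow Cauchy's formula. So the order is distributed like
the least common multiple of the gaps, and what is gained is the independence of the marks.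

Write `log lcm(gaps) = markLog + discrepancy - excess`, where `markLog = ∑ log m` over the marks.

* `markLog` is a sum of independent variables, with variance about `(log n)³ / 3` and third cumulant
  about `(log n)⁴ / 4`. Its characteristic function is a product, close to `(1 - iρs³) exp(-s² / 2)`
  with `ρ = √3 / (8 √(log n))` for small `s`, and small in the intermediate range. Smoothing by a
  Gaussian of width `(log n)^(-2/3)` turns this into the Edgeworth expansion with error
  `O((log n)^(-2/3))`. Since `√3 / 8 = 3^(3/2) / 24`, its correction is the one in the theorem.

* `discrepancy` accounts for replacing the gaps by the marks and for the repeated prime powers up to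
  `Q ≈ (log n)³`. A mark only affects the two gaps next to it, so the Efron–Stein inequality,
  together with a weak form of Mertens' theorem, bounds the variance by `O((log log n)² log n)`.

* `excess` accounts for the repeated prime powers beyond `Q`. It is nonnegative with bounded mean,
  because two different gaps are divisible by `q` with probability `O((log n)² / q²)`.

With `η = (log log n / log n)^(2/3)` and `B = (log n)^(3/2) / √3`, both the centred `discrepancy`
and `excess` are at most `η B` outside an event of probability `O(η)`, by Chebyshev and Markov; the
exponent `2/3` balances `Var(discrepancy) / (η B)²` against `η`. As the Edgeworth approximation is
Lipschitz, it carries over from `markLog` to the order.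
-/

open scoped BigOperators

/-- The standard normal distribution function `Φ`. -/
noncomputable def stdNormalCDF (x : ℝ) : ℝ :=
  (Real.sqrt (2 * Real.pi))⁻¹ * ∫ u in Set.Iic x, Real.exp (-u ^ 2 / 2)

namespace ErdosTuran

open Finset

/-! ### Independent marks -/

section Marks

variable {E : Type*} [AddCommGroup E] [Module ℝ E] (p : ℕ → unitInterval)

/-- The probability of the set `A ⊆ {0, …, n - 1}` when each `m < n` is marked, that is put into
the set, independently with probability `p m`. -/
noncomputable def markWeight (n : ℕ) (A : Finset ℕ) : ℝ :=
  ∏ m ∈ range n, if m ∈ A then (p m : ℝ) else 1 - p m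

/-- The expectation of `f A` for the random set `A` of marks with law `markWeight p n`. -/
noncomputable def markMean (n : ℕ) (f : Finset ℕ → E) : E :=
  ∑ A ∈ (range n).powerset, markWeight p n A • f A

/-- The variance of `f A` for the random set `A` of marks with law `markWeight p n`. -/
noncomputable def markVar (n : ℕ) (f : Finset ℕ → ℝ) : ℝ :=
  markMean p n fun A => (f A - markMean p n f) ^ 2

lemma markWeight_nonneg (n : ℕ) (A : Finset ℕ) : 0 ≤ markWeight p n A := by
  refine prod_nonneg fun m _ => ?_
  split_ifs
  exacts [unitInterval.nonneg _, unitInterval.one_minus_nonneg _]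

lemma markWeight_succ_of_subset {n : ℕ} {A : Finset ℕ} (hA : A ⊆ range n) :
    markWeight p (n + 1) A = (1 - p n) * markWeight p n A := by
  have hn : n ∉ A := fun h => notMem_range_self (hA h)
  rw [markWeight, prod_range_succ, if_neg hn, mul_comm, markWeight]

lemma markWeight_succ_insert (n : ℕ) (A : Finset ℕ) :
    markWeight p (n + 1) (insert n A) = p n * markWeight p n A := by
  rw [markWeight, prod_range_succ, if_pos (mem_insert_self _ _), mul_comm, markWeight]
  congr 1
  refine prod_congr rfl fun m hm => ?_
  simp [(mem_range.1 hm).ne]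

@[simp]
lemma markMean_zero (f : Finset ℕ → E) : markMean p 0 f = f ∅ := by
  simp [markMean, markWeight]

lemma markMean_succ (n : ℕ) (f : Finset ℕ → E) :
    markMean p (n + 1) f =
      (1 - p n : ℝ) • markMean p n f + (p n : ℝ) • markMean p n fun A => f (insert n A) := by
  simp only [markMean]
  rw [range_add_one, sum_powerset_insert notMem_range_self, smul_sum, smul_sum]
  congr 1
  · refine sum_congr rfl fun A hA => ?_
    rw [smul_smul, markWeight_succ_of_subset p (mem_powerset.1 hA)]
  · refine sum_congr rfl fun A _ => ?_
    rw [smul_smul, markWeight_succ_insert]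

variable {p}

lemma markMean_congr {n : ℕ} {f g : Finset ℕ → E} (h : ∀ A ⊆ range n, f A = g A) :
    markMean p n f = markMean p n g :=
  sum_congr rfl fun A hA => by rw [h A (mem_powerset.1 hA)]

lemma markMean_mono {n : ℕ} {f g : Finset ℕ → ℝ} (h : ∀ A ⊆ range n, f A ≤ g A) :
    markMean p n f ≤ markMean p n g :=
  sum_le_sum fun A hA =>
    smul_le_smul_of_nonneg_left (h A (mem_powerset.1 hA)) (markWeight_nonneg p n A)

variable (p)

lemma markMean_add (n : ℕ) (f g : Finset ℕ → E) :
    markMean p n (fun A => f A + g A) = markMean p n f + markMean p n g := by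
  simp [markMean, sum_add_distrib]

lemma markMean_sub (n : ℕ) (f g : Finset ℕ → E) :
    markMean p n (fun A => f A - g A) = markMean p n f - markMean p n g := by
  simp [markMean, smul_sub]

lemma markMean_const_mul {R : Type*} [Ring R] [Algebra ℝ R] (n : ℕ) (c : R)
    (f : Finset ℕ → R) : markMean p n (fun A => c * f A) = c * markMean p n f := by
  simp only [markMean, mul_sum, mul_smul_comm]

lemma markMean_sum {ι : Type*} (n : ℕ) (s : Finset ι) (f : ι → Finset ℕ → E) :
    markMean p n (fun A => ∑ i ∈ s, f i A) = ∑ i ∈ s, markMean p n (f i) := by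
  simp only [markMean, smul_sum]
  exact sum_comm

@[simp]
lemma markMean_const (n : ℕ) (c : E) : markMean p n (fun _ => c) = c := by
  induction n with
  | zero => simp
  | succ n ih => rw [markMean_succ, ih, ← add_smul, sub_add_cancel, one_smul]

lemma sum_markWeight (n : ℕ) : ∑ A ∈ (range n).powerset, markWeight p n A = 1 := by
  simpa [markMean] using markMean_const p n (1 : ℝ)

variable {p} in
lemma markMean_nonneg {n : ℕ} {f : Finset ℕ → ℝ} (h : ∀ A ⊆ range n, 0 ≤ f A) :
    0 ≤ markMean p n f := by
  simpa using markMean_mono (p := p) (f := fun _ => 0) h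

lemma markVar_nonneg (n : ℕ) (f : Finset ℕ → ℝ) : 0 ≤ markVar p n f :=
  markMean_nonneg fun _ _ => sq_nonneg _

lemma markVar_eq (n : ℕ) (f : Finset ℕ → ℝ) :
    markVar p n f = markMean p n (fun A => f A ^ 2) - markMean p n f ^ 2 := by
  set μ := markMean p n f with hμ
  have hsq : (fun A => (f A - μ) ^ 2) = fun A => f A ^ 2 - (2 * μ * f A - μ ^ 2) := by
    funext A; ring
  rw [markVar, ← hμ, hsq, markMean_sub, markMean_sub, markMean_const_mul, markMean_const, ← hμ]
  ring

lemma sq_markMean_le (n : ℕ) (f : Finset ℕ → ℝ) :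
    markMean p n f ^ 2 ≤ markMean p n fun A => f A ^ 2 :=
  sub_nonneg.1 (markVar_eq p n f ▸ markVar_nonneg p n f)

lemma markVar_succ (n : ℕ) (f : Finset ℕ → ℝ) :
    markVar p (n + 1) f =
      (1 - p n) * markVar p n f + p n * markVar p n (fun A => f (insert n A)) +
        p n * (1 - p n) * markMean p n (fun A => f (insert n A) - f A) ^ 2 := by
  simp only [markVar_eq, markMean_succ, markMean_sub, smul_eq_mul]
  ring

/-- The expected squared effect on `f` of changing the mark `m`: the influence of `m` in the
Efron–Stein inequality. -/
noncomputable def influence (n : ℕ) (f : Finset ℕ → ℝ) (m : ℕ) : ℝ :=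
  markMean p n fun A => (f (insert m A) - f (A.erase m)) ^ 2

lemma influence_succ_self (n : ℕ) (f : Finset ℕ → ℝ) :
    influence p (n + 1) f n = markMean p n fun A => (f (insert n A) - f A) ^ 2 := by
  have hn {A : Finset ℕ} (hA : A ⊆ range n) : n ∉ A := fun h => notMem_range_self (hA h)
  rw [influence, markMean_succ,
    markMean_congr (g := fun A => (f (insert n A) - f A) ^ 2)
      fun A hA => by rw [erase_eq_of_notMem (hn hA)],
    markMean_congr (f := fun A => (f (insert n (insert n A)) - f ((insert n A).erase n)) ^ 2)
      (g := fun A => (f (insert n A) - f A) ^ 2)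
      fun A hA => by rw [erase_insert (hn hA), insert_idem],
    ← add_smul, sub_add_cancel, one_smul]

lemma influence_succ {m n : ℕ} (hmn : m < n) (f : Finset ℕ → ℝ) :
    influence p (n + 1) f m =
      (1 - p n) * influence p n f m + p n * influence p n (fun A => f (insert n A)) m := by
  simp only [influence, markMean_succ, smul_eq_mul, Finset.insert_comm m n,
    erase_insert_of_ne hmn.ne']

/-- The Efron–Stein inequality for independent marks. -/
lemma markVar_le_sum_influence (n : ℕ) (f : Finset ℕ → ℝ) :
    markVar p n f ≤ ∑ m ∈ range n, p m * (1 - p m) * influence p n f m := by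
  induction n generalizing f with
  | zero => simp [markVar_eq]
  | succ n ih =>
    have hp : 0 ≤ (p n : ℝ) := unitInterval.nonneg _
    have hp' : 0 ≤ 1 - (p n : ℝ) := unitInterval.one_minus_nonneg _
    have hterm : ∀ m ∈ range n, p m * (1 - p m) * influence p (n + 1) f m =
        (1 - p n) * (p m * (1 - p m) * influence p n f m) +
          p n * (p m * (1 - p m) * influence p n (fun A => f (insert n A)) m) := by
      intro m hm
      rw [influence_succ p (mem_range.1 hm)]
      ring
    rw [sum_range_succ, sum_congr rfl hterm, sum_add_distrib, ← mul_sum, ← mul_sum,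
      influence_succ_self, markVar_succ]
    gcongr
    exacts [ih f, ih _, sq_markMean_le p n _]

end Marks

/-- The success probability `1 / (m + 1)` of the mark `m` in Feller's construction of the cycle
lengths of a uniform random permutation; in particular `0` is always marked. -/
noncomputable def fellerProb (m : ℕ) : unitInterval :=
  ⟨1 / ((m : ℝ) + 1), by positivity, by
    rw [div_le_one (by positivity)]
    exact le_add_of_nonneg_left m.cast_nonneg⟩

lemma coe_fellerProb (m : ℕ) : (fellerProb m : ℝ) = 1 / ((m : ℝ) + 1) := rfl

lemma one_sub_fellerProb (m : ℕ) : 1 - (fellerProb m : ℝ) = m / ((m : ℝ) + 1) := by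
  rw [coe_fellerProb]
  field_simp
  ring

/-- The expectation over the set of marks below `n` in Feller's construction. -/
local notation "fellerMean" => markMean fellerProb

lemma fellerMean_succ (n : ℕ) (f : Finset ℕ → ℝ) :
    fellerMean (n + 1) f =
      n / ((n : ℝ) + 1) * fellerMean n f +
        1 / ((n : ℝ) + 1) * fellerMean n fun A => f (insert n A) := by
  rw [markMean_succ, one_sub_fellerProb, coe_fellerProb, smul_eq_mul, smul_eq_mul]

/-- The largest mark is uniformly distributed on `{0, …, n - 1}`. -/
lemma mul_fellerMean (n : ℕ) (f : Finset ℕ → ℝ) :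
    n * fellerMean n f = ∑ a ∈ range n, fellerMean a fun A => f (insert a A) := by
  induction n with
  | zero => simp
  | succ n ih =>
    rw [sum_range_succ, ← ih, fellerMean_succ]
    push_cast
    field_simp

/-! ### Gaps between marks -/

/-- The largest mark below `m`, where `0` counts as a mark. -/
noncomputable def prevMark (A : Finset ℕ) (m : ℕ) : ℕ := sSup {a | a < m ∧ a ∈ insert 0 A}

/-- The smallest mark above `m`, where `n` counts as a mark. -/
noncomputable def nextMark (n : ℕ) (A : Finset ℕ) (m : ℕ) : ℕ :=
  sInf {b | m < b ∧ b ∈ insert n A}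

/-- The multiset of gaps between consecutive elements of `A ∪ {0, n}`, for `A ⊆ {0, …, n - 1}`. -/
noncomputable def gaps (n : ℕ) (A : Finset ℕ) : Multiset ℕ :=
  ((insert n A).erase 0).val.map fun b => b - prevMark A b

lemma isGreatest_prevMark (A : Finset ℕ) {m : ℕ} (hm : 0 < m) :
    IsGreatest {a | a < m ∧ a ∈ insert 0 A} (prevMark A m) := by
  have hbdd : BddAbove {a | a < m ∧ a ∈ insert 0 A} := ⟨m, fun a ha => ha.1.le⟩
  exact ⟨Nat.sSup_mem ⟨0, hm, mem_insert_self _ _⟩ hbdd, fun a ha => le_csSup hbdd ha⟩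

lemma isLeast_nextMark (A : Finset ℕ) {m n : ℕ} (hmn : m < n) :
    IsLeast {b | m < b ∧ b ∈ insert n A} (nextMark n A m) :=
  ⟨Nat.sInf_mem ⟨n, hmn, mem_insert_self _ _⟩, fun _ hb => Nat.sInf_le hb⟩

lemma prevMark_lt (A : Finset ℕ) {m : ℕ} (hm : 0 < m) : prevMark A m < m :=
  (isGreatest_prevMark A hm).1.1

lemma lt_nextMark (A : Finset ℕ) {m n : ℕ} (hmn : m < n) : m < nextMark n A m :=
  (isLeast_nextMark A hmn).1.1

lemma nextMark_le (A : Finset ℕ) {m n : ℕ} (hmn : m < n) : nextMark n A m ≤ n :=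
  (isLeast_nextMark A hmn).2 ⟨hmn, mem_insert_self _ _⟩

lemma nextMark_le_of_mem {A : Finset ℕ} {m n b : ℕ} (hmb : m < b) (hb : b ∈ A) :
    nextMark n A m ≤ b :=
  Nat.sInf_le ⟨hmb, mem_insert_of_mem hb⟩

lemma prevMark_insert_of_subset {A : Finset ℕ} {a m : ℕ} (hA : A ⊆ range a) (ham : a < m) :
    prevMark (insert a A) m = a := by
  refine (isGreatest_prevMark _ (a.zero_le.trans_lt ham)).unique ⟨⟨ham, by simp⟩, ?_⟩
  rintro x ⟨-, hx⟩
  grind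

lemma prevMark_insert_of_le {A : Finset ℕ} {c m : ℕ} (h : m ≤ c) :
    prevMark (insert c A) m = prevMark A m := by
  unfold prevMark
  congr 1
  grind

lemma prevMark_erase (A : Finset ℕ) (m : ℕ) : prevMark (A.erase m) m = prevMark A m := by
  unfold prevMark
  congr 1
  grind

lemma nextMark_erase (n : ℕ) (A : Finset ℕ) (m : ℕ) :
    nextMark n (A.erase m) m = nextMark n A m := by
  unfold nextMark
  congr 1
  grind

lemma nextMark_succ_insert (A : Finset ℕ) {m n : ℕ} (hmn : m < n) :
    nextMark (n + 1) (insert n A) m = nextMark n A m := by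
  have hle := nextMark_le A hmn
  obtain ⟨⟨hm, hmem⟩, hmin⟩ := isLeast_nextMark A hmn
  refine (isLeast_nextMark _ (hmn.trans n.lt_succ_self)).unique ⟨⟨hm, mem_insert_of_mem hmem⟩, ?_⟩
  rintro x ⟨hmx, hx⟩
  rcases mem_insert.1 hx with rfl | hx
  · exact hle.trans n.le_succ
  · exact hmin ⟨hmx, hx⟩

lemma nextMark_succ {A : Finset ℕ} {m n : ℕ} (hA : A ⊆ range n) (hmn : m < n) :
    nextMark (n + 1) A m = if nextMark n A m = n then n + 1 else nextMark n A m := by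
  obtain ⟨⟨hm, hmem⟩, -⟩ := isLeast_nextMark A hmn
  refine (isLeast_nextMark A (hmn.trans n.lt_succ_self)).unique ⟨⟨by grind, by grind⟩, ?_⟩
  rintro x ⟨hmx, hx⟩
  rcases mem_insert.1 hx with rfl | hx
  · have := nextMark_le A hmn
    grind
  · have := mem_range.1 (hA hx)
    have := nextMark_le_of_mem (n := n) hmx hx
    grind

lemma nextMark_succ_self (A : Finset ℕ) (m : ℕ) : nextMark (m + 1) A m = m + 1 :=
  le_antisymm (nextMark_le A m.lt_succ_self) (lt_nextMark A m.lt_succ_self)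

lemma gaps_insert {n a : ℕ} {A : Finset ℕ} (ha : a < n) (hA : A ⊆ range a) :
    gaps n (insert a A) = (n - a) ::ₘ gaps a A := by
  have hn : n ∉ (insert a A).erase 0 := by grind
  unfold gaps
  rw [erase_insert_of_ne (by omega), insert_val_of_notMem hn, Multiset.map_cons,
    prevMark_insert_of_subset hA ha]
  congr 1
  refine Multiset.map_congr rfl fun b hb => ?_
  have hb' : b ∈ (insert a A).erase 0 := hb
  rw [prevMark_insert_of_le (by grind)]

lemma mem_gaps_bounds {n : ℕ} {A : Finset ℕ} (hA : A ⊆ range n) {d : ℕ} (hd : d ∈ gaps n A) :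
    0 < d ∧ d ≤ n := by
  obtain ⟨b, hb, rfl⟩ := Multiset.mem_map.1 hd
  have hb' : b ∈ (insert n A).erase 0 := hb
  have := prevMark_lt A (show 0 < b by grind)
  grind

lemma prevMark_nextMark {A : Finset ℕ} {m n : ℕ} (hm : 0 < m) (hmn : m < n) (hmA : m ∉ A) :
    prevMark A (nextMark n A m) = prevMark A m := by
  have hlt := lt_nextMark A hmn
  obtain ⟨⟨hprev, hprev_mem⟩, hmax⟩ := isGreatest_prevMark A hm
  refine (isGreatest_prevMark A (hm.trans hlt)).unique ⟨⟨hprev.trans hlt, hprev_mem⟩, ?_⟩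
  rintro x ⟨hx, hxA⟩
  refine hmax ⟨?_, hxA⟩
  by_contra! hmx
  have := nextMark_le_of_mem (n := n) (show m < x by grind) (show x ∈ A by grind)
  omega

lemma prevMark_insert_nextMark (A : Finset ℕ) {m n : ℕ} (hmn : m < n) :
    prevMark (insert m A) (nextMark n A m) = m := by
  have hlt := lt_nextMark A hmn
  refine (isGreatest_prevMark _ (m.zero_le.trans_lt hlt)).unique ⟨⟨hlt, by simp⟩, ?_⟩
  rintro x ⟨hx, hxA⟩
  by_contra! hmx
  have := nextMark_le_of_mem (n := n) hmx (show x ∈ A by grind)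
  omega

lemma prevMark_insert_of_mem {A : Finset ℕ} {m b c : ℕ} (hb : b ∈ A) (hmb : m < b) (hbc : b < c) :
    prevMark (insert m A) c = prevMark A c := by
  obtain ⟨⟨hlt, hmem⟩, hmax⟩ := isGreatest_prevMark A (b.zero_le.trans_lt hbc)
  refine (isGreatest_prevMark _ (b.zero_le.trans_lt hbc)).unique ⟨⟨hlt, by grind⟩, ?_⟩
  rintro x ⟨hx, hxA⟩
  have hb' := hmax ⟨hbc, mem_insert_of_mem hb⟩
  by_cases hxm : x = m
  · exact (hxm.trans_lt hmb).le.trans hb'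
  · exact hmax ⟨hx, by grind⟩

lemma prevMark_insert_of_ne_nextMark {A : Finset ℕ} {m n c : ℕ} (hA : A ⊆ range n) (hmn : m < n)
    (hc : c ∈ insert n A) (hcb : c ≠ nextMark n A m) : prevMark (insert m A) c = prevMark A c := by
  rcases le_or_gt c m with hcm | hmc
  · exact prevMark_insert_of_le hcm
  · have hbc := ((isLeast_nextMark A hmn).2 ⟨hmc, hc⟩).lt_of_ne' hcb
    have hbA : nextMark n A m ∈ A := by
      have := (isLeast_nextMark A hmn).1.2
      grind
    exact prevMark_insert_of_mem hbA (lt_nextMark A hmn) hbc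

lemma exists_gaps_insert_eq_cons_cons {n m : ℕ} {A : Finset ℕ} (hA : A ⊆ range n)
    (hm : 0 < m) (hmn : m < n) (hmA : m ∉ A) :
    ∃ rest : Multiset ℕ, gaps n A = (nextMark n A m - prevMark A m) ::ₘ rest ∧
      gaps n (insert m A) = (m - prevMark A m) ::ₘ (nextMark n A m - m) ::ₘ rest := by
  set b := nextMark n A m
  have hmb : m < b := lt_nextMark A hmn
  have hbn : b ∈ (insert n A).erase 0 :=
    mem_erase.2 ⟨(hm.trans hmb).ne', (isLeast_nextMark A hmn).1.2⟩
  have hmn' : m ∉ (insert n A).erase 0 := by grind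
  have hval : ((insert n A).erase 0).val = b ::ₘ (((insert n A).erase 0).erase b).val := by
    rw [← insert_val_of_notMem (notMem_erase _ _), insert_erase hbn]
  refine ⟨(((insert n A).erase 0).erase b).val.map fun c => c - prevMark A c, ?_, ?_⟩
  · rw [gaps, hval, Multiset.map_cons, prevMark_nextMark hm hmn hmA]
  · rw [gaps, Finset.insert_comm, erase_insert_of_ne hm.ne', insert_val_of_notMem hmn', hval,
      Multiset.map_cons, Multiset.map_cons, prevMark_insert_of_le le_rfl,
      prevMark_insert_nextMark A hmn]
    congr 2
    refine Multiset.map_congr rfl fun c hc => ?_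
    obtain ⟨hcb, hc⟩ := mem_erase.1 (show c ∈ ((insert n A).erase 0).erase b from hc)
    rw [prevMark_insert_of_ne_nextMark hA hmn (mem_of_mem_erase hc) hcb]

lemma mul_fellerMean_gaps (n : ℕ) (G : Multiset ℕ → ℝ) :
    n * fellerMean n (fun A => G (gaps n A)) =
      ∑ a ∈ range n, fellerMean a fun A => G ((n - a) ::ₘ gaps a A) := by
  rw [mul_fellerMean]
  refine sum_congr rfl fun a ha => markMean_congr fun A hA => ?_
  rw [gaps_insert (mem_range.1 ha) hA]

lemma mul_fellerMean_prevMark {m n : ℕ} (hmn : m ≤ n) (φ : ℕ → ℝ) :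
    m * fellerMean n (fun A => φ (prevMark A m)) = ∑ a ∈ range m, φ a := by
  induction n, hmn using Nat.le_induction with
  | base =>
    rw [mul_fellerMean]
    refine sum_congr rfl fun a ha => ?_
    rw [markMean_congr (g := fun _ => φ a), markMean_const]
    intro A hA
    rw [prevMark_insert_of_subset hA (mem_range.1 ha)]
  | succ n hmn ih =>
    simp only [markMean_succ, prevMark_insert_of_le hmn]
    rw [← add_smul, sub_add_cancel, one_smul, ih]

/-- The expectation of `ψ` at the smallest mark above `m`, divided by `m + 1`: this mark is `b < n`
with probability `(m + 1) / (b (b + 1))`, and `n` with probability `(m + 1) / n`. -/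
noncomputable def tailMean (m n : ℕ) (ψ : ℕ → ℝ) : ℝ :=
  ∑ b ∈ Ioo m n, 1 / ((b : ℝ) * (b + 1)) * ψ b + 1 / (n : ℝ) * ψ n

lemma Ioo_add_one_right {m n : ℕ} (h : m < n) : Ioo m (n + 1) = insert n (Ioo m n) := by
  ext x
  simp only [mem_Ioo, mem_insert]
  omega

lemma tailMean_self_add_one (m : ℕ) (ψ : ℕ → ℝ) :
    tailMean m (m + 1) ψ = 1 / ((m : ℝ) + 1) * ψ (m + 1) := by
  have hIoo : Ioo m (m + 1) = ∅ := by
    ext x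
    simp
  rw [tailMean, hIoo, sum_empty, zero_add, Nat.cast_add_one]

lemma tailMean_succ {m n : ℕ} (hmn : m < n) (ψ : ℕ → ℝ) :
    tailMean m (n + 1) ψ = tailMean m n ψ + 1 / ((n : ℝ) + 1) * (ψ (n + 1) - ψ n) := by
  have hn : (n : ℝ) ≠ 0 := by exact_mod_cast hmn.ne_bot
  rw [tailMean, tailMean, Ioo_add_one_right hmn, sum_insert (by simp)]
  push_cast
  field_simp
  ring

lemma tailMean_ite_eq (m n : ℕ) (ψ : ℕ → ℝ) (c : ℕ) :
    tailMean m n (fun b => ψ (if b = n then c else b)) =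
      tailMean m n ψ + 1 / (n : ℝ) * (ψ c - ψ n) := by
  have hsum : ∑ b ∈ Ioo m n, 1 / ((b : ℝ) * (b + 1)) * ψ (if b = n then c else b) =
      ∑ b ∈ Ioo m n, 1 / ((b : ℝ) * (b + 1)) * ψ b :=
    sum_congr rfl fun b hb => by rw [if_neg (mem_Ioo.1 hb).2.ne]
  rw [tailMean, tailMean, hsum, if_pos rfl]
  ring

/-- The two marks next to `m` are independent, with a uniform law on the left and the law of
`tailMean` on the right. -/
lemma mul_fellerMean_prevMark_nextMark {m n : ℕ} (hmn : m < n) (φ : ℕ → ℕ → ℝ) :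
    m * fellerMean n (fun A => φ (prevMark A m) (nextMark n A m)) =
      (m + 1) * ∑ a ∈ range m, tailMean m n (φ a) := by
  induction n, Nat.succ_le_of_lt hmn using Nat.le_induction generalizing φ with
  | base =>
    rw [markMean_congr (g := fun A => φ (prevMark A m) (m + 1)) fun A _ => by
        rw [Nat.succ_eq_add_one, nextMark_succ_self],
      mul_fellerMean_prevMark m.le_succ (fun a => φ a (m + 1)), mul_sum]
    refine sum_congr rfl fun a _ => ?_
    rw [Nat.succ_eq_add_one, tailMean_self_add_one]
    field_simp
  | succ n hn ih =>
    have hmn : m < n := hn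
    have hn0 : (n : ℝ) ≠ 0 := by exact_mod_cast hmn.ne_bot
    rw [fellerMean_succ,
      markMean_congr (g := fun A =>
          φ (prevMark A m) (if nextMark n A m = n then n + 1 else nextMark n A m))
        fun A hA => by rw [nextMark_succ hA hmn],
      markMean_congr (f := fun A => φ (prevMark (insert n A) m) (nextMark (n + 1) (insert n A) m))
        fun A _ => by rw [nextMark_succ_insert A hmn, prevMark_insert_of_le hmn.le],
      mul_add, mul_left_comm, ih hmn (fun a b => φ a (if b = n then n + 1 else b)),
      mul_left_comm (m : ℝ) (1 / _), ih hmn φ]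
    simp only [tailMean_ite_eq, tailMean_succ hmn, sum_add_distrib, ← mul_sum]
    field_simp
    ring

/-! ### Gaps between marks are distributed like cycle lengths -/

/-- The order of the centralizer of a permutation with the multiset `μ` of cycle lengths
(fixed points included), usually denoted `z_μ`. -/
def centralizerOrder (μ : Multiset ℕ) : ℕ := μ.prod * ∏ k ∈ μ.toFinset, (μ.count k).factorial

lemma centralizerOrder_pos {μ : Multiset ℕ} (h : ∀ k ∈ μ, 0 < k) : 0 < centralizerOrder μ :=
  Nat.mul_pos (Multiset.prod_pos h) (prod_pos fun _ _ => Nat.factorial_pos _)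

lemma centralizerOrder_cons (k : ℕ) (ν : Multiset ℕ) :
    centralizerOrder (k ::ₘ ν) = k * (ν.count k + 1) * centralizerOrder ν := by
  have hsupp : ∏ j ∈ ν.toFinset, (ν.count j).factorial =
      ∏ j ∈ (k ::ₘ ν).toFinset, (ν.count j).factorial := by
    refine prod_subset (by simp) fun j _ hj => ?_
    rw [Multiset.count_eq_zero.2 (by simpa using hj), Nat.factorial_zero]
  have hcount : ∀ j, ((k ::ₘ ν).count j).factorial =
      (ν.count j).factorial * if j = k then ν.count k + 1 else 1 := by
    intro j
    rw [Multiset.count_cons]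
    split_ifs with h
    · rw [h, Nat.factorial_succ, mul_comm]
    · rw [mul_one, add_zero]
  unfold centralizerOrder
  simp only [hcount]
  rw [prod_mul_distrib, ← hsupp, prod_ite_eq', if_pos (by simp), Multiset.prod_cons]
  ring

lemma centralizerOrder_of_mem {k : ℕ} {μ : Multiset ℕ} (hk : k ∈ μ) :
    centralizerOrder μ = k * μ.count k * centralizerOrder (μ.erase k) := by
  conv_lhs => rw [← Multiset.cons_erase hk]
  rw [centralizerOrder_cons, Multiset.count_erase_self,
    Nat.sub_add_cancel (Multiset.count_pos.2 hk)]

lemma centralizerOrder_add_replicate_one {μ : Multiset ℕ} (h1 : 1 ∉ μ) (j : ℕ) :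
    centralizerOrder (μ + Multiset.replicate j 1) = j.factorial * centralizerOrder μ := by
  induction j with
  | zero => simp
  | succ j ih =>
    rw [Multiset.replicate_succ, Multiset.add_cons, centralizerOrder_cons, ih, Nat.factorial_succ,
      Multiset.count_add, Multiset.count_eq_zero.2 h1, Multiset.count_replicate_self]
    ring

lemma sum_range_sub_eq_sum_Ioc {M : Type*} [AddCommMonoid M] (n : ℕ) (F : ℕ → M) :
    ∑ a ∈ range n, F (n - a) = ∑ d ∈ Ioc 0 n, F d :=
  sum_nbij' (n - ·) (n - ·) (by simp) (by simp; omega) (by simp; omega) (by simp; omega)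
    fun _ _ => rfl

lemma fellerMean_cons_gaps_eq {a k : ℕ} {μ : Multiset ℕ} (hμ : ∀ j ∈ μ, 0 < j)
    (hμa : μ.sum = a + k)
    (hlaw : ∀ ν : Multiset ℕ, (∀ j ∈ ν, 0 < j) → ν.sum = a →
      fellerMean a (fun A => if gaps a A = ν then (1 : ℝ) else 0) = 1 / centralizerOrder ν) :
    fellerMean a (fun A => if k ::ₘ gaps a A = μ then (1 : ℝ) else 0) =
      (μ.count k * k : ℕ) / centralizerOrder μ := by
  by_cases hk : k ∈ μ
  · have hsum : (μ.erase k).sum = a := by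
      have := Multiset.sum_erase hk
      omega
    have hcons (A : Finset ℕ) : k ::ₘ gaps a A = μ ↔ gaps a A = μ.erase k := by
      rw [← Multiset.cons_inj_right k (s := gaps a A), Multiset.cons_erase hk]
    have hpos : ∀ j ∈ μ.erase k, 0 < j := fun j hj => hμ j (Multiset.mem_of_mem_erase hj)
    have hcent : (centralizerOrder (μ.erase k) : ℝ) ≠ 0 := by
      exact_mod_cast (centralizerOrder_pos hpos).ne'
    have hk0 : (k : ℝ) ≠ 0 := by exact_mod_cast (hμ k hk).ne'
    have hcount : (μ.count k : ℝ) ≠ 0 := by exact_mod_cast (Multiset.count_pos.2 hk).ne'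
    simp only [hcons]
    rw [hlaw _ hpos hsum, centralizerOrder_of_mem hk]
    push_cast
    field_simp
  · have hne (A : Finset ℕ) : k ::ₘ gaps a A ≠ μ := fun h => hk (h ▸ Multiset.mem_cons_self _ _)
    simp [hne, hk]

lemma fellerMean_gaps_eq {n : ℕ} {μ : Multiset ℕ} (hμ : ∀ k ∈ μ, 0 < k) (hμn : μ.sum = n) :
    fellerMean n (fun A => if gaps n A = μ then (1 : ℝ) else 0) = 1 / centralizerOrder μ := by
  induction n using Nat.strong_induction_on generalizing μ with
  | _ n ih =>
    rcases n.eq_zero_or_pos with rfl | hn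
    · have hμ0 : μ = 0 := Multiset.eq_zero_of_forall_notMem fun k hk =>
        (hμ k hk).ne' (Multiset.sum_eq_zero_iff.1 hμn k hk)
      simp [hμ0, gaps, centralizerOrder]
    · have hterm : ∀ a ∈ range n,
          fellerMean a (fun A => if (n - a) ::ₘ gaps a A = μ then (1 : ℝ) else 0) =
            (μ.count (n - a) * (n - a) : ℕ) / centralizerOrder μ := by
        intro a ha
        have han := mem_range.1 ha
        exact fellerMean_cons_gaps_eq hμ (by omega) fun ν hν hνa => ih a han hν hνa
      have hsupp : μ.toFinset ⊆ Ioc 0 n := fun k hk => by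
        have hk' := Multiset.mem_toFinset.1 hk
        exact mem_Ioc.2 ⟨hμ k hk', hμn ▸ Multiset.le_sum_of_mem hk'⟩
      have hrec := mul_fellerMean_gaps n fun P => if P = μ then (1 : ℝ) else 0
      rw [sum_congr rfl hterm,
        sum_range_sub_eq_sum_Ioc n fun k => ((μ.count k * k : ℕ) : ℝ) / centralizerOrder μ,
        ← sum_div, ← Nat.cast_sum] at hrec
      have hsum : ∑ k ∈ Ioc 0 n, μ.count k * k = n := by
        simpa [hμn] using (sum_multiset_count_of_subset μ _ hsupp).symm
      have hn' : (n : ℝ) ≠ 0 := by exact_mod_cast hn.ne'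
      refine mul_left_cancel₀ hn' (hrec.trans ?_)
      rw [hsum, mul_one_div]

lemma sum_gaps {n : ℕ} {A : Finset ℕ} (hA : A ⊆ range n) : (gaps n A).sum = n := by
  induction n using Nat.strong_induction_on generalizing A with
  | _ n ih =>
    rcases A.eq_empty_or_nonempty with rfl | hne
    · rcases n.eq_zero_or_pos with rfl | hn
      · simp [gaps]
      · have hprev : prevMark ∅ n = 0 := by
          simpa using (isGreatest_prevMark ∅ hn).1.2
        simp [gaps, erase_eq_of_notMem, hn.ne, hprev]
    · have hmem := A.max'_mem hne
      have han : A.max' hne < n := mem_range.1 (hA hmem)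
      have hA' : A.erase (A.max' hne) ⊆ range (A.max' hne) := fun x hx =>
        mem_range.2 (A.lt_max'_of_mem_erase_max' hne hx)
      rw [← insert_erase hmem, gaps_insert han hA', Multiset.sum_cons, ih _ han hA']
      omega

lemma parts_eq_filter_add_replicate {n : ℕ} (P : n.Partition) :
    P.parts = P.parts.filter (2 ≤ ·) +
      Multiset.replicate (n - (P.parts.filter (2 ≤ ·)).sum) 1 := by
  have hones : P.parts.filter (fun k => ¬ 2 ≤ k) =
      Multiset.replicate (P.parts.filter fun k => ¬ 2 ≤ k).card 1 := by
    refine Multiset.eq_replicate_card.2 fun k hk => ?_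
    have := P.parts_pos (Multiset.mem_of_mem_filter hk)
    have := Multiset.of_mem_filter hk
    omega
  have hsplit := Multiset.filter_add_not (2 ≤ ·) P.parts
  have hsum : (P.parts.filter (2 ≤ ·)).sum + (P.parts.filter fun k => ¬ 2 ≤ k).card = n := by
    have := congrArg Multiset.sum hsplit
    rw [Multiset.sum_add, P.parts_sum, hones] at this
    simpa using this
  rw [← Nat.eq_sub_of_add_eq' hsum, ← hones, hsplit]

section Permutations

variable {α : Type*} [Fintype α] [DecidableEq α]

lemma partition_eq_iff {σ : Equiv.Perm α} {P : (Fintype.card α).Partition} :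
    σ.partition = P ↔ σ.cycleType = P.parts.filter (2 ≤ ·) := by
  refine ⟨fun h => h ▸ Equiv.Perm.filter_parts_partition_eq_cycleType.symm, fun h => ?_⟩
  rw [Nat.Partition.ext_iff, Equiv.Perm.parts_partition, ← Equiv.Perm.sum_cycleType, h,
    ← parts_eq_filter_add_replicate]

lemma card_partition_eq_mul (P : (Fintype.card α).Partition) :
    #{σ : Equiv.Perm α | σ.partition = P} * centralizerOrder P.parts =
      (Fintype.card α).factorial := by
  have htwo : ∀ k ∈ P.parts.filter (2 ≤ ·), 2 ≤ k := fun k hk => Multiset.of_mem_filter hk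
  have hone : 1 ∉ P.parts.filter (2 ≤ ·) := fun h => absurd (htwo 1 h) (by norm_num)
  have hsum : (P.parts.filter (2 ≤ ·)).sum ≤ Fintype.card α := by
    have := congrArg Multiset.sum (parts_eq_filter_add_replicate P)
    rw [Multiset.sum_add, P.parts_sum] at this
    omega
  have hcard := Equiv.Perm.card_of_cycleType_mul_eq α (P.parts.filter (2 ≤ ·))
  rw [if_pos ⟨hsum, htwo⟩] at hcard
  rw [← hcard, parts_eq_filter_add_replicate P, centralizerOrder_add_replicate_one hone,
    centralizerOrder, ← parts_eq_filter_add_replicate P]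
  simp only [partition_eq_iff]
  ring

lemma lcm_parts_partition (σ : Equiv.Perm α) : σ.partition.parts.lcm = orderOf σ := by
  have hones (j : ℕ) : (Multiset.replicate j 1).lcm = 1 :=
    Nat.dvd_one.1 (Multiset.lcm_dvd.2 fun _ hb => (Multiset.eq_of_mem_replicate hb).dvd)
  rw [Equiv.Perm.parts_partition, Multiset.lcm_add, Equiv.Perm.lcm_cycleType, hones]
  simp

/-- Both sides follow Cauchy's formula: a partition `μ` has probability `1 / z_μ`. -/
lemma average_partition_eq_fellerMean (G : Multiset ℕ → ℝ) :
    (∑ σ : Equiv.Perm α, G σ.partition.parts) / (Fintype.card α).factorial =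
      fellerMean (Fintype.card α) fun A => G (gaps (Fintype.card α) A) := by
  have hgaps : ∀ A ⊆ range (Fintype.card α), G (gaps (Fintype.card α) A) =
      ∑ P : (Fintype.card α).Partition,
        G P.parts * if gaps (Fintype.card α) A = P.parts then 1 else 0 := by
    intro A hA
    let P : (Fintype.card α).Partition :=
      ⟨gaps _ A, fun hk => (mem_gaps_bounds hA hk).1, sum_gaps hA⟩
    rw [sum_eq_single P (fun Q _ hQ => ?_) (by simp)]
    · simp [P]
    · rw [if_neg fun h => hQ (Nat.Partition.ext h.symm), mul_zero]
  rw [markMean_congr hgaps, markMean_sum, ← sum_fiberwise univ Equiv.Perm.partition, sum_div]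
  refine sum_congr rfl fun P _ => ?_
  have hcent : (centralizerOrder P.parts : ℝ) ≠ 0 := by
    exact_mod_cast (centralizerOrder_pos fun k hk => P.parts_pos hk).ne'
  have hcard : (#{σ : Equiv.Perm α | σ.partition = P} : ℝ) ≠ 0 := fun h =>
    (Fintype.card α).factorial_ne_zero <| by
      rw [← card_partition_eq_mul P, Nat.cast_eq_zero.1 h, zero_mul]
  rw [markMean_const_mul, fellerMean_gaps_eq (fun k hk => P.parts_pos hk) P.parts_sum,
    ← card_partition_eq_mul P,
    sum_congr rfl fun σ hσ => by rw [(mem_filter.1 hσ).2], sum_const, nsmul_eq_mul]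
  push_cast
  field_simp

lemma average_orderOf_eq_fellerMean (G : ℕ → ℝ) :
    (∑ σ : Equiv.Perm α, G (orderOf σ)) / (Fintype.card α).factorial =
      fellerMean (Fintype.card α) fun A => G (gaps (Fintype.card α) A).lcm := by
  simp only [← lcm_parts_partition]
  exact average_partition_eq_fellerMean fun μ => G μ.lcm

end Permutations

/-! ### Parts of the logarithm carried by prime powers -/

open ArithmeticFunction (vonMangoldt_nonneg)

open scoped ArithmeticFunction.vonMangoldt

/-- The part of `log d = ∑_{q ∣ d} Λ(q)` coming from the prime powers `q ∈ S`. Summing over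
`q ∈ S` rather than over the divisors of `d` gives `0` all of `S` as divisors, so that
monotonicity and subadditivity hold without exceptions. -/
noncomputable def logPart (S : Finset ℕ) (d : ℕ) : ℝ := ∑ q ∈ S with q ∣ d, Λ q

lemma logPart_nonneg (S : Finset ℕ) (d : ℕ) : 0 ≤ logPart S d :=
  sum_nonneg fun _ _ => vonMangoldt_nonneg

lemma logPart_le_of_dvd (S : Finset ℕ) {a b : ℕ} (hab : a ∣ b) : logPart S a ≤ logPart S b :=
  sum_le_sum_of_subset_of_nonneg (monotone_filter_right _ fun _ _ hq => hq.trans hab)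
    fun _ _ _ => vonMangoldt_nonneg

lemma logPart_one (S : Finset ℕ) : logPart S 1 = 0 :=
  sum_eq_zero fun q hq => by
    rw [Nat.dvd_one.1 (mem_filter.1 hq).2, ArithmeticFunction.vonMangoldt_apply_one]

lemma log_sub_logPart (S : Finset ℕ) {d N : ℕ} (hd : 0 < d) (hdN : d ≤ N) :
    Real.log d - logPart S d = logPart (Ioc 0 N \ S) d := by
  have hdiv : d.divisors = {q ∈ Ioc 0 N | q ∣ d} := by
    ext q
    simp only [Nat.mem_divisors, mem_filter, mem_Ioc]
    exact ⟨fun h => ⟨⟨Nat.pos_of_dvd_of_pos h.1 hd, (Nat.le_of_dvd hd h.1).trans hdN⟩, h.1⟩,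
      fun h => ⟨h.2, hd.ne'⟩⟩
  have hS : logPart S d = logPart (Ioc 0 N ∩ S) d :=
    (sum_subset (filter_subset_filter _ inter_subset_right) fun q hq hq' => by
      obtain ⟨hqS, hqd⟩ := mem_filter.1 hq
      have hqN : q ∈ d.divisors := Nat.mem_divisors.2 ⟨hqd, hd.ne'⟩
      rw [hdiv] at hqN
      exact absurd (mem_filter.2 ⟨mem_inter.2 ⟨(mem_filter.1 hqN).1, hqS⟩, hqd⟩) hq').symm
  rw [hS, ← ArithmeticFunction.vonMangoldt_sum, hdiv, sub_eq_iff_eq_add]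
  simp only [logPart, sum_filter]
  rw [add_comm, sum_inter_add_sum_sdiff]

lemma logPart_le_log (S : Finset ℕ) {d : ℕ} (hd : 0 < d) : logPart S d ≤ Real.log d :=
  sub_nonneg.1 (log_sub_logPart S hd le_rfl ▸ logPart_nonneg _ d)

lemma logPart_mul_le (S : Finset ℕ) {q e : ℕ} (hq : 0 < q) (he : 0 < e) :
    logPart S (q * e) ≤ logPart S e + Real.log q := by
  have hrest : Real.log e - logPart S e ≤ Real.log ((q * e : ℕ) : ℝ) - logPart S (q * e) := by
    rw [log_sub_logPart S he (Nat.le_mul_of_pos_left e hq),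
      log_sub_logPart S (Nat.mul_pos hq he) le_rfl]
    exact logPart_le_of_dvd _ (Dvd.intro_left q rfl)
  rw [Nat.cast_mul, Real.log_mul (by positivity) (by positivity)] at hrest
  linarith

lemma dvd_or_dvd_of_isPrimePow_dvd_lcm {q a b : ℕ} (hq : IsPrimePow q) (h : q ∣ a.lcm b) :
    q ∣ a ∨ q ∣ b := by
  rcases eq_or_ne a 0 with rfl | ha
  · exact .inl (dvd_zero q)
  rcases eq_or_ne b 0 with rfl | hb
  · exact .inr (dvd_zero q)
  obtain ⟨p, k, hp, -, rfl⟩ := (isPrimePow_nat_iff _).1 hq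
  rw [hp.pow_dvd_iff_le_factorization (Nat.lcm_ne_zero ha hb), Nat.factorization_lcm ha hb] at h
  rw [hp.pow_dvd_iff_le_factorization ha, hp.pow_dvd_iff_le_factorization hb]
  simpa using h

lemma logPart_lcm_le (S : Finset ℕ) (a b : ℕ) :
    logPart S (a.lcm b) ≤ logPart S a + logPart S b := by
  simp only [logPart, sum_filter]
  rw [← sum_add_distrib]
  refine sum_le_sum fun q _ => ?_
  have hΛ : 0 ≤ Λ q := vonMangoldt_nonneg
  by_cases hq : IsPrimePow q
  · have := dvd_or_dvd_of_isPrimePow_dvd_lcm (a := a) (b := b) hq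
    split_ifs <;> first | linarith | tauto
  · simp [ArithmeticFunction.vonMangoldt_eq_zero_iff.2 hq]

lemma logPart_lcm_le_sum (S : Finset ℕ) (μ : Multiset ℕ) :
    logPart S μ.lcm ≤ (μ.map (logPart S)).sum := by
  induction μ using Multiset.induction with
  | empty => simp [logPart_one]
  | cons d μ ih =>
    rw [Multiset.lcm_cons, Multiset.map_cons, Multiset.sum_cons]
    exact (logPart_lcm_le S _ _).trans (by gcongr)

lemma sum_Ioc_filter_dvd {M : Type*} [AddCommMonoid M] {q : ℕ} (hq : 0 < q) (x : ℕ) (F : ℕ → M) :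
    ∑ d ∈ Ioc 0 x with q ∣ d, F d = ∑ e ∈ Ioc 0 (x / q), F (q * e) := by
  refine (sum_nbij (q * ·) (fun e he => ?_) (fun a _ b _ hab => ?_) (fun d hd => ?_)
    fun _ _ => rfl).symm
  · obtain ⟨he0, hex⟩ := mem_Ioc.1 he
    exact mem_filter.2 ⟨mem_Ioc.2 ⟨Nat.mul_pos hq he0,
      (Nat.mul_le_mul_left q hex).trans (Nat.mul_div_le x q)⟩, Dvd.intro e rfl⟩
  · exact Nat.eq_of_mul_eq_mul_left hq hab
  · obtain ⟨hdx, e, rfl⟩ := mem_filter.1 hd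
    obtain ⟨hd0, hdx⟩ := mem_Ioc.1 hdx
    exact ⟨e, mem_coe.2 (mem_Ioc.2 ⟨Nat.pos_of_mul_pos_left hd0,
      (Nat.le_div_iff_mul_le hq).2 (mul_comm q e ▸ hdx)⟩), rfl⟩

lemma sum_mul_logPart (S : Finset ℕ) (x : ℕ) (F : ℕ → ℝ) :
    ∑ d ∈ Ioc 0 x, F d * logPart S d = ∑ q ∈ S, Λ q * ∑ e ∈ Ioc 0 (x / q), F (q * e) := by
  have hexpand (d : ℕ) : F d * logPart S d = ∑ q ∈ S, Λ q * if q ∣ d then F d else 0 := by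
    rw [logPart, sum_filter, mul_sum]
    exact sum_congr rfl fun q _ => by split_ifs <;> ring
  rw [sum_congr rfl fun d _ => hexpand d, sum_comm]
  refine sum_congr rfl fun q _ => ?_
  rcases Nat.eq_zero_or_pos q with rfl | hq
  · simp
  · rw [← mul_sum, ← sum_filter, sum_Ioc_filter_dvd hq]

/-! ### Mean values of the small prime power part -/

/-- A weak form of Mertens' first theorem, from `∑_{d ≤ Q} log d = ∑_{q ≤ Q} Λ(q) ⌊Q / q⌋`. -/
lemma sum_vonMangoldt_div_le (Q : ℕ) : ∑ q ∈ Ioc 0 Q, Λ q / q ≤ 2 * Real.log Q := by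
  rcases Nat.eq_zero_or_pos Q with rfl | hQ
  · simp
  have hQ' : (0 : ℝ) < Q := mod_cast hQ
  have hupper : ∑ d ∈ Ioc 0 Q, 1 * logPart (Ioc 0 Q) d ≤ Q * Real.log Q := by
    calc ∑ d ∈ Ioc 0 Q, 1 * logPart (Ioc 0 Q) d ≤ ∑ _d ∈ Ioc 0 Q, Real.log Q := by
          refine sum_le_sum fun d hd => ?_
          obtain ⟨hd0, hdQ⟩ := mem_Ioc.1 hd
          rw [one_mul]
          exact (logPart_le_log _ hd0).trans
            (Real.log_le_log (mod_cast hd0) (mod_cast hdQ))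
      _ = Q * Real.log Q := by simp
  have hfloor : ∀ q ∈ Ioc 0 Q, (Q : ℝ) / (2 * q) ≤ ((Q / q : ℕ) : ℝ) := by
    intro q hq
    obtain ⟨hq0, hqQ⟩ := mem_Ioc.1 hq
    have hlt : Q < q * (Q / q + 1) := Nat.lt_mul_div_succ Q hq0
    have hone : 1 ≤ Q / q := (Nat.one_le_div_iff hq0).2 hqQ
    have hle : Q ≤ Q / q * (2 * q) := by nlinarith
    rw [div_le_iff₀ (by positivity)]
    exact_mod_cast hle
  have hlower : Q / 2 * ∑ q ∈ Ioc 0 Q, Λ q / q ≤ ∑ d ∈ Ioc 0 Q, 1 * logPart (Ioc 0 Q) d := by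
    rw [sum_mul_logPart _ Q fun _ => 1, mul_sum]
    refine sum_le_sum fun q hq => ?_
    calc (Q : ℝ) / 2 * (Λ q / q) = Λ q * (Q / (2 * q)) := by ring
      _ ≤ Λ q * ((Q / q : ℕ) : ℝ) := mul_le_mul_of_nonneg_left (hfloor q hq) vonMangoldt_nonneg
      _ = Λ q * ∑ _e ∈ Ioc 0 (Q / q), (1 : ℝ) := by simp
  refine le_of_mul_le_mul_left ?_ (half_pos hQ')
  linarith

lemma sum_logPart_le (Q x : ℕ) :
    ∑ d ∈ Ioc 0 x, logPart (Ioc 0 Q) d ≤ x * (2 * Real.log Q) := by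
  have hswap := sum_mul_logPart (Ioc 0 Q) x fun _ => 1
  simp only [one_mul, sum_const, Nat.card_Ioc, tsub_zero, nsmul_eq_mul, mul_one] at hswap
  calc ∑ d ∈ Ioc 0 x, logPart (Ioc 0 Q) d = ∑ q ∈ Ioc 0 Q, Λ q * ((x / q : ℕ) : ℝ) := hswap
    _ ≤ ∑ q ∈ Ioc 0 Q, Λ q * (x / q) :=
        sum_le_sum fun q _ => mul_le_mul_of_nonneg_left Nat.cast_div_le vonMangoldt_nonneg
    _ = x * ∑ q ∈ Ioc 0 Q, Λ q / q := by
        rw [mul_sum]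
        exact sum_congr rfl fun q _ => by ring
    _ ≤ x * (2 * Real.log Q) := by gcongr; exact sum_vonMangoldt_div_le Q

lemma sum_logPart_mul_le {Q q : ℕ} (hq : q ∈ Ioc 0 Q) (x : ℕ) :
    ∑ e ∈ Ioc 0 x, logPart (Ioc 0 Q) (q * e) ≤ x * (3 * Real.log Q) := by
  obtain ⟨hq0, hqQ⟩ := mem_Ioc.1 hq
  have hlog : Real.log q ≤ Real.log Q := Real.log_le_log (mod_cast hq0) (mod_cast hqQ)
  calc ∑ e ∈ Ioc 0 x, logPart (Ioc 0 Q) (q * e)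
      ≤ ∑ e ∈ Ioc 0 x, (logPart (Ioc 0 Q) e + Real.log Q) :=
        sum_le_sum fun e he => (logPart_mul_le _ hq0 (mem_Ioc.1 he).1).trans (by gcongr)
    _ = ∑ e ∈ Ioc 0 x, logPart (Ioc 0 Q) e + x * Real.log Q := by simp [sum_add_distrib]
    _ ≤ x * (3 * Real.log Q) := by linarith [sum_logPart_le Q x]

lemma sum_logPart_sq_le (Q x : ℕ) :
    ∑ d ∈ Ioc 0 x, logPart (Ioc 0 Q) d ^ 2 ≤ 6 * Real.log Q ^ 2 * x := by
  calc ∑ d ∈ Ioc 0 x, logPart (Ioc 0 Q) d ^ 2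
      = ∑ q ∈ Ioc 0 Q, Λ q * ∑ e ∈ Ioc 0 (x / q), logPart (Ioc 0 Q) (q * e) := by
        simp only [sq, sum_mul_logPart]
    _ ≤ ∑ q ∈ Ioc 0 Q, Λ q * (x / q * (3 * Real.log Q)) := by
        refine sum_le_sum fun q hq => mul_le_mul_of_nonneg_left ?_ vonMangoldt_nonneg
        exact (sum_logPart_mul_le hq _).trans (by gcongr; exact Nat.cast_div_le)
    _ = 3 * Real.log Q * x * ∑ q ∈ Ioc 0 Q, Λ q / q := by
        rw [mul_sum]
        exact sum_congr rfl fun q _ => by ring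
    _ ≤ 3 * Real.log Q * x * (2 * Real.log Q) := by gcongr; exact sum_vonMangoldt_div_le Q
    _ = 6 * Real.log Q ^ 2 * x := by ring

lemma sum_one_div_sqrt_le (k : ℕ) : ∑ d ∈ Ioc 0 k, 1 / √(d : ℝ) ≤ 2 * √(k : ℝ) := by
  induction k with
  | zero => simp
  | succ k ih =>
    rw [sum_Ioc_succ_top k.zero_le]
    have hpos : 0 < √((k + 1 : ℕ) : ℝ) := Real.sqrt_pos.2 (by positivity)
    have hsq : √((k + 1 : ℕ) : ℝ) ^ 2 = √(k : ℝ) ^ 2 + 1 := by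
      rw [Real.sq_sqrt (by positivity), Real.sq_sqrt (by positivity)]
      push_cast
      rfl
    have hstep : 1 / √((k + 1 : ℕ) : ℝ) ≤ 2 * (√((k + 1 : ℕ) : ℝ) - √(k : ℝ)) := by
      rw [div_le_iff₀ hpos]
      nlinarith [sq_nonneg (√((k + 1 : ℕ) : ℝ) - √(k : ℝ))]
    linarith

lemma log_sq_le_sqrt {y : ℝ} (hy : 1 ≤ y) : Real.log y ^ 2 ≤ 16 * √y := by
  have hy0 : 0 ≤ y := by linarith
  have hlog : Real.log y ≤ y ^ (1 / 4 : ℝ) / (1 / 4) :=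
    Real.log_le_rpow_div hy0 (by norm_num)
  calc Real.log y ^ 2 ≤ (y ^ (1 / 4 : ℝ) / (1 / 4)) ^ 2 :=
        pow_le_pow_left₀ (Real.log_nonneg hy) hlog 2
    _ = 16 * (y ^ (1 / 4 : ℝ)) ^ 2 := by ring
    _ = 16 * √y := by
        rw [← Real.rpow_natCast, ← Real.rpow_mul hy0, Real.sqrt_eq_rpow]
        norm_num

lemma sum_log_div_sq_le (m : ℕ) : ∑ d ∈ Ioc 0 m, Real.log ((m : ℝ) / d) ^ 2 ≤ 32 * m := by
  calc ∑ d ∈ Ioc 0 m, Real.log ((m : ℝ) / d) ^ 2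
      ≤ ∑ d ∈ Ioc 0 m, 16 * √(m : ℝ) * (1 / √(d : ℝ)) := by
        refine sum_le_sum fun d hd => ?_
        obtain ⟨hd0, hdm⟩ := mem_Ioc.1 hd
        have hd0' : (0 : ℝ) < d := mod_cast hd0
        refine (log_sq_le_sqrt ((one_le_div hd0').2 (mod_cast hdm))).trans_eq ?_
        rw [Real.sqrt_div (by positivity)]
        ring
    _ ≤ 16 * √(m : ℝ) * (2 * √(m : ℝ)) := by
        rw [← mul_sum]
        gcongr
        exact sum_one_div_sqrt_le m
    _ = 32 * √(m : ℝ) ^ 2 := by ring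
    _ = 32 * m := by rw [Real.sq_sqrt (by positivity)]

/-! ### The variance of the discrepancy between gaps and marks -/

/-- The sum of the logarithms of the members of `μ`, in which the prime powers in `S` are only
counted with the multiplicity they have in the least common multiple of `μ`. -/
noncomputable def truncatedLog (S : Finset ℕ) (μ : Multiset ℕ) : ℝ :=
  (μ.map fun d : ℕ => Real.log d - logPart S d).sum + logPart S μ.lcm

/-- The sum of the logarithms of the marks. The mark `0` contributes `Real.log 0 = 0`. -/
noncomputable def markLog (A : Finset ℕ) : ℝ := ∑ m ∈ A, Real.log m

/-- The difference between the truncated sum of the logarithms of the gaps and the sum of the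
logarithms of the marks. -/
noncomputable def discrepancy (S : Finset ℕ) (n : ℕ) (A : Finset ℕ) : ℝ :=
  truncatedLog S (gaps n A) - markLog A

/-- The squared effect on the discrepancy of the gap of length `d` below the position `m`. -/
noncomputable def gapCost (S : Finset ℕ) (m d : ℕ) : ℝ :=
  Real.log ((m : ℝ) / d) ^ 2 + logPart S d ^ 2

lemma gapCost_nonneg (S : Finset ℕ) (m d : ℕ) : 0 ≤ gapCost S m d := by
  unfold gapCost
  positivity

lemma truncatedLog_cons_bounds (S : Finset ℕ) (d : ℕ) (μ : Multiset ℕ) :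
    Real.log d - logPart S d + truncatedLog S μ ≤ truncatedLog S (d ::ₘ μ) ∧
      truncatedLog S (d ::ₘ μ) ≤ Real.log d + truncatedLog S μ := by
  have hle := logPart_lcm_le S d μ.lcm
  have hge := logPart_le_of_dvd S (Nat.dvd_lcm_right d μ.lcm)
  simp only [truncatedLog, Multiset.map_cons, Multiset.sum_cons, Multiset.lcm_cons,
    lcm_eq_nat_lcm]
  constructor <;> linarith

lemma abs_discrepancy_sub_le (S : Finset ℕ) {n m : ℕ} {A : Finset ℕ} (hA : A ⊆ range n)
    (hm : 0 < m) (hmn : m < n) {a b : ℕ} (ha : prevMark A m = a) (hb : nextMark n A m = b) :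
    |discrepancy S n (insert m A) - discrepancy S n (A.erase m)| ≤
      Real.log ((m : ℝ) / (m - a : ℕ)) + Real.log ((b : ℝ) / (b - m : ℕ)) + logPart S (m - a) +
        logPart S (b - m) + logPart S (b - a) := by
  have hmA : m ∉ A.erase m := notMem_erase m A
  have hins : insert m (A.erase m) = insert m A := by grind
  obtain ⟨rest, hout, hin⟩ :=
    exists_gaps_insert_eq_cons_cons ((erase_subset m A).trans hA) hm hmn hmA
  rw [prevMark_erase, nextMark_erase, ha, hb] at hout hin
  rw [hins] at hin
  have ham : a < m := ha ▸ prevMark_lt A hm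
  have hmb : m < b := hb ▸ lt_nextMark A hmn
  have hmarks : markLog (insert m A) = Real.log m + markLog (A.erase m) := by
    rw [← hins, markLog, sum_insert hmA, markLog]
  have hb' : (0 : ℝ) < b := mod_cast hm.trans hmb
  have hma' : (0 : ℝ) < (m - a : ℕ) := mod_cast (by omega : 0 < m - a)
  have hbm' : (0 : ℝ) < (b - m : ℕ) := mod_cast (by omega : 0 < b - m)
  have hba' : (0 : ℝ) < (b - a : ℕ) := mod_cast (by omega : 0 < b - a)
  have hlog_ma : Real.log (m - a : ℕ) ≤ Real.log m :=
    Real.log_le_log hma' (mod_cast Nat.sub_le m a)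
  have hlog_bm : Real.log (b - m : ℕ) ≤ Real.log (b - a : ℕ) :=
    Real.log_le_log hbm' (mod_cast (by omega))
  have hlog_ba : Real.log (b - a : ℕ) ≤ Real.log b :=
    Real.log_le_log hba' (mod_cast Nat.sub_le b a)
  obtain ⟨hlow, hupp⟩ := truncatedLog_cons_bounds S (m - a) ((b - m) ::ₘ rest)
  obtain ⟨hlow', hupp'⟩ := truncatedLog_cons_bounds S (b - m) rest
  obtain ⟨hlow_ba, hupp_ba⟩ := truncatedLog_cons_bounds S (b - a) rest
  rw [discrepancy, discrepancy, hin, hout, hmarks, Real.log_div (by positivity) hma'.ne',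
    Real.log_div hb'.ne' hbm'.ne', abs_le]
  constructor <;> linarith

lemma discrepancy_sub_sq_le (S : Finset ℕ) {n m : ℕ} {A : Finset ℕ} (hA : A ⊆ range n)
    (hm : 0 < m) (hmn : m < n) :
    (discrepancy S n (insert m A) - discrepancy S n (A.erase m)) ^ 2 ≤
      5 * (gapCost S m (m - prevMark A m) + gapCost S (nextMark n A m) (nextMark n A m - m) +
        logPart S (nextMark n A m - prevMark A m) ^ 2) := by
  refine (sq_le_sq' (abs_le.1 (abs_discrepancy_sub_le S hA hm hmn rfl rfl)).1
    (abs_le.1 (abs_discrepancy_sub_le S hA hm hmn rfl rfl)).2).trans ?_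
  have hfive (u v x y z : ℝ) :
      (u + v + x + y + z) ^ 2 ≤ 5 * (u ^ 2 + x ^ 2 + (v ^ 2 + y ^ 2) + z ^ 2) := by
    have := sq_sum_le_card_mul_sum_sq (s := univ) (f := ![u, v, x, y, z])
    simp only [Fin.sum_univ_five, card_univ, Fintype.card_fin] at this
    exact this.trans_eq (by simp; ring)
  exact hfive ..

lemma sum_gapCost_le {S : Finset ℕ} {K : ℝ}
    (hK : ∀ x : ℕ, ∑ d ∈ Ioc 0 x, logPart S d ^ 2 ≤ K * x) (m : ℕ) :
    ∑ a ∈ range m, gapCost S m (m - a) ≤ (32 + K) * m := by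
  rw [sum_range_sub_eq_sum_Ioc m (gapCost S m)]
  simp only [gapCost, sum_add_distrib]
  linarith [sum_log_div_sq_le m, hK m]

/-- Summation by parts: a sequence with bounded averages, summed against `1 / (b (b + 1))`. -/
lemma sum_Ioo_one_div_mul_le {K : ℝ} {g : ℕ → ℝ} {m n : ℕ} (hmn : m < n)
    (hg : ∀ N : ℕ, ∑ b ∈ Ioo m N, g b ≤ K * N) (hK : 0 ≤ K) :
    ∑ b ∈ Ioo m n, 1 / ((b : ℝ) * (b + 1)) * g b ≤ 2 * K / ((m : ℝ) + 1) := by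
  have hparts : ∑ b ∈ Ioo m n, 1 / ((b : ℝ) * (b + 1)) * g b ≤
      (∑ b ∈ Ioo m n, g b) / ((n : ℝ) * (n + 1)) + 2 * K * (1 / ((m : ℝ) + 1) - 1 / n) := by
    induction n, Nat.succ_le_of_lt hmn using Nat.le_induction with
    | base => simp [show Ioo m (m + 1) = ∅ by ext x; simp]
    | succ N hN ih =>
      have hmN : m < N := hN
      have hN0 : (0 : ℝ) < N := mod_cast m.zero_le.trans_lt hmN
      have hgN := hg (N + 1)
      rw [Ioo_add_one_right hmN, sum_insert right_notMem_Ioo] at hgN ⊢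
      rw [sum_insert right_notMem_Ioo]
      push_cast at hgN ⊢
      set G := ∑ b ∈ Ioo m N, g b
      have hstep : (g N + G) / ((N : ℝ) * (N + 1)) - (g N + G) / ((N + 1) * (N + 1 + 1)) ≤
          2 * K * (1 / N - 1 / (N + 1)) := by
        calc (g N + G) / ((N : ℝ) * (N + 1)) - (g N + G) / ((N + 1) * (N + 1 + 1))
            = (g N + G) * (2 / (N * (N + 1) * (N + 2))) := by field_simp; ring
          _ ≤ K * (N + 1) * (2 / (N * (N + 1) * (N + 2))) := by gcongr
          _ = 2 * K / (N * (N + 2)) := by field_simp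
          _ ≤ 2 * K / (N * (N + 1)) := by gcongr; norm_num
          _ = 2 * K * (1 / N - 1 / (N + 1)) := by field_simp; ring
      have hsplit : 1 / ((N : ℝ) * (N + 1)) * g N + G / (N * (N + 1)) =
          (g N + G) / (N * (N + 1)) := by ring
      linarith [ih hmN]
  have hn : (0 : ℝ) < n := mod_cast m.zero_le.trans_lt hmn
  have hlast : (∑ b ∈ Ioo m n, g b) / ((n : ℝ) * (n + 1)) ≤ 2 * K * (1 / n) := by
    calc (∑ b ∈ Ioo m n, g b) / ((n : ℝ) * (n + 1)) ≤ K * n / (n * (n + 1)) := by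
          gcongr
          exact hg n
      _ = K * (1 / (n + 1)) := by field_simp
      _ ≤ K * (1 / n) := by gcongr; linarith
      _ ≤ 2 * K * (1 / n) := by gcongr; linarith
  calc _ ≤ _ := hparts
    _ ≤ 2 * K * (1 / n) + 2 * K * (1 / ((m : ℝ) + 1) - 1 / n) := by gcongr
    _ = 2 * K / ((m : ℝ) + 1) := by ring

lemma sum_Ioo_sub_le_sum_Ioc {g : ℕ → ℝ} (hg : ∀ d, 0 ≤ g d) {a m : ℕ} (ham : a < m) (N : ℕ) :
    ∑ b ∈ Ioo m N, g (b - a) ≤ ∑ d ∈ Ioc 0 N, g d := by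
  have hinj : Set.InjOn (· - a) (Ioo m N : Set ℕ) := fun x hx y hy hxy => by
    simp only [coe_Ioo, Set.mem_Ioo] at hx hy hxy
    omega
  rw [← sum_image hinj]
  refine sum_le_sum_of_subset_of_nonneg (image_subset_iff.2 fun b hb => ?_) fun _ _ _ => hg _
  rw [mem_Ioo] at hb
  rw [mem_Ioc]
  omega

lemma tailMean_nonneg (m n : ℕ) {ψ : ℕ → ℝ} (hψ : ∀ b, 0 ≤ ψ b) : 0 ≤ tailMean m n ψ :=
  add_nonneg (sum_nonneg fun b _ => mul_nonneg (by positivity) (hψ b))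
    (mul_nonneg (by positivity) (hψ n))

lemma coe_harmonic_eq_sum (n : ℕ) : (harmonic n : ℝ) = ∑ m ∈ range n, 1 / ((m : ℝ) + 1) := by
  simp [harmonic]

lemma harmonic_nonneg (n : ℕ) : 0 ≤ (harmonic n : ℝ) := by
  rw [coe_harmonic_eq_sum]
  positivity

lemma sum_tailMean (n : ℕ) (F : ℕ → ℕ → ℝ) :
    ∑ m ∈ range n, tailMean m n (F m) =
      ∑ b ∈ range n, 1 / ((b : ℝ) * (b + 1)) * ∑ m ∈ range b, F m b +
        1 / (n : ℝ) * ∑ m ∈ range n, F m n := by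
  simp only [tailMean, sum_add_distrib, mul_sum]
  congr 1
  exact sum_comm' (by simp; omega)

lemma sum_tailMean_le {C : ℝ} (hC : 0 ≤ C) {F : ℕ → ℕ → ℝ}
    (hF : ∀ b : ℕ, ∑ m ∈ range b, F m b ≤ C * b) (n : ℕ) :
    ∑ m ∈ range n, tailMean m n (F m) ≤ C * (harmonic n + 1) := by
  rw [sum_tailMean, coe_harmonic_eq_sum, mul_add, mul_sum (range n) _ C]
  refine add_le_add (sum_le_sum fun b _ => ?_) ?_
  · calc 1 / ((b : ℝ) * (b + 1)) * ∑ m ∈ range b, F m b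
        ≤ 1 / ((b : ℝ) * (b + 1)) * (C * b) := by gcongr; exact hF b
      _ = C * (1 / (b + 1)) * (b / b) := by
          rw [one_div, mul_inv]
          ring
      _ ≤ C * (1 / (b + 1)) := mul_le_of_le_one_right (by positivity) (div_self_le_one _)
  · calc 1 / (n : ℝ) * ∑ m ∈ range n, F m n ≤ 1 / (n : ℝ) * (C * n) := by gcongr; exact hF n
      _ = C * (n / n) := by ring
      _ ≤ C * 1 := by gcongr; exact div_self_le_one _

lemma nonneg_of_sum_logPart_sq_le {S : Finset ℕ} {K : ℝ}
    (hK : ∀ x : ℕ, ∑ d ∈ Ioc 0 x, logPart S d ^ 2 ≤ K * x) : 0 ≤ K := by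
  simpa using (sum_nonneg fun d _ => sq_nonneg (logPart S d)).trans (hK 1)

lemma fellerMean_gapCost_prevMark_le {S : Finset ℕ} {K : ℝ}
    (hK : ∀ x : ℕ, ∑ d ∈ Ioc 0 x, logPart S d ^ 2 ≤ K * x) {m n : ℕ} (hm : 0 < m) (hmn : m < n) :
    fellerMean n (fun A => gapCost S m (m - prevMark A m)) ≤ 32 + K := by
  have hm' : (0 : ℝ) < m := mod_cast hm
  refine le_of_mul_le_mul_left ?_ hm'
  rw [mul_fellerMean_prevMark hmn.le fun a => gapCost S m (m - a), mul_comm]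
  exact sum_gapCost_le hK m

lemma mul_fellerMean_logPart_sq_le {S : Finset ℕ} {K : ℝ}
    (hK : ∀ x : ℕ, ∑ d ∈ Ioc 0 x, logPart S d ^ 2 ≤ K * x) {m n : ℕ} (hmn : m < n) :
    m * fellerMean n (fun A => logPart S (nextMark n A m - prevMark A m) ^ 2) ≤
      3 * K * (m + 1) := by
  have hn : (0 : ℝ) < n := mod_cast m.zero_le.trans_lt hmn
  have hK0 := nonneg_of_sum_logPart_sq_le hK
  rw [mul_fellerMean_prevMark_nextMark hmn fun a b => logPart S (b - a) ^ 2, mul_comm]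
  refine mul_le_mul_of_nonneg_right ?_ (by positivity)
  have hinner : ∀ a ∈ range m, ∑ b ∈ Ioo m n, 1 / ((b : ℝ) * (b + 1)) * logPart S (b - a) ^ 2 ≤
      2 * K / ((m : ℝ) + 1) := fun a ha =>
    sum_Ioo_one_div_mul_le hmn (fun N => (sum_Ioo_sub_le_sum_Ioc
      (fun d => sq_nonneg (logPart S d)) (mem_range.1 ha) N).trans (hK N)) hK0
  have hend : ∑ a ∈ range m, logPart S (n - a) ^ 2 ≤ K * n :=
    calc ∑ a ∈ range m, logPart S (n - a) ^ 2 ≤ ∑ a ∈ range n, logPart S (n - a) ^ 2 :=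
          sum_le_sum_of_subset_of_nonneg (range_mono hmn.le) fun _ _ _ => sq_nonneg _
      _ = ∑ d ∈ Ioc 0 n, logPart S d ^ 2 := sum_range_sub_eq_sum_Ioc n fun d => logPart S d ^ 2
      _ ≤ K * n := hK n
  calc ∑ a ∈ range m, tailMean m n (fun b => logPart S (b - a) ^ 2)
      ≤ ∑ a ∈ range m, (2 * K / ((m : ℝ) + 1) + 1 / (n : ℝ) * logPart S (n - a) ^ 2) :=
        sum_le_sum fun a ha => add_le_add_left (hinner a ha) _
    _ = 2 * K * (m / ((m : ℝ) + 1)) + 1 / (n : ℝ) * ∑ a ∈ range m, logPart S (n - a) ^ 2 := by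
        rw [sum_add_distrib, ← mul_sum, sum_const, card_range, nsmul_eq_mul]
        ring
    _ ≤ 2 * K * 1 + 1 / (n : ℝ) * (K * n) := by
        gcongr
        exact (div_le_one (by positivity)).2 (by linarith)
    _ = 3 * K := by field_simp; ring

lemma fellerProb_mul_influence_discrepancy_le {S : Finset ℕ} {K : ℝ}
    (hK : ∀ x : ℕ, ∑ d ∈ Ioc 0 x, logPart S d ^ 2 ≤ K * x) {m n : ℕ} (hmn : m < n) :
    fellerProb m * (1 - fellerProb m) * influence fellerProb n (discrepancy S n) m ≤
      5 * ((32 + K) * (1 / ((m : ℝ) + 1)) + tailMean m n (fun b => gapCost S b (b - m)) +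
        3 * K * (1 / ((m : ℝ) + 1))) := by
  have hK0 := nonneg_of_sum_logPart_sq_le hK
  have htail := tailMean_nonneg m n fun b => gapCost_nonneg S b (b - m)
  rcases Nat.eq_zero_or_pos m with rfl | hm
  · simp only [one_sub_fellerProb, CharP.cast_eq_zero, zero_div, mul_zero, zero_mul]
    positivity
  have hm' : (0 : ℝ) < m := mod_cast hm
  set I := influence fellerProb n (discrepancy S n) m
  have hI : I ≤ 5 * (fellerMean n (fun A => gapCost S m (m - prevMark A m)) +
      fellerMean n (fun A => gapCost S (nextMark n A m) (nextMark n A m - m)) +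
      fellerMean n (fun A => logPart S (nextMark n A m - prevMark A m) ^ 2)) := by
    simp only [← markMean_add, ← markMean_const_mul]
    exact markMean_mono fun A hA => discrepancy_sub_sq_le S hA hm hmn
  have hprev := fellerMean_gapCost_prevMark_le hK hm hmn
  have hnext := mul_fellerMean_prevMark_nextMark hmn fun _ b => gapCost S b (b - m)
  have hgap := mul_fellerMean_logPart_sq_le hK hmn
  rw [sum_const, card_range, nsmul_eq_mul] at hnext
  have hmI : m * I ≤ 5 * (m * (32 + K) +
      (m + 1) * (m * tailMean m n (fun b => gapCost S b (b - m))) + 3 * K * (m + 1)) := by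
    nlinarith [mul_le_mul_of_nonneg_left hI hm'.le, mul_le_mul_of_nonneg_left hprev hm'.le]
  have hratio : (m : ℝ) / (m + 1) ≤ 1 := (div_le_one (by positivity)).2 (by linarith)
  calc fellerProb m * (1 - fellerProb m) * I = m * I / ((m : ℝ) + 1) ^ 2 := by
        rw [one_sub_fellerProb, coe_fellerProb]
        field_simp
    _ ≤ 5 * (m * (32 + K) + (m + 1) * (m * tailMean m n (fun b => gapCost S b (b - m))) +
          3 * K * (m + 1)) / ((m : ℝ) + 1) ^ 2 := by gcongr
    _ = 5 * ((32 + K) * (1 / ((m : ℝ) + 1)) * (m / (m + 1)) +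
          tailMean m n (fun b => gapCost S b (b - m)) * (m / (m + 1)) +
          3 * K * (1 / ((m : ℝ) + 1))) := by field_simp
    _ ≤ _ := by
        have hfirst := mul_le_of_le_one_right
          (by positivity : 0 ≤ (32 + K) * (1 / ((m : ℝ) + 1))) hratio
        linarith [mul_le_of_le_one_right htail hratio]

lemma markVar_discrepancy_le {S : Finset ℕ} {K : ℝ}
    (hK : ∀ x : ℕ, ∑ d ∈ Ioc 0 x, logPart S d ^ 2 ≤ K * x) (n : ℕ) :
    markVar fellerProb n (discrepancy S n) ≤ 25 * (32 + K) * (harmonic n + 1) := by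
  have hK0 := nonneg_of_sum_logPart_sq_le hK
  have htails := sum_tailMean_le (by positivity) (sum_gapCost_le hK) n
  have hH := harmonic_nonneg n
  calc markVar fellerProb n (discrepancy S n)
      ≤ ∑ m ∈ range n, 5 * ((32 + K) * (1 / ((m : ℝ) + 1)) +
          tailMean m n (fun b => gapCost S b (b - m)) + 3 * K * (1 / ((m : ℝ) + 1))) :=
        (markVar_le_sum_influence fellerProb n _).trans <| sum_le_sum fun m hm =>
          fellerProb_mul_influence_discrepancy_le hK (mem_range.1 hm)
    _ = 5 * ((32 + K) * harmonic n +
          ∑ m ∈ range n, tailMean m n (fun b => gapCost S b (b - m)) + 3 * K * harmonic n) := by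
        simp only [← mul_sum, sum_add_distrib, coe_harmonic_eq_sum]
    _ ≤ 25 * (32 + K) * (harmonic n + 1) := by nlinarith [mul_nonneg hK0 hH]

/-! ### The excess of the truncated logarithm over the logarithm of the order -/

/-- The error made when the logarithm of the least common multiple of `μ` is replaced by
`truncatedLog S μ`. It is caused by the prime powers outside `S` that divide two members of `μ`. -/
noncomputable def excess (S : Finset ℕ) (μ : Multiset ℕ) : ℝ :=
  truncatedLog S μ - Real.log (μ.lcm : ℕ)

lemma excess_eq (S : Finset ℕ) {μ : Multiset ℕ} {N : ℕ} (hμ : ∀ d ∈ μ, 0 < d)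
    (hN : μ.lcm ≤ N) :
    excess S μ = (μ.map (logPart (Ioc 0 N \ S))).sum - logPart (Ioc 0 N \ S) μ.lcm := by
  have hlcm : 0 < μ.lcm :=
    Nat.pos_of_ne_zero fun h => (hμ 0 ((Multiset.lcm_eq_zero_iff μ).1 h)).false
  have hmap : (μ.map fun d : ℕ => Real.log d - logPart S d) =
      μ.map (logPart (Ioc 0 N \ S)) :=
    Multiset.map_congr rfl fun d hd => log_sub_logPart S (hμ d hd)
      ((Nat.le_of_dvd hlcm (Multiset.dvd_lcm hd)).trans hN)
  rw [excess, truncatedLog, hmap, ← log_sub_logPart S hlcm hN]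
  ring

lemma excess_nonneg (S : Finset ℕ) {μ : Multiset ℕ} (hμ : ∀ d ∈ μ, 0 < d) :
    0 ≤ excess S μ := by
  rw [excess_eq S hμ le_rfl, sub_nonneg]
  exact logPart_lcm_le_sum _ μ

lemma sum_map_logPart (S : Finset ℕ) (μ : Multiset ℕ) :
    (μ.map (logPart S)).sum = ∑ q ∈ S, Λ q * μ.countP (q ∣ ·) := by
  induction μ using Multiset.induction with
  | empty => simp
  | cons d μ ih =>
    rw [Multiset.map_cons, Multiset.sum_cons, ih, logPart, sum_filter, ← sum_add_distrib]
    refine sum_congr rfl fun q _ => ?_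
    rw [Multiset.countP_cons]
    split_ifs <;> push_cast <;> ring

lemma excess_le (S : Finset ℕ) {μ : Multiset ℕ} {n : ℕ} (hμ : ∀ d ∈ μ, 0 < d ∧ d ≤ n) :
    excess S μ ≤ ∑ q ∈ Ioc 0 n \ S,
      Λ q * (μ.countP (q ∣ ·) * ((μ.countP (q ∣ ·) : ℝ) - 1)) := by
  have hsub : Ioc 0 n \ S ⊆ Ioc 0 (max μ.lcm n) \ S :=
    sdiff_subset_sdiff (Ioc_subset_Ioc_right (le_max_right _ _)) subset_rfl
  rw [excess_eq S (fun d hd => (hμ d hd).1) (le_max_left _ n), sum_map_logPart,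
    logPart, sum_filter, ← sum_sub_distrib]
  refine (sum_le_sum fun q _ => ?_).trans_eq (sum_subset hsub fun q hq hqn => ?_).symm
  · rw [← mul_boole, ← mul_sub]
    refine mul_le_mul_of_nonneg_left ?_ vonMangoldt_nonneg
    rcases (μ.countP (q ∣ ·)).eq_zero_or_pos with h0 | hpos
    · rw [h0]
      split_ifs <;> simp
    · obtain ⟨d, hd, hqd⟩ := Multiset.countP_pos.1 hpos
      rw [if_pos (hqd.trans (Multiset.dvd_lcm hd))]
      nlinarith [sq_nonneg ((μ.countP (q ∣ ·) : ℝ) - 1)]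
  · have hcount : μ.countP (q ∣ ·) = 0 := by
      simp only [mem_sdiff, mem_Ioc] at hq hqn
      refine Multiset.countP_eq_zero.2 fun d hd hqd => hqn ⟨⟨hq.1.1, ?_⟩, hq.2⟩
      exact (Nat.le_of_dvd (hμ d hd).1 hqd).trans (hμ d hd).2
    simp [hcount]

lemma harmonic_mono {a b : ℕ} (hab : a ≤ b) : (harmonic a : ℝ) ≤ harmonic b := by
  simp only [coe_harmonic_eq_sum]
  exact sum_le_sum_of_subset_of_nonneg (range_mono hab) fun _ _ _ => by positivity

lemma sum_harmonic (n : ℕ) : ∑ a ∈ range n, (harmonic a : ℝ) = n * harmonic n - n := by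
  induction n with
  | zero => simp
  | succ n ih =>
    rw [sum_range_succ, ih, harmonic_succ]
    push_cast
    field_simp
    ring

lemma le_mul_harmonic_of_mul_le {x : ℕ → ℝ} {c : ℝ} {n : ℕ} (h0 : x 0 = 0)
    (hx : ∀ k ≤ n, k * x k ≤ k * c + ∑ a ∈ range k, x a) : x n ≤ c * harmonic n := by
  induction n using Nat.strong_induction_on with
  | _ n ih =>
    rcases n.eq_zero_or_pos with rfl | hn
    · simp [h0]
    have hsum : ∑ a ∈ range n, x a ≤ c * (n * harmonic n - n) := by
      rw [← sum_harmonic, mul_sum]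
      exact sum_le_sum fun a ha => ih a (mem_range.1 ha) fun k hk =>
        hx k (hk.trans (mem_range.1 ha).le)
    refine le_of_mul_le_mul_left ?_ (Nat.cast_pos.2 hn : (0 : ℝ) < n)
    linarith [hx n le_rfl]

lemma sum_boole_dvd_sub_le (q n : ℕ) :
    ∑ a ∈ range n, (if q ∣ n - a then (1 : ℝ) else 0) ≤ n / q := by
  rw [sum_range_sub_eq_sum_Ioc n (fun d => if q ∣ d then (1 : ℝ) else 0), sum_boole,
    Nat.Ioc_filter_dvd_card_eq_div]
  exact Nat.cast_div_le

lemma fellerMean_countP_le (q n : ℕ) :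
    fellerMean n (fun A => ((gaps n A).countP (q ∣ ·) : ℝ)) ≤ 1 / q * harmonic n := by
  refine le_mul_harmonic_of_mul_le
    (x := fun k => fellerMean k fun A => ((gaps k A).countP (q ∣ ·) : ℝ)) (by simp [gaps])
    fun k _ => ?_
  rw [mul_fellerMean_gaps k fun μ => (μ.countP (q ∣ ·) : ℝ), mul_one_div]
  have hstep (a : ℕ) :
      fellerMean a (fun A => (((k - a) ::ₘ gaps a A).countP (q ∣ ·) : ℝ)) =
        (if q ∣ k - a then (1 : ℝ) else 0) +
          fellerMean a fun A => ((gaps a A).countP (q ∣ ·) : ℝ) := by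
    rw [← markMean_const fellerProb a (if q ∣ k - a then (1 : ℝ) else 0), ← markMean_add]
    simp only [Multiset.countP_cons, Nat.cast_add, Nat.cast_ite, Nat.cast_one, Nat.cast_zero,
      add_comm]
  simp only [hstep, sum_add_distrib]
  gcongr
  exact sum_boole_dvd_sub_le q k

lemma fellerMean_countP_cons_mul_sub_one_le (q : ℕ) {d a n : ℕ} (han : a ≤ n) :
    fellerMean a (fun A => (d ::ₘ gaps a A).countP (q ∣ ·) *
        (((d ::ₘ gaps a A).countP (q ∣ ·) : ℝ) - 1)) ≤
      (if q ∣ d then (1 : ℝ) else 0) * (2 * (1 / q * harmonic n)) +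
        fellerMean a fun A => (gaps a A).countP (q ∣ ·) *
          (((gaps a A).countP (q ∣ ·) : ℝ) - 1) := by
  split_ifs with hq
  · have hH : (harmonic a : ℝ) ≤ harmonic n := harmonic_mono han
    calc _ = fellerMean a (fun A => 2 * ((gaps a A).countP (q ∣ ·) : ℝ) +
            (gaps a A).countP (q ∣ ·) * (((gaps a A).countP (q ∣ ·) : ℝ) - 1)) :=
          markMean_congr fun A _ => by
            rw [Multiset.countP_cons_of_pos _ hq]
            push_cast
            ring
      _ ≤ _ := by
          rw [markMean_add, markMean_const_mul, one_mul]
          gcongr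
          exact (fellerMean_countP_le q a).trans (by gcongr)
  · simp [Multiset.countP_cons_of_neg _ hq]

lemma fellerMean_countP_mul_sub_one_le (q n : ℕ) :
    fellerMean n (fun A => (gaps n A).countP (q ∣ ·) * (((gaps n A).countP (q ∣ ·) : ℝ) - 1)) ≤
      2 * harmonic n ^ 2 / (q : ℝ) ^ 2 := by
  suffices h : _ ≤ 2 * harmonic n / (q : ℝ) ^ 2 * harmonic n from h.trans_eq (by ring)
  refine le_mul_harmonic_of_mul_le (x := fun k => fellerMean k fun A =>
    (gaps k A).countP (q ∣ ·) * (((gaps k A).countP (q ∣ ·) : ℝ) - 1)) (by simp [gaps])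
    fun k hk => ?_
  rw [mul_fellerMean_gaps k fun μ => μ.countP (q ∣ ·) * ((μ.countP (q ∣ ·) : ℝ) - 1)]
  calc _ ≤ _ := sum_le_sum fun a ha =>
        fellerMean_countP_cons_mul_sub_one_le q ((mem_range.1 ha).le.trans hk)
    _ ≤ k / q * (2 * (1 / q * harmonic n)) + _ := by
        rw [sum_add_distrib, ← sum_mul]
        have hH := harmonic_nonneg n
        gcongr
        exact sum_boole_dvd_sub_le q k
    _ = _ := by ring

lemma sum_Ioc_inv_sq_le {Q : ℕ} (hQ : 0 < Q) (n : ℕ) :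
    ∑ q ∈ Ioc Q n, ((q : ℝ) ^ 2)⁻¹ ≤ (Q : ℝ)⁻¹ := by
  rcases le_total n Q with h | h
  · simp [Ioc_eq_empty_of_le h]
  · exact (sum_Ioc_inv_sq_le_sub hQ.ne' h).trans (sub_le_self _ (by positivity))

lemma fellerMean_excess_le {Q : ℕ} (hQ : 0 < Q) (n : ℕ) :
    fellerMean n (fun A => excess (Ioc 0 Q) (gaps n A)) ≤
      2 * Real.log n * harmonic n ^ 2 / Q := by
  have hIoc : Ioc 0 n \ Ioc 0 Q = Ioc Q n := by grind
  calc fellerMean n (fun A => excess (Ioc 0 Q) (gaps n A))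
      ≤ ∑ q ∈ Ioc Q n, Λ q * fellerMean n (fun A =>
          (gaps n A).countP (q ∣ ·) * (((gaps n A).countP (q ∣ ·) : ℝ) - 1)) := by
        simp only [← markMean_const_mul, ← markMean_sum, ← hIoc]
        exact markMean_mono fun A hA => excess_le _ fun d hd => mem_gaps_bounds hA hd
    _ ≤ ∑ q ∈ Ioc Q n, Real.log n * (2 * harmonic n ^ 2 / (q : ℝ) ^ 2) := by
        refine sum_le_sum fun q hq => ?_
        have hlog : Λ q ≤ Real.log n := ArithmeticFunction.vonMangoldt_le_log.trans
          (Real.log_le_log (mod_cast hQ.trans (mem_Ioc.1 hq).1) (mod_cast (mem_Ioc.1 hq).2))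
        exact (mul_le_mul_of_nonneg_left (fellerMean_countP_mul_sub_one_le q n)
          vonMangoldt_nonneg).trans (mul_le_mul_of_nonneg_right hlog (by positivity))
    _ = 2 * Real.log n * harmonic n ^ 2 * ∑ q ∈ Ioc Q n, ((q : ℝ) ^ 2)⁻¹ := by
        rw [mul_sum]
        exact sum_congr rfl fun q _ => by ring
    _ ≤ 2 * Real.log n * harmonic n ^ 2 * (Q : ℝ)⁻¹ := by
        have _ := Real.log_natCast_nonneg n
        gcongr
        exact sum_Ioc_inv_sq_le hQ n

/-! ### Gaussian integrals and the normal distribution function -/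

open MeasureTheory

/-- The Gaussian density without its normalizing factor; its Fourier transform is a multiple of
itself. -/
noncomputable def gaussianExp (s : ℝ) : ℝ := Real.exp (-s ^ 2 / 2)

lemma gaussianExp_pos (s : ℝ) : 0 < gaussianExp s := Real.exp_pos _

lemma gaussianExp_le_one (s : ℝ) : gaussianExp s ≤ 1 :=
  Real.exp_le_one_iff.2 (by nlinarith [sq_nonneg s])

@[fun_prop]
lemma continuous_gaussianExp : Continuous gaussianExp := by
  unfold gaussianExp
  fun_prop

@[fun_prop]
lemma measurable_gaussianExp : Measurable gaussianExp := continuous_gaussianExp.measurable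

lemma gaussianExp_neg (s : ℝ) : gaussianExp (-s) = gaussianExp s := by simp [gaussianExp]

lemma gaussianExp_eq (s : ℝ) : gaussianExp s = Real.exp (-(1 / 2) * s ^ 2) := by
  unfold gaussianExp
  ring_nf

lemma integrable_pow_mul_gaussianExp (k : ℕ) : Integrable fun s => s ^ k * gaussianExp s := by
  have hk : (-1 : ℝ) < k := neg_one_lt_zero.trans_le k.cast_nonneg
  simpa only [Real.rpow_natCast, ← gaussianExp_eq] using
    integrable_rpow_mul_exp_neg_mul_sq (b := 1 / 2) (by norm_num) hk

lemma integrable_gaussianExp : Integrable gaussianExp := by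
  simpa using integrable_pow_mul_gaussianExp 0

lemma integral_gaussianExp_mul_cos (x : ℝ) :
    ∫ s : ℝ, gaussianExp s * Real.cos (s * x) = √(2 * Real.pi) * gaussianExp x := by
  have hfourier := fourierIntegral_gaussian (b := 1 / 2) (by norm_num) (x : ℂ)
  have hintegrand (s : ℝ) :
      Complex.exp (Complex.I * x * s) * Complex.exp (-(1 / 2) * (s : ℂ) ^ 2) =
        (gaussianExp s : ℂ) * Complex.exp ((s * x : ℝ) * Complex.I) := by
    rw [gaussianExp_eq, mul_comm]
    push_cast
    ring_nf
  have hconst : ((Real.pi : ℂ) / (1 / 2)) ^ (1 / 2 : ℂ) = (√(2 * Real.pi) : ℂ) := by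
    rw [Real.sqrt_eq_rpow, Complex.ofReal_cpow (by positivity)]
    push_cast
    ring_nf
  have hvalue : Complex.exp (-(x : ℂ) ^ 2 / (4 * (1 / 2))) = (gaussianExp x : ℂ) := by
    unfold gaussianExp
    push_cast
    ring_nf
  have hint : Integrable fun s : ℝ =>
      (gaussianExp s : ℂ) * Complex.exp ((s * x : ℝ) * Complex.I) := by
    refine integrable_gaussianExp.mono' (by fun_prop) (.of_forall fun s => ?_)
    rw [norm_mul, Complex.norm_exp_ofReal_mul_I, Complex.norm_real, Real.norm_eq_abs,
      abs_of_pos (gaussianExp_pos s), mul_one]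
  simp only [hintegrand] at hfourier
  rw [hconst, hvalue] at hfourier
  have hre := congrArg Complex.re hfourier
  rw [← Complex.ofReal_mul, Complex.ofReal_re, ← RCLike.re_eq_complex_re, ← integral_re hint]
    at hre
  simpa only [RCLike.re_eq_complex_re, Complex.re_ofReal_mul, Complex.exp_ofReal_mul_I_re]
    using hre

lemma integral_gaussianExp : ∫ s : ℝ, gaussianExp s = √(2 * Real.pi) := by
  simpa [gaussianExp] using integral_gaussianExp_mul_cos 0

lemma hasDerivAt_gaussianExp (x : ℝ) : HasDerivAt gaussianExp (-x * gaussianExp x) x := by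
  have hexponent : HasDerivAt (fun x : ℝ => -x ^ 2 / 2) (-x) x :=
    ((hasDerivAt_pow 2 x).neg.div_const 2).congr_deriv (by simp; ring)
  exact hexponent.exp.congr_deriv (mul_comm _ _)

lemma integrable_mul_sin {w : ℝ → ℝ} (hw : Measurable w) (hsw : Integrable fun s => s * w s)
    (x : ℝ) : Integrable fun s => w s * Real.sin (s * x) := by
  refine (hsw.norm.mul_const |x|).mono' (by fun_prop) (.of_forall fun s => ?_)
  rw [Real.norm_eq_abs, Real.norm_eq_abs, abs_mul, abs_mul, mul_comm |s|, mul_assoc, ← abs_mul s]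
  exact mul_le_mul_of_nonneg_left Real.abs_sin_le_abs (abs_nonneg _)

lemma integrable_mul_cos {w : ℝ → ℝ} (hw : Integrable w) (x : ℝ) :
    Integrable fun s => w s * Real.cos (s * x) := by
  refine hw.norm.mono' (hw.1.mul (by fun_prop)) (.of_forall fun s => ?_)
  rw [Real.norm_eq_abs, Real.norm_eq_abs, abs_mul]
  exact mul_le_of_le_one_right (abs_nonneg _) (Real.abs_cos_le_one _)

lemma hasDerivAt_integral_mul_sin {w : ℝ → ℝ} (hw : Measurable w)
    (hsw : Integrable fun s => s * w s) (x : ℝ) :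
    HasDerivAt (fun y => ∫ s, w s * Real.sin (s * y)) (∫ s, s * w s * Real.cos (s * x)) x := by
  refine (hasDerivAt_integral_of_dominated_loc_of_deriv_le (s := Set.univ)
    (F' := fun y s => s * w s * Real.cos (s * y)) Filter.univ_mem
    (.of_forall fun y => by fun_prop) (integrable_mul_sin hw hsw x) (by fun_prop)
    (.of_forall fun s y _ => ?_) hsw.norm (.of_forall fun s y _ => ?_)).2
  · rw [norm_mul]
    exact mul_le_of_le_one_right (norm_nonneg _) (Real.abs_cos_le_one _)
  · exact (((hasDerivAt_id y).const_mul s).sin.const_mul (w s)).congr_deriv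
      (by simp only [id_eq]; ring)

lemma hasDerivAt_integral_mul_cos {w : ℝ → ℝ} (hw : Measurable w) (hint : Integrable w)
    (hsw : Integrable fun s => s * w s) (x : ℝ) :
    HasDerivAt (fun y => ∫ s, w s * Real.cos (s * y)) (-∫ s, s * w s * Real.sin (s * x)) x := by
  rw [← integral_neg]
  refine (hasDerivAt_integral_of_dominated_loc_of_deriv_le (s := Set.univ)
    (F' := fun y s => -(s * w s * Real.sin (s * y))) Filter.univ_mem
    (.of_forall fun y => by fun_prop) (integrable_mul_cos hint x) (by fun_prop)
    (.of_forall fun s y _ => ?_) hsw.norm (.of_forall fun s y _ => ?_)).2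
  · rw [norm_neg, norm_mul]
    exact mul_le_of_le_one_right (norm_nonneg _) (Real.abs_sin_le_one _)
  · exact (((hasDerivAt_id y).const_mul s).cos.const_mul (w s)).congr_deriv
      (by simp only [id_eq]; ring)

lemma integral_mul_gaussianExp_mul_sin (x : ℝ) :
    ∫ s : ℝ, s * gaussianExp s * Real.sin (s * x) = √(2 * Real.pi) * (x * gaussianExp x) := by
  have hderiv := hasDerivAt_integral_mul_cos measurable_gaussianExp integrable_gaussianExp
    (by simpa using integrable_pow_mul_gaussianExp 1) x
  simp only [integral_gaussianExp_mul_cos] at hderiv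
  linarith [hderiv.unique ((hasDerivAt_gaussianExp x).const_mul _)]

lemma integral_sq_mul_gaussianExp_mul_cos (x : ℝ) :
    ∫ s : ℝ, s ^ 2 * gaussianExp s * Real.cos (s * x) =
      √(2 * Real.pi) * ((1 - x ^ 2) * gaussianExp x) := by
  have hderiv := hasDerivAt_integral_mul_sin (w := fun s => s * gaussianExp s) (by fun_prop)
    (by simpa only [← mul_assoc, ← sq] using integrable_pow_mul_gaussianExp 2) x
  simp only [integral_mul_gaussianExp_mul_sin] at hderiv
  simp only [sq, mul_assoc] at hderiv ⊢
  rw [hderiv.unique (((hasDerivAt_id x).mul (hasDerivAt_gaussianExp x)).const_mul _)]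
  simp only [id_eq]
  ring

lemma stdNormalCDF_eq (x : ℝ) :
    stdNormalCDF x = (√(2 * Real.pi))⁻¹ * ∫ u in Set.Iic x, gaussianExp u := rfl

lemma hasDerivAt_stdNormalCDF (x : ℝ) :
    HasDerivAt stdNormalCDF ((√(2 * Real.pi))⁻¹ * gaussianExp x) x := by
  have hsplit : stdNormalCDF = fun y => (√(2 * Real.pi))⁻¹ *
      ((∫ u in (0 : ℝ)..y, gaussianExp u) + ∫ u in Set.Iic (0 : ℝ), gaussianExp u) := by
    funext y
    rw [stdNormalCDF_eq, ← intervalIntegral.integral_Iic_sub_Iic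
      integrable_gaussianExp.integrableOn integrable_gaussianExp.integrableOn, sub_add_cancel]
  rw [hsplit]
  exact ((intervalIntegral.integral_hasDerivAt_right integrable_gaussianExp.intervalIntegrable
    (continuous_gaussianExp.stronglyMeasurableAtFilter _ _)
    continuous_gaussianExp.continuousAt).add_const _).const_mul _

lemma stdNormalCDF_zero : stdNormalCDF 0 = 1 / 2 := by
  have hsymm : ∫ u in Set.Iic (0 : ℝ), gaussianExp u = ∫ u in Set.Ioi (0 : ℝ), gaussianExp u := by
    simpa [gaussianExp_neg] using integral_comp_neg_Iic (0 : ℝ) gaussianExp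
  have hhalf : ∫ u in Set.Ioi (0 : ℝ), gaussianExp u = √(2 * Real.pi) / 2 := by
    simp only [gaussianExp_eq, integral_gaussian_Ioi]
    ring_nf
  rw [stdNormalCDF_eq, hsymm, hhalf]
  field_simp

lemma stdNormalCDF_nonneg (x : ℝ) : 0 ≤ stdNormalCDF x := by
  rw [stdNormalCDF_eq]
  exact mul_nonneg (by positivity) (integral_nonneg fun u => (gaussianExp_pos u).le)

lemma stdNormalCDF_le_one (x : ℝ) : stdNormalCDF x ≤ 1 := by
  rw [stdNormalCDF_eq, inv_mul_le_one₀ (by positivity), ← integral_gaussianExp]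
  exact setIntegral_le_integral integrable_gaussianExp (.of_forall fun u => (gaussianExp_pos u).le)

lemma inv_two_pi_mul_sqrt : (2 * Real.pi)⁻¹ * √(2 * Real.pi) = (√(2 * Real.pi))⁻¹ := by
  rw [inv_mul_eq_div, Real.sqrt_div_self]

lemma ae_ne_zero : ∀ᵐ s : ℝ, s ≠ 0 := by simp [ae_iff]

lemma integrable_mul_gaussianExp_div : Integrable fun s => s * (gaussianExp s / s) :=
  integrable_gaussianExp.congr (ae_ne_zero.mono fun _ hs => (mul_div_cancel₀ _ hs).symm)

lemma stdNormalCDF_eq_integral_sin (x : ℝ) :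
    stdNormalCDF x = 1 / 2 + (2 * Real.pi)⁻¹ * ∫ s : ℝ, gaussianExp s / s * Real.sin (s * x) := by
  have hsine (y : ℝ) : HasDerivAt (fun y => ∫ s : ℝ, gaussianExp s / s * Real.sin (s * y))
      (√(2 * Real.pi) * gaussianExp y) y := by
    rw [← integral_gaussianExp_mul_cos]
    refine (hasDerivAt_integral_mul_sin (by fun_prop) integrable_mul_gaussianExp_div y).congr_deriv
      (integral_congr_ae (ae_ne_zero.mono fun s hs => ?_))
    simp only [mul_div_cancel₀ _ hs]
  have hdiff (y : ℝ) : HasDerivAt (fun y => stdNormalCDF y -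
      (2 * Real.pi)⁻¹ * ∫ s : ℝ, gaussianExp s / s * Real.sin (s * y)) 0 y :=
    ((hasDerivAt_stdNormalCDF y).sub ((hsine y).const_mul (2 * Real.pi)⁻¹)).congr_deriv
      (by rw [← mul_assoc, inv_two_pi_mul_sqrt, sub_self])
  have hconst := is_const_of_deriv_eq_zero (fun y => (hdiff y).differentiableAt)
    (fun y => (hdiff y).deriv) x 0
  simp only [stdNormalCDF_zero, mul_zero, Real.sin_zero, integral_zero, sub_zero] at hconst
  exact sub_eq_iff_eq_add.1 hconst

lemma stdNormalCDF_div_eq_integral_sin {τ : ℝ} (hτ : 0 < τ) (y : ℝ) :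
    stdNormalCDF (y / τ) =
      1 / 2 + (2 * Real.pi)⁻¹ * ∫ s : ℝ, gaussianExp (τ * s) / s * Real.sin (s * y) := by
  have hscale := Measure.integral_comp_mul_left
    (fun s => gaussianExp s / s * Real.sin (s * (y / τ))) τ
  rw [abs_of_pos (inv_pos.2 hτ), smul_eq_mul, eq_inv_mul_iff_mul_eq₀ hτ.ne',
    ← integral_const_mul] at hscale
  rw [stdNormalCDF_eq_integral_sin, ← hscale]
  congr 3 with s
  rw [mul_right_comm τ s, mul_div_cancel₀ _ hτ.ne', mul_comm y s]
  field_simp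

/-! ### The first-order Edgeworth approximation -/

/-- The Edgeworth approximation `Φ(x) + ρ (1 - x²) φ(x)` of a distribution function, where `6ρ`
is the third cumulant. -/
noncomputable def edgeworth (ρ x : ℝ) : ℝ :=
  stdNormalCDF x + ρ * ((√(2 * Real.pi))⁻¹ * ((1 - x ^ 2) * gaussianExp x))

lemma inv_sqrt_two_pi_le_one : (√(2 * Real.pi))⁻¹ ≤ 1 :=
  inv_le_one_of_one_le₀ (Real.one_le_sqrt.2 (by nlinarith [Real.pi_gt_three]))

lemma quartic_mul_gaussianExp_le_one (x : ℝ) :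
    (1 + x ^ 2 / 2 + x ^ 4 / 8) * gaussianExp x ≤ 1 := by
  have hexp := Real.quadratic_le_exp_of_nonneg (x := x ^ 2 / 2) (by positivity)
  rw [gaussianExp, neg_div, Real.exp_neg, ← div_eq_mul_inv, div_le_one (Real.exp_pos _)]
  linarith

lemma abs_one_sub_sq_mul_gaussianExp_le (x : ℝ) : |(1 - x ^ 2) * gaussianExp x| ≤ 2 := by
  rw [abs_mul, abs_of_pos (gaussianExp_pos x)]
  have hpoly : |1 - x ^ 2| ≤ 2 * (1 + x ^ 2 / 2 + x ^ 4 / 8) := by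
    rw [abs_le]
    constructor <;> nlinarith [sq_nonneg x, sq_nonneg (x ^ 2)]
  linarith [quartic_mul_gaussianExp_le_one x,
    mul_le_mul_of_nonneg_right hpoly (gaussianExp_pos x).le]

lemma abs_sub_edgeworth_le {ρ P : ℝ} (hρ : |ρ| ≤ 1) (hP0 : 0 ≤ P) (hP1 : P ≤ 1) (x : ℝ) :
    |P - edgeworth ρ x| ≤ 4 := by
  have hcorr : |ρ * ((√(2 * Real.pi))⁻¹ * ((1 - x ^ 2) * gaussianExp x))| ≤ 1 * (1 * 2) := by
    rw [abs_mul, abs_mul, abs_of_nonneg (inv_nonneg.2 (Real.sqrt_nonneg _))]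
    gcongr
    · exact inv_sqrt_two_pi_le_one
    · exact abs_one_sub_sq_mul_gaussianExp_le x
  rw [edgeworth, abs_le]
  constructor <;>
    linarith [(abs_le.1 hcorr).1, (abs_le.1 hcorr).2, stdNormalCDF_nonneg x, stdNormalCDF_le_one x]

lemma hasDerivAt_edgeworth (ρ x : ℝ) :
    HasDerivAt (edgeworth ρ)
      ((√(2 * Real.pi))⁻¹ * gaussianExp x * (1 + ρ * (x ^ 3 - 3 * x))) x := by
  have hquad : HasDerivAt (fun x : ℝ => 1 - x ^ 2) (-(2 * x)) x :=
    ((hasDerivAt_pow 2 x).const_sub 1).congr_deriv (by simp)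
  exact ((hasDerivAt_stdNormalCDF x).add
    (((hquad.mul (hasDerivAt_gaussianExp x)).const_mul (√(2 * Real.pi))⁻¹).const_mul ρ)).congr_deriv
    (by ring)

lemma lipschitzWith_edgeworth {ρ : ℝ} (hρ : |ρ| ≤ 1) : LipschitzWith 8 (edgeworth ρ) := by
  refine lipschitzWith_of_nnnorm_deriv_le
    (fun x => (hasDerivAt_edgeworth ρ x).differentiableAt) fun x => ?_
  rw [← NNReal.coe_le_coe, coe_nnnorm, (hasDerivAt_edgeworth ρ x).deriv, Real.norm_eq_abs,
    abs_mul, abs_mul, abs_of_pos (gaussianExp_pos x),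
    abs_of_nonneg (inv_nonneg.2 (Real.sqrt_nonneg _))]
  have hcubic : |x ^ 3 - 3 * x| ≤ 7 * (1 + x ^ 2 / 2 + x ^ 4 / 8) := by
    rw [abs_le]
    constructor <;> nlinarith [sq_nonneg (x ^ 2 - x), sq_nonneg (x ^ 2 + x), sq_nonneg (x - 1),
      sq_nonneg (x + 1), sq_nonneg x, sq_nonneg (x ^ 2)]
  have hpoly : |1 + ρ * (x ^ 3 - 3 * x)| ≤ 8 * (1 + x ^ 2 / 2 + x ^ 4 / 8) := by
    calc |1 + ρ * (x ^ 3 - 3 * x)| ≤ |1| + |ρ * (x ^ 3 - 3 * x)| := abs_add_le _ _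
      _ ≤ 1 + 1 * (7 * (1 + x ^ 2 / 2 + x ^ 4 / 8)) := by
          rw [abs_one, abs_mul]
          gcongr
      _ ≤ _ := by nlinarith [sq_nonneg x, sq_nonneg (x ^ 2)]
  calc (√(2 * Real.pi))⁻¹ * gaussianExp x * |1 + ρ * (x ^ 3 - 3 * x)|
      ≤ 1 * gaussianExp x * (8 * (1 + x ^ 2 / 2 + x ^ 4 / 8)) := by
        have := gaussianExp_pos x
        gcongr
        exact inv_sqrt_two_pi_le_one
    _ ≤ (8 : NNReal) := by
        rw [NNReal.coe_ofNat]
        linarith [quartic_mul_gaussianExp_le_one x]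

/-- Fourier inversion for the Edgeworth approximation, whose Fourier-Stieltjes transform is
`gaussianExp s * (1 - i ρ s³)`. -/
lemma edgeworth_eq_integral (ρ x : ℝ) :
    edgeworth ρ x = 1 / 2 + (2 * Real.pi)⁻¹ * ∫ s : ℝ,
      (gaussianExp s / s * Real.sin (s * x) + ρ * (s ^ 2 * gaussianExp s * Real.cos (s * x))) := by
  rw [integral_add (integrable_mul_sin (by fun_prop) integrable_mul_gaussianExp_div x)
    ((integrable_mul_cos (integrable_pow_mul_gaussianExp 2) x).const_mul ρ),
    integral_const_mul, integral_sq_mul_gaussianExp_mul_cos, edgeworth,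
    stdNormalCDF_eq_integral_sin, ← inv_two_pi_mul_sqrt]
  ring

/-! ### A smoothing inequality -/

/-- The convolution of `F` with the centred normal distribution of standard deviation `τ`. -/
noncomputable def gaussianSmooth (τ : ℝ) (F : ℝ → ℝ) (x : ℝ) : ℝ :=
  (√(2 * Real.pi))⁻¹ * ∫ z : ℝ, F (x - τ * z) * gaussianExp z

lemma gaussianSmooth_neg_comp_neg (τ : ℝ) (F : ℝ → ℝ) (x : ℝ) :
    gaussianSmooth τ (fun y => -F (-y)) x = -gaussianSmooth τ F (-x) := by
  rw [gaussianSmooth, gaussianSmooth, ← mul_neg, ← integral_neg,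
    ← integral_neg_eq_self (fun z => -F (-(x - τ * z)) * gaussianExp z)]
  congr 2 with z
  rw [gaussianExp_neg]
  ring_nf

lemma integrable_quadratic_mul_gaussianExp (a b : ℝ) :
    Integrable fun z : ℝ => (a + b * z ^ 2) * gaussianExp z := by
  simp only [add_mul, mul_assoc]
  exact (integrable_gaussianExp.const_mul a).add ((integrable_pow_mul_gaussianExp 2).const_mul b)

lemma integral_quadratic_mul_gaussianExp (a b : ℝ) :
    (√(2 * Real.pi))⁻¹ * ∫ z : ℝ, (a + b * z ^ 2) * gaussianExp z = a + b := by
  have hsq : ∫ z : ℝ, z ^ 2 * gaussianExp z = √(2 * Real.pi) := by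
    simpa [gaussianExp] using integral_sq_mul_gaussianExp_mul_cos 0
  simp only [add_mul, mul_assoc]
  rw [integral_add (integrable_gaussianExp.const_mul a)
    ((integrable_pow_mul_gaussianExp 2).const_mul b), integral_const_mul, integral_const_mul,
    integral_gaussianExp, hsq]
  field_simp

/-- The values of `F` to the right of `x` are at least `F x`, so a large value of `F x - G x`
makes the Gaussian average of `F - G` around `x + 2τ` large. -/
lemma sub_le_of_gaussianSmooth_sub_le {F G : ℝ → ℝ} {M : NNReal} {τ η Δ : ℝ} (hF : Monotone F)
    (hG : LipschitzWith M G) (hτ : 0 < τ) (hΔ : ∀ x, G x - F x ≤ Δ)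
    (hint : ∀ x, Integrable fun z => F (x - τ * z) * gaussianExp z)
    (hη : ∀ x, gaussianSmooth τ F x - G x ≤ η) (x : ℝ) :
    F x - G x ≤ Δ / 3 + 4 / 3 * (η + 6 * (M * τ)) := by
  have hMτ : 0 ≤ M * τ := mul_nonneg M.coe_nonneg hτ.le
  have hgap : 0 ≤ (F x - G x + Δ) / 4 := by linarith [hΔ x]
  have hpointwise (z : ℝ) :
      (F x - 3 * (M * τ)) + (-((F x - G x + Δ) / 4) - M * τ) * z ^ 2 ≤
        F (x + 2 * τ - τ * z) := by
    rcases le_or_gt |z| 2 with hz | hz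
    · have hmono : F x ≤ F (x + 2 * τ - τ * z) := hF (by nlinarith [(abs_le.1 hz).2])
      linarith [mul_nonneg (add_nonneg hgap hMτ) (sq_nonneg z)]
    · have hlip := hG.dist_le_mul (x + 2 * τ - τ * z) x
      have hdist : |x + 2 * τ - τ * z - x| ≤ τ * (3 + z ^ 2) := by
        rw [show x + 2 * τ - τ * z - x = τ * (2 - z) by ring, abs_mul, abs_of_pos hτ]
        gcongr
        rw [abs_le]
        constructor <;> nlinarith [sq_nonneg (z - 1), sq_nonneg (z + 1)]
      rw [Real.dist_eq, Real.dist_eq] at hlip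
      have hle := mul_le_mul_of_nonneg_left hdist M.coe_nonneg
      have hfour : 4 ≤ z ^ 2 := by nlinarith [sq_abs z]
      linarith [hΔ (x + 2 * τ - τ * z), (abs_le.1 hlip).1,
        mul_le_mul_of_nonneg_left hfour hgap]
  have haverage : F x - 3 * (M * τ) + (-((F x - G x + Δ) / 4) - M * τ) ≤
      gaussianSmooth τ F (x + 2 * τ) := by
    rw [← integral_quadratic_mul_gaussianExp]
    exact mul_le_mul_of_nonneg_left (integral_mono (integrable_quadratic_mul_gaussianExp _ _)
      (hint _) fun z => mul_le_mul_of_nonneg_right (hpointwise z) (gaussianExp_pos z).le)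
      (by positivity)
  have hlip := hG.dist_le_mul (x + 2 * τ) x
  rw [Real.dist_eq, Real.dist_eq, add_sub_cancel_left, abs_of_pos (by positivity : 0 < 2 * τ)]
    at hlip
  linarith [hη (x + 2 * τ), (abs_le.1 hlip).2]

/-- The one-sided bounds are applied with `Δ = ⨆ x, |F x - G x|`, and `Δ / 3` is absorbed. -/
lemma abs_sub_le_of_gaussianSmooth {F G : ℝ → ℝ} {M : NNReal} {τ η B : ℝ} (hF : Monotone F)
    (hG : LipschitzWith M G) (hτ : 0 < τ) (hB : ∀ x, |F x - G x| ≤ B)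
    (hint : ∀ x, Integrable fun z => F (x - τ * z) * gaussianExp z)
    (hη : ∀ x, |gaussianSmooth τ F x - G x| ≤ η) (x : ℝ) :
    |F x - G x| ≤ 2 * η + 12 * (M * τ) := by
  have hbdd : BddAbove (Set.range fun x => |F x - G x|) := ⟨B, Set.forall_mem_range.2 hB⟩
  have hle (x : ℝ) : |F x - G x| ≤ ⨆ x, |F x - G x| := le_ciSup hbdd x
  have hupper (x : ℝ) :
      F x - G x ≤ (⨆ x, |F x - G x|) / 3 + 4 / 3 * (η + 6 * (M * τ)) :=
    sub_le_of_gaussianSmooth_sub_le hF hG hτ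
      (fun y => (le_abs_self _).trans ((abs_sub_comm _ _).trans_le (hle y))) hint
      (fun y => (le_abs_self _).trans (hη y)) x
  have hlower (x : ℝ) :
      G x - F x ≤ (⨆ x, |F x - G x|) / 3 + 4 / 3 * (η + 6 * (M * τ)) := by
    have hreflect := sub_le_of_gaussianSmooth_sub_le (F := fun y => -F (-y))
      (G := fun y => -G (-y)) (M := M) (τ := τ) (η := η) (Δ := ⨆ x, |F x - G x|)
      (fun y z hyz => neg_le_neg (hF (neg_le_neg hyz)))
      (.of_dist_le_mul fun y z => by simpa [dist_neg_neg] using hG.dist_le_mul (-y) (-z)) hτ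
      (fun y => by linarith [(le_abs_self _).trans (hle (-y))])
      (fun y => by
        simpa [gaussianExp_neg, sub_eq_add_neg, add_comm] using (hint (-y)).comp_neg.neg)
      (fun y => by
        rw [gaussianSmooth_neg_comp_neg]
        linarith [(neg_abs_le _).trans' (neg_le_neg (hη (-y)))]) (-x)
    simpa [neg_add_eq_sub] using hreflect
  have hsup := ciSup_le fun x => abs_sub_le_iff.2 ⟨hupper x, hlower x⟩
  linarith [hle x]

lemma integrable_indicator_mul_gaussianExp (μ : Measure ℝ) [IsFiniteMeasure μ] (τ x : ℝ) :
    Integrable (Function.uncurry fun X z =>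
      (Set.Iio (x - τ * z)).indicator 1 X * gaussianExp z) (μ.prod volume) := by
  have hset : MeasurableSet {q : ℝ × ℝ | q.1 < x - τ * q.2} :=
    measurableSet_lt (by fun_prop) (by fun_prop)
  refine ((integrable_gaussianExp.comp_snd μ).indicator hset).congr (.of_forall fun ⟨X, z⟩ => ?_)
  by_cases h : X < x - τ * z <;> simp [Function.uncurry, Set.indicator, h]

lemma integral_indicator_Iio (μ : Measure ℝ) (y : ℝ) :
    ∫ X, (Set.Iio y).indicator 1 X ∂μ = μ.real (Set.Iio y) :=
  integral_indicator_one measurableSet_Iio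

lemma integrable_measureReal_Iio_mul_gaussianExp (μ : Measure ℝ) [IsFiniteMeasure μ] (τ x : ℝ) :
    Integrable fun z => μ.real (Set.Iio (x - τ * z)) * gaussianExp z := by
  simpa only [Function.uncurry, integral_mul_const, integral_indicator_Iio] using
    (integrable_indicator_mul_gaussianExp μ τ x).integral_prod_right

lemma gaussianSmooth_measureReal_Iio (μ : Measure ℝ) [IsFiniteMeasure μ] {τ : ℝ} (hτ : 0 < τ)
    (x : ℝ) :
    gaussianSmooth τ (fun y => μ.real (Set.Iio y)) x = ∫ X, stdNormalCDF ((x - X) / τ) ∂μ := by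
  simp only [gaussianSmooth, ← integral_indicator_Iio, ← integral_mul_const]
  rw [← integral_integral_swap (integrable_indicator_mul_gaussianExp μ τ x), ← integral_const_mul]
  congr with X
  rw [stdNormalCDF_eq, integral_Iic_eq_integral_Iio, ← integral_indicator measurableSet_Iio]
  congr with z
  have hiff : X < x - τ * z ↔ z < (x - X) / τ := by
    rw [lt_div_iff₀ hτ, lt_sub_comm, mul_comm]
  by_cases h : X < x - τ * z <;> simp [Set.indicator, h, ← hiff]

lemma integrable_gaussianExp_div_mul_sin {μ : Measure ℝ} [IsFiniteMeasure μ]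
    (hμ : Integrable id μ) {τ : ℝ} (hτ : 0 < τ) (x : ℝ) :
    Integrable (Function.uncurry fun X s => gaussianExp (τ * s) / s * Real.sin (s * (x - X)))
      (μ.prod volume) := by
  have hmoment : Integrable (fun X => x - X) μ := (integrable_const x).sub hμ
  refine (hmoment.mul_prod (integrable_gaussianExp.comp_mul_left' hτ.ne')).mono
    (Measurable.aestronglyMeasurable (by fun_prop)) (.of_forall fun ⟨X, s⟩ => ?_)
  rcases eq_or_ne s 0 with rfl | hs
  · simpa [Function.uncurry] using by positivity
  have hsin : ‖Real.sin (s * (x - X))‖ ≤ ‖s‖ * ‖x - X‖ :=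
    Real.abs_sin_le_abs.trans_eq (abs_mul _ _)
  calc ‖gaussianExp (τ * s) / s * Real.sin (s * (x - X))‖
      ≤ ‖gaussianExp (τ * s)‖ / ‖s‖ * (‖s‖ * ‖x - X‖) := by
        rw [norm_mul, norm_div]
        gcongr
    _ = ‖(x - X) * gaussianExp (τ * s)‖ := by
        rw [norm_mul]
        field_simp

lemma integral_sin_mul_sub (μ : Measure ℝ) [IsFiniteMeasure μ] (s x : ℝ) :
    ∫ X, Real.sin (s * (x - X)) ∂μ =
      -(Complex.exp ((-(s * x) : ℝ) * Complex.I) * charFun μ s).im := by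
  have hint : Integrable (fun X : ℝ =>
      Complex.exp ((-(s * x) : ℝ) * Complex.I) * Complex.exp (s * X * Complex.I)) μ := by
    refine (integrable_const (1 : ℝ)).mono' (by fun_prop) (.of_forall fun X => ?_)
    rw [norm_mul, Complex.norm_exp_ofReal_mul_I, ← Complex.ofReal_mul,
      Complex.norm_exp_ofReal_mul_I, one_mul]
  rw [charFun_apply_real, ← integral_const_mul, ← RCLike.im_eq_complex_im, ← integral_im hint,
    ← integral_neg]
  congr with X
  rw [RCLike.im_eq_complex_im, ← Complex.exp_add, ← add_mul, ← Complex.ofReal_mul,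
    ← Complex.ofReal_add, Complex.exp_ofReal_mul_I_im, ← Real.sin_neg]
  ring_nf

lemma gaussianSmooth_measureReal_Iio_eq_integral {μ : Measure ℝ} [IsProbabilityMeasure μ]
    (hμ : Integrable id μ) {τ : ℝ} (hτ : 0 < τ) (x : ℝ) :
    gaussianSmooth τ (fun y => μ.real (Set.Iio y)) x = 1 / 2 + (2 * Real.pi)⁻¹ *
      ∫ s, gaussianExp (τ * s) / s * ∫ X, Real.sin (s * (x - X)) ∂μ := by
  have hint := integrable_gaussianExp_div_mul_sin hμ hτ x
  have hinner : Integrable (fun X => (2 * Real.pi)⁻¹ *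
      ∫ s, gaussianExp (τ * s) / s * Real.sin (s * (x - X))) μ :=
    hint.integral_prod_left.const_mul _
  rw [gaussianSmooth_measureReal_Iio μ hτ]
  simp only [stdNormalCDF_div_eq_integral_sin hτ]
  rw [integral_add (integrable_const _) hinner, integral_const_mul, integral_integral_swap hint,
    integral_const, probReal_univ, one_smul]
  simp only [integral_const_mul]

/-- The Fourier transform of the Edgeworth approximation with third cumulant `6ρ`. -/
noncomputable def edgeworthCharFun (ρ s : ℝ) : ℂ :=
  (gaussianExp s : ℂ) * (1 - (ρ * s ^ 3 : ℝ) * Complex.I)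

lemma gaussianSmooth_sub_edgeworth_eq_integral {μ : Measure ℝ} [IsProbabilityMeasure μ]
    (hμ : Integrable id μ) {τ : ℝ} (hτ : 0 < τ) (ρ x : ℝ) :
    gaussianSmooth τ (fun y => μ.real (Set.Iio y)) x - edgeworth ρ x = (2 * Real.pi)⁻¹ * ∫ s : ℝ,
      -(Complex.exp ((-(s * x) : ℝ) * Complex.I) *
        (gaussianExp (τ * s) * charFun μ s - edgeworthCharFun ρ s)).im / s := by
  have hint : Integrable fun s => gaussianExp (τ * s) / s * ∫ X, Real.sin (s * (x - X)) ∂μ := by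
    simpa only [Function.uncurry, integral_const_mul] using
      (integrable_gaussianExp_div_mul_sin hμ hτ x).integral_prod_right
  have hint' : Integrable fun s : ℝ =>
      gaussianExp s / s * Real.sin (s * x) + ρ * (s ^ 2 * gaussianExp s * Real.cos (s * x)) :=
    (integrable_mul_sin (by fun_prop) integrable_mul_gaussianExp_div x).add
      ((integrable_mul_cos (integrable_pow_mul_gaussianExp 2) x).const_mul ρ)
  rw [gaussianSmooth_measureReal_Iio_eq_integral hμ hτ, edgeworth_eq_integral,
    add_sub_add_left_eq_sub, ← mul_sub, ← integral_sub hint hint']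
  congr 1
  refine integral_congr_ae (ae_ne_zero.mono fun s hs => ?_)
  have him : (Complex.exp ((-(s * x) : ℝ) * Complex.I) * edgeworthCharFun ρ s).im =
      -(gaussianExp s * (Real.sin (s * x) + ρ * s ^ 3 * Real.cos (s * x))) := by
    simp only [edgeworthCharFun, Complex.mul_im, Complex.mul_re, Complex.sub_re, Complex.sub_im,
      Complex.exp_ofReal_mul_I_re, Complex.exp_ofReal_mul_I_im, Complex.ofReal_re,
      Complex.ofReal_im, Complex.I_re, Complex.I_im, Complex.one_re, Complex.one_im,
      Real.cos_neg, Real.sin_neg]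
    ring
  beta_reduce
  rw [integral_sin_mul_sub, mul_sub, Complex.sub_im, him,
    mul_left_comm (Complex.exp _), Complex.im_ofReal_mul]
  field_simp
  ring

/-- An Esseen-type inequality with a Gaussian kernel. -/
lemma abs_measureReal_Iio_sub_edgeworth_le {μ : Measure ℝ} [IsProbabilityMeasure μ]
    (hμ : Integrable id μ) {ρ τ : ℝ} (hρ : |ρ| ≤ 1) (hτ : 0 < τ) {b : ℝ → ℝ} (hb : Integrable b)
    (hle : ∀ s : ℝ, s ≠ 0 →
      ‖gaussianExp (τ * s) * charFun μ s - edgeworthCharFun ρ s‖ ≤ |s| * b s) (x : ℝ) :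
    |μ.real (Set.Iio x) - edgeworth ρ x| ≤ (∫ s, b s) + 96 * τ := by
  have hpi : (2 * Real.pi)⁻¹ ≤ 1 / 2 := by
    rw [inv_le_comm₀ (by positivity) (by norm_num)]
    linarith [Real.pi_gt_three]
  have hsmooth (x : ℝ) :
      |gaussianSmooth τ (fun y => μ.real (Set.Iio y)) x - edgeworth ρ x| ≤ 1 / 2 * ∫ s, b s := by
    rw [gaussianSmooth_sub_edgeworth_eq_integral hμ hτ, abs_mul, abs_of_pos (by positivity),
      ← Real.norm_eq_abs (∫ s, _)]
    refine mul_le_mul hpi (norm_integral_le_of_norm_le hb (ae_ne_zero.mono fun s hs => ?_))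
      (norm_nonneg _) (by norm_num)
    rw [norm_div, norm_neg, div_le_iff₀ (norm_pos_iff.2 hs), mul_comm (b s)]
    refine (Complex.abs_im_le_norm _).trans (le_trans ?_ (hle s hs))
    rw [norm_mul, Complex.norm_exp_ofReal_mul_I, one_mul]
  have hmono : Monotone fun y => μ.real (Set.Iio y) := fun _ _ hyz =>
    measureReal_mono (Set.Iio_subset_Iio hyz)
  have hdesmooth := abs_sub_le_of_gaussianSmooth hmono (lipschitzWith_edgeworth hρ) hτ
    (fun y => abs_sub_edgeworth_le hρ measureReal_nonneg measureReal_le_one y)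
    (integrable_measureReal_Iio_mul_gaussianExp μ τ) hsmooth x
  rw [NNReal.coe_ofNat] at hdesmooth
  linarith

/-! ### Sums of independent Bernoulli variables -/

/-- The distribution of `X` when every `m < n` is marked independently with probability `p m`. -/
noncomputable def markLaw (p : ℕ → unitInterval) (n : ℕ) (X : Finset ℕ → ℝ) : Measure ℝ :=
  ∑ A ∈ (range n).powerset, ENNReal.ofReal (markWeight p n A) • Measure.dirac (X A)

instance isProbabilityMeasure_markLaw (p : ℕ → unitInterval) (n : ℕ) (X : Finset ℕ → ℝ) :
    IsProbabilityMeasure (markLaw p n X) := by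
  constructor
  simp only [markLaw, Measure.finsetSum_apply, Measure.smul_apply, measure_univ, smul_eq_mul,
    mul_one]
  rw [← ENNReal.ofReal_sum_of_nonneg fun A _ => markWeight_nonneg p n A, sum_markWeight,
    ENNReal.ofReal_one]

lemma integrable_markLaw {E : Type*} [NormedAddCommGroup E] (p : ℕ → unitInterval) (n : ℕ)
    (X : Finset ℕ → ℝ) (f : ℝ → E) : Integrable f (markLaw p n X) :=
  integrable_finsetSum_measure.2 fun _ _ => (integrable_dirac (by simp)).smul_measure (by simp)

lemma integral_markLaw {E : Type*} [NormedAddCommGroup E] [NormedSpace ℝ E] [CompleteSpace E]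
    (p : ℕ → unitInterval) (n : ℕ) (X : Finset ℕ → ℝ) (f : ℝ → E) :
    ∫ y, f y ∂markLaw p n X = markMean p n fun A => f (X A) := by
  rw [markLaw, integral_finsetSum_measure fun _ _ =>
    (integrable_dirac (by simp)).smul_measure (by simp)]
  refine sum_congr rfl fun A _ => ?_
  rw [integral_smul_measure, integral_dirac, ENNReal.toReal_ofReal (markWeight_nonneg p n A)]

lemma measureReal_Iio_markLaw (p : ℕ → unitInterval) (n : ℕ) (X : Finset ℕ → ℝ) (x : ℝ) :
    (markLaw p n X).real (Set.Iio x) = markMean p n fun A => if X A < x then 1 else 0 := by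
  rw [← integral_indicator_Iio, integral_markLaw]
  rfl

lemma charFun_markLaw (p : ℕ → unitInterval) (n : ℕ) (X : Finset ℕ → ℝ) (s : ℝ) :
    charFun (markLaw p n X) s =
      markMean p n fun A => Complex.exp ((s * X A : ℝ) * Complex.I) := by
  rw [charFun_apply_real, integral_markLaw]
  simp only [Complex.ofReal_mul]

/-- The characteristic function of a centred Bernoulli variable of parameter `p`. -/
noncomputable def bernoulliCharFun (p : unitInterval) (x : ℝ) : ℂ :=
  (p : ℝ) * Complex.exp (((1 - p) * x : ℝ) * Complex.I) +
    ((1 - p : ℝ) : ℂ) * Complex.exp ((-(p * x) : ℝ) * Complex.I)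

lemma sq_norm_bernoulliCharFun (p : unitInterval) (x : ℝ) :
    ‖bernoulliCharFun p x‖ ^ 2 = 1 - 2 * (p * (1 - p)) * (1 - Real.cos x) := by
  have hre : (bernoulliCharFun p x).re =
      p * Real.cos ((1 - p) * x) + (1 - p) * Real.cos (p * x) := by
    rw [bernoulliCharFun, Complex.add_re, Complex.re_ofReal_mul, Complex.re_ofReal_mul,
      Complex.exp_ofReal_mul_I_re, Complex.exp_ofReal_mul_I_re, Real.cos_neg]
  have him : (bernoulliCharFun p x).im =
      p * Real.sin ((1 - p) * x) - (1 - p) * Real.sin (p * x) := by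
    rw [bernoulliCharFun, Complex.add_im, Complex.im_ofReal_mul, Complex.im_ofReal_mul,
      Complex.exp_ofReal_mul_I_im, Complex.exp_ofReal_mul_I_im, Real.sin_neg]
    ring
  have hcos : Real.cos x = Real.cos ((1 - p) * x) * Real.cos (p * x) -
      Real.sin ((1 - p) * x) * Real.sin (p * x) := by
    rw [← Real.cos_add]
    ring_nf
  rw [Complex.sq_norm, Complex.normSq_apply, hre, him, hcos]
  linear_combination (p : ℝ) ^ 2 * Real.sin_sq_add_cos_sq ((1 - p) * x) +
    (1 - (p : ℝ)) ^ 2 * Real.sin_sq_add_cos_sq (p * x)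

lemma mul_one_sub_nonneg (p : unitInterval) : 0 ≤ (p : ℝ) * (1 - p) :=
  mul_nonneg p.2.1 (unitInterval.one_minus_nonneg p)

lemma norm_bernoulliCharFun_le_one (p : unitInterval) (x : ℝ) : ‖bernoulliCharFun p x‖ ≤ 1 := by
  rw [← sq_le_one_iff₀ (norm_nonneg _), sq_norm_bernoulliCharFun]
  nlinarith [mul_one_sub_nonneg p, Real.cos_le_one x]

lemma norm_bernoulliCharFun_le_exp (p : unitInterval) {x : ℝ} (hx : |x| ≤ 1) :
    ‖bernoulliCharFun p x‖ ≤ Real.exp (-(p * (1 - p) * x ^ 2) / 5) := by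
  have hcos : x ^ 2 / 5 ≤ 1 - Real.cos x := by
    have hpi : (1 : ℝ) / 5 ≤ 2 / Real.pi ^ 2 := by
      rw [div_le_div_iff₀ (by norm_num) (by positivity)]
      nlinarith [Real.pi_gt_three, Real.pi_lt_d2]
    linarith [mul_le_mul_of_nonneg_right hpi (sq_nonneg x),
      Real.cos_le_one_sub_mul_cos_sq (x := x) (by linarith [Real.pi_gt_three])]
  refine (sq_le_sq₀ (norm_nonneg _) (Real.exp_pos _).le).1 ?_
  rw [sq_norm_bernoulliCharFun, ← Real.exp_nat_mul]
  refine le_trans ?_ (Real.add_one_le_exp _)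
  push_cast
  linarith [mul_le_mul_of_nonneg_left hcos (mul_one_sub_nonneg p)]

/-- The exponential of the first three terms of the cumulant expansion of a centred Bernoulli
variable. -/
noncomputable def bernoulliCumulantExp (p : unitInterval) (x : ℝ) : ℂ :=
  Complex.exp (((-(p * (1 - p) * x ^ 2 / 2) : ℝ) : ℂ) -
    ((p * (1 - p) * (1 - 2 * p) * x ^ 3 / 6 : ℝ) : ℂ) * Complex.I)

lemma norm_exp_ofReal_sub_ofReal_mul_I (x y : ℝ) :
    ‖Complex.exp ((x : ℂ) - (y : ℂ) * Complex.I)‖ = Real.exp x := by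
  simp [Complex.norm_exp]

lemma norm_bernoulliCumulantExp_le_one (p : unitInterval) (x : ℝ) :
    ‖bernoulliCumulantExp p x‖ ≤ 1 := by
  rw [bernoulliCumulantExp, norm_exp_ofReal_sub_ofReal_mul_I, Real.exp_le_one_iff]
  linarith [mul_nonneg (mul_one_sub_nonneg p) (sq_nonneg x)]

lemma norm_exp_mul_I_sub_le {y : ℝ} (hy : |y| ≤ 1) :
    ‖Complex.exp ((y : ℂ) * Complex.I) - (1 + y * Complex.I - y ^ 2 / 2 -
      y ^ 3 / 6 * Complex.I)‖ ≤ y ^ 4 / 10 := by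
  have hnorm : ‖(y : ℂ) * Complex.I‖ = |y| := by simp
  have hbound := Complex.exp_bound (hnorm.trans_le hy) (n := 4) (by norm_num)
  have htaylor : ∑ m ∈ range 4, ((y : ℂ) * Complex.I) ^ m / (m.factorial : ℂ) =
      1 + y * Complex.I - y ^ 2 / 2 - y ^ 3 / 6 * Complex.I := by
    simp only [sum_range_succ, sum_range_zero, Nat.factorial, mul_pow, Complex.I_sq,
      Complex.I_pow_three]
    push_cast
    ring
  rw [htaylor, hnorm, Even.pow_abs (by decide)] at hbound
  refine hbound.trans ?_
  norm_num [Nat.factorial]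
  linarith [pow_nonneg (sq_nonneg y) 2]

lemma norm_bernoulliCumulantExp_sub_le (p : unitInterval) {x : ℝ} (hx : |x| ≤ 1) :
    ‖bernoulliCumulantExp p x - (1 + (((-(p * (1 - p) * x ^ 2 / 2) : ℝ) : ℂ) -
      ((p * (1 - p) * (1 - 2 * p) * x ^ 3 / 6 : ℝ) : ℂ) * Complex.I))‖ ≤ p * x ^ 4 / 2 := by
  obtain ⟨p, hp0, hp1⟩ := p
  dsimp only
  set z : ℂ := ((-(p * (1 - p) * x ^ 2 / 2) : ℝ) : ℂ) -
    ((p * (1 - p) * (1 - 2 * p) * x ^ 3 / 6 : ℝ) : ℂ) * Complex.I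
  have hq : 0 ≤ 1 - p := by linarith
  have hsecond : |(-(p * (1 - p) * x ^ 2 / 2))| ≤ p * x ^ 2 / 2 := by
    rw [abs_neg, abs_of_nonneg (by positivity)]
    gcongr
    nlinarith
  have hthird : |p * (1 - p) * (1 - 2 * p) * x ^ 3 / 6| ≤ p * x ^ 2 / 6 := by
    have hcubic : |x ^ 3| ≤ x ^ 2 := by
      rw [abs_pow, ← sq_abs x]
      exact pow_le_pow_of_le_one (abs_nonneg _) hx (by norm_num)
    have hskew : |1 - 2 * p| ≤ 1 := abs_le.2 ⟨by linarith, by linarith⟩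
    have hpqr : |p * (1 - p) * (1 - 2 * p)| ≤ p := by
      rw [abs_mul, abs_of_nonneg (mul_nonneg hp0 hq)]
      calc p * (1 - p) * |1 - 2 * p| ≤ p * 1 * 1 := by
            gcongr
            linarith
        _ = p := by ring
    rw [abs_div, abs_mul, abs_of_pos (by norm_num : (0 : ℝ) < 6)]
    gcongr
  have hz : ‖z‖ ≤ 2 / 3 * (p * x ^ 2) := by
    refine (norm_sub_le _ _).trans ?_
    rw [norm_mul, Complex.norm_I, mul_one, Complex.norm_real, Complex.norm_real,
      Real.norm_eq_abs, Real.norm_eq_abs]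
    linarith
  have hx2 : x ^ 2 ≤ 1 := (sq_le_one_iff_abs_le_one x).2 hx
  have hpx : p * x ^ 2 ≤ 1 := mul_le_one₀ hp1 (sq_nonneg x) hx2
  rw [bernoulliCumulantExp, ← sub_sub]
  calc _ ≤ ‖z‖ ^ 2 := Complex.norm_exp_sub_one_sub_id_le (by linarith)
    _ ≤ (2 / 3 * (p * x ^ 2)) ^ 2 := by gcongr
    _ = 4 / 9 * (p * p) * x ^ 4 := by ring
    _ ≤ 4 / 9 * (p * 1) * x ^ 4 := by gcongr
    _ ≤ p * x ^ 4 / 2 := by linarith [mul_nonneg hp0 (pow_nonneg (sq_nonneg x) 2)]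

lemma norm_bernoulliCharFun_sub_le (p : unitInterval) {x : ℝ} (hx : |x| ≤ 1) :
    ‖bernoulliCharFun p x - bernoulliCumulantExp p x‖ ≤ p * x ^ 4 := by
  have hcumulant := norm_bernoulliCumulantExp_sub_le p hx
  obtain ⟨p, hp0, hp1⟩ := p
  dsimp only at hcumulant ⊢
  have hq : 0 ≤ 1 - p := by linarith
  have hsuccess := norm_exp_mul_I_sub_le (y := (1 - p) * x) (by
    rw [abs_mul, abs_of_nonneg hq]
    exact mul_le_one₀ (by linarith) (abs_nonneg x) hx)
  have hfailure := norm_exp_mul_I_sub_le (y := -(p * x)) (by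
    rw [abs_neg, abs_mul, abs_of_nonneg hp0]
    exact mul_le_one₀ hp1 (abs_nonneg x) hx)
  have hcoeff : p * (1 - p) ^ 4 / 10 + (1 - p) * p ^ 4 / 10 ≤ p / 2 := by
    have hq4 : (1 - p) ^ 4 ≤ 1 := pow_le_one₀ hq (by linarith)
    have hp3 : (1 - p) * p ^ 3 ≤ 1 :=
      mul_le_one₀ (by linarith) (by positivity) (pow_le_one₀ hp0 hp1)
    nlinarith [mul_le_mul_of_nonneg_left hq4 hp0, mul_le_mul_of_nonneg_left hp3 hp0]
  have hsplit : bernoulliCharFun ⟨p, hp0, hp1⟩ x - bernoulliCumulantExp ⟨p, hp0, hp1⟩ x =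
      (p : ℂ) * (Complex.exp ((((1 - p) * x : ℝ) : ℂ) * Complex.I) -
        (1 + (((1 - p) * x : ℝ) : ℂ) * Complex.I - (((1 - p) * x : ℝ) : ℂ) ^ 2 / 2 -
          (((1 - p) * x : ℝ) : ℂ) ^ 3 / 6 * Complex.I)) +
      ((1 - p : ℝ) : ℂ) * (Complex.exp (((-(p * x) : ℝ) : ℂ) * Complex.I) -
        (1 + ((-(p * x) : ℝ) : ℂ) * Complex.I - ((-(p * x) : ℝ) : ℂ) ^ 2 / 2 -
          ((-(p * x) : ℝ) : ℂ) ^ 3 / 6 * Complex.I)) -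
      (bernoulliCumulantExp ⟨p, hp0, hp1⟩ x - (1 + (((-(p * (1 - p) * x ^ 2 / 2) : ℝ) : ℂ) -
        ((p * (1 - p) * (1 - 2 * p) * x ^ 3 / 6 : ℝ) : ℂ) * Complex.I))) := by
    rw [bernoulliCharFun]
    push_cast
    ring
  rw [hsplit]
  refine (norm_sub_le _ _).trans ((add_le_add_left (norm_add_le _ _) _).trans ?_)
  rw [norm_mul, norm_mul, Complex.norm_of_nonneg hp0, Complex.norm_of_nonneg hq]
  calc _ ≤ p * (((1 - p) * x) ^ 4 / 10) + (1 - p) * ((-(p * x)) ^ 4 / 10) + p * x ^ 4 / 2 := by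
        gcongr
    _ = (p * (1 - p) ^ 4 / 10 + (1 - p) * p ^ 4 / 10) * x ^ 4 + p * x ^ 4 / 2 := by ring
    _ ≤ p / 2 * x ^ 4 + p * x ^ 4 / 2 := by gcongr
    _ = p * x ^ 4 := by ring

lemma norm_prod_sub_prod_le {ι : Type*} {s : Finset ι} {a b : ι → ℂ}
    (ha : ∀ i ∈ s, ‖a i‖ ≤ 1) (hb : ∀ i ∈ s, ‖b i‖ ≤ 1) :
    ‖∏ i ∈ s, a i - ∏ i ∈ s, b i‖ ≤ ∑ i ∈ s, ‖a i - b i‖ := by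
  induction s using Finset.cons_induction with
  | empty => simp
  | cons i s hi ih =>
    rw [forall_mem_cons] at ha hb
    rw [prod_cons, prod_cons, sum_cons]
    calc ‖a i * ∏ j ∈ s, a j - b i * ∏ j ∈ s, b j‖
        = ‖(a i - b i) * ∏ j ∈ s, a j + b i * (∏ j ∈ s, a j - ∏ j ∈ s, b j)‖ := by
          ring_nf
      _ ≤ ‖a i - b i‖ * ‖∏ j ∈ s, a j‖ + ‖b i‖ * ‖∏ j ∈ s, a j - ∏ j ∈ s, b j‖ := by
          rw [← norm_mul, ← norm_mul]
          exact norm_add_le _ _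
      _ ≤ ‖a i - b i‖ * 1 + 1 * ∑ j ∈ s, ‖a j - b j‖ := by
          gcongr
          · rw [norm_prod]
            exact prod_le_one (fun j _ => norm_nonneg _) ha.2
          · exact hb.1
          · exact ih ha.2 hb.2
      _ = _ := by rw [mul_one, one_mul]

lemma norm_exp_sub_exp_le {z w : ℂ} (hz : z.re ≤ 0) (hw : w.re ≤ 0) :
    ‖Complex.exp z - Complex.exp w‖ ≤ ‖z - w‖ := by
  have hbound := (convex_halfSpace_re_le 0).norm_image_sub_le_of_norm_hasDerivWithin_le
    (fun y _ => (Complex.hasDerivAt_exp y).hasDerivWithinAt)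
    (fun y hy => by rwa [Complex.norm_exp, Real.exp_le_one_iff]) hw hz
  rwa [one_mul] at hbound

lemma norm_exp_ofReal_sub_mul_I_sub_le {a a' : ℝ} (ha : a ≤ 0) (ha' : a' ≤ 0) (b b' : ℝ) :
    ‖Complex.exp ((a : ℂ) - (b : ℂ) * Complex.I) - Complex.exp ((a' : ℂ) - (b' : ℂ) * Complex.I)‖ ≤
      |a - a'| + |b - b'| := by
  refine (norm_exp_sub_exp_le (by simpa) (by simpa)).trans ?_
  calc _ = ‖((a - a' : ℝ) : ℂ) - ((b - b' : ℝ) : ℂ) * Complex.I‖ := by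
        push_cast
        ring_nf
    _ ≤ |a - a'| + |b - b'| := by
        refine (norm_sub_le _ _).trans_eq ?_
        rw [norm_mul, Complex.norm_I, mul_one, Complex.norm_real, Complex.norm_real,
          Real.norm_eq_abs, Real.norm_eq_abs]

/-- The characteristic function of the centred sum of the weights `a m` over the marks `m < n`. -/
noncomputable def weightedCharFun (p : ℕ → unitInterval) (a : ℕ → ℝ) (n : ℕ) (θ : ℝ) : ℂ :=
  ∏ m ∈ range n, bernoulliCharFun (p m) (θ * a m)

/-- The variance of the sum of the weights `a m` over the marks `m < n`. -/
noncomputable def weightedVar (p : ℕ → unitInterval) (a : ℕ → ℝ) (n : ℕ) : ℝ :=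
  ∑ m ∈ range n, p m * (1 - p m) * a m ^ 2

/-- The third cumulant of the sum of the weights `a m` over the marks `m < n`. -/
noncomputable def weightedThirdCumulant (p : ℕ → unitInterval) (a : ℕ → ℝ) (n : ℕ) : ℝ :=
  ∑ m ∈ range n, p m * (1 - p m) * (1 - 2 * p m) * a m ^ 3

lemma markMean_sum_mem (p : ℕ → unitInterval) (a : ℕ → ℝ) (n : ℕ) :
    markMean p n (fun A => ∑ m ∈ A, a m) = ∑ m ∈ range n, p m * a m := by
  induction n with
  | zero => simp
  | succ n ih =>
    have hmarked : markMean p n (fun A => ∑ m ∈ insert n A, a m) =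
        a n + markMean p n fun A => ∑ m ∈ A, a m := by
      rw [markMean_congr fun A hA => sum_insert fun hn => by simpa using hA hn, markMean_add,
        markMean_const]
    rw [markMean_succ, hmarked, sum_range_succ, ← ih, smul_eq_mul, smul_eq_mul]
    ring

lemma markMean_exp_eq_weightedCharFun (p : ℕ → unitInterval) (a : ℕ → ℝ) (n : ℕ) (θ : ℝ) :
    markMean p n (fun A => Complex.exp
      ((θ * (∑ m ∈ A, a m - ∑ m ∈ range n, p m * a m) : ℝ) * Complex.I)) =
      weightedCharFun p a n θ := by
  induction n with
  | zero => simp [weightedCharFun]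
  | succ n ih =>
    have hunmarked : markMean p n (fun A => Complex.exp ((θ * (∑ m ∈ A, a m -
        (∑ m ∈ range n, p m * a m + p n * a n)) : ℝ) * Complex.I)) =
        Complex.exp ((-(p n * (θ * a n)) : ℝ) * Complex.I) * weightedCharFun p a n θ := by
      rw [← ih, ← markMean_const_mul]
      refine markMean_congr fun A _ => ?_
      rw [← Complex.exp_add]
      push_cast
      ring_nf
    have hmarked : markMean p n (fun A => Complex.exp ((θ * (∑ m ∈ insert n A, a m -
        (∑ m ∈ range n, p m * a m + p n * a n)) : ℝ) * Complex.I)) =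
        Complex.exp (((1 - p n) * (θ * a n) : ℝ) * Complex.I) * weightedCharFun p a n θ := by
      rw [← ih, ← markMean_const_mul]
      refine markMean_congr fun A hA => ?_
      rw [sum_insert fun hn => by simpa using hA hn, ← Complex.exp_add]
      push_cast
      ring_nf
    have hproduct : weightedCharFun p a (n + 1) θ =
        weightedCharFun p a n θ * bernoulliCharFun (p n) (θ * a n) := prod_range_succ _ _
    rw [markMean_succ, sum_range_succ, hunmarked, hmarked, hproduct, bernoulliCharFun,
      Complex.real_smul, Complex.real_smul]
    push_cast
    ring

lemma norm_weightedCharFun_le_one (p : ℕ → unitInterval) (a : ℕ → ℝ) (n : ℕ) (θ : ℝ) :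
    ‖weightedCharFun p a n θ‖ ≤ 1 := by
  rw [weightedCharFun, norm_prod]
  exact prod_le_one (fun m _ => norm_nonneg _) fun m _ => norm_bernoulliCharFun_le_one _ _

lemma norm_weightedCharFun_anti (p : ℕ → unitInterval) (a : ℕ → ℝ) (θ : ℝ) :
    Antitone fun n => ‖weightedCharFun p a n θ‖ := by
  intro N n h
  simp only [weightedCharFun, norm_prod]
  exact prod_anti_set_of_le_one (fun m => norm_nonneg _)
    (fun m => norm_bernoulliCharFun_le_one _ _) (range_subset_range.2 h)

lemma norm_weightedCharFun_le_exp (p : ℕ → unitInterval) {a : ℕ → ℝ} {n : ℕ} {θ : ℝ}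
    (hθ : ∀ m ∈ range n, |θ * a m| ≤ 1) :
    ‖weightedCharFun p a n θ‖ ≤ Real.exp (-(θ ^ 2 * weightedVar p a n) / 5) := by
  rw [weightedCharFun, norm_prod]
  refine (prod_le_prod (fun m _ => norm_nonneg _) fun m hm =>
    norm_bernoulliCharFun_le_exp (p m) (hθ m hm)).trans_eq ?_
  rw [← Real.exp_sum, weightedVar, mul_sum, ← sum_neg_distrib, sum_div]
  congr! 3
  ring

lemma norm_weightedCharFun_sub_le (p : ℕ → unitInterval) {a : ℕ → ℝ} {n : ℕ} {θ : ℝ}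
    (hθ : ∀ m ∈ range n, |θ * a m| ≤ 1) :
    ‖weightedCharFun p a n θ - Complex.exp (((-(θ ^ 2 * weightedVar p a n / 2) : ℝ) : ℂ) -
      ((θ ^ 3 * weightedThirdCumulant p a n / 6 : ℝ) : ℂ) * Complex.I)‖ ≤
      θ ^ 4 * ∑ m ∈ range n, p m * a m ^ 4 := by
  have hcumulant : Complex.exp (((-(θ ^ 2 * weightedVar p a n / 2) : ℝ) : ℂ) -
      ((θ ^ 3 * weightedThirdCumulant p a n / 6 : ℝ) : ℂ) * Complex.I) =
      ∏ m ∈ range n, bernoulliCumulantExp (p m) (θ * a m) := by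
    simp only [bernoulliCumulantExp]
    rw [← Complex.exp_sum, sum_sub_distrib, ← sum_mul, ← Complex.ofReal_sum,
      ← Complex.ofReal_sum, weightedVar, weightedThirdCumulant, mul_sum, mul_sum, sum_div,
      sum_div, ← sum_neg_distrib]
    congr! 6 <;> ring
  rw [hcumulant, weightedCharFun]
  refine (norm_prod_sub_prod_le (fun m _ => norm_bernoulliCharFun_le_one _ _)
    (fun m _ => norm_bernoulliCumulantExp_le_one _ _)).trans ?_
  rw [mul_sum]
  refine sum_le_sum fun m hm => (norm_bernoulliCharFun_sub_le _ (hθ m hm)).trans_eq ?_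
  ring

/-! ### Cumulants of the sum of the logarithms of the marks -/

lemma mul_pow_mul_sub_le {a b : ℝ} (ha : 0 ≤ a) (hab : a ≤ b) (k : ℕ) :
    (k + 1) * a ^ k * (b - a) ≤ b ^ (k + 1) - a ^ (k + 1) := by
  induction k with
  | zero => simp
  | succ k ih =>
    have hpow : a ^ (k + 1) ≤ b ^ (k + 1) := pow_le_pow_left₀ ha hab _
    push_cast
    calc _ = a * ((k + 1) * a ^ k * (b - a)) + a ^ (k + 1) * (b - a) := by ring
      _ ≤ a * (b ^ (k + 1) - a ^ (k + 1)) + b ^ (k + 1) * (b - a) := by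
          gcongr
      _ = _ := by ring

lemma sub_pow_le_mul_pow_mul {a b : ℝ} (ha : 0 ≤ a) (hab : a ≤ b) (k : ℕ) :
    b ^ (k + 1) - a ^ (k + 1) ≤ (k + 1) * b ^ k * (b - a) := by
  have hb : 0 ≤ b := ha.trans hab
  have hpow := abs_pow_sub_pow_le b a (k + 1)
  rw [abs_of_nonneg ha, abs_of_nonneg hb, max_eq_left hab, abs_of_nonneg (sub_nonneg.2 hab),
    Nat.add_sub_cancel] at hpow
  calc _ ≤ (b - a) * ((k + 1 : ℕ) : ℝ) * b ^ k := (le_abs_self _).trans hpow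
    _ = _ := by
      push_cast
      ring

lemma log_natCast_mono {m n : ℕ} (h : m ≤ n) : Real.log m ≤ Real.log n := by
  rcases Nat.eq_zero_or_pos m with rfl | hm
  · simpa using Real.log_natCast_nonneg n
  · exact Real.log_le_log (by exact_mod_cast hm) (by exact_mod_cast h)

lemma inv_succ_le_log_sub_log {m : ℕ} (hm : m ≠ 0) :
    ((m : ℝ) + 1)⁻¹ ≤ Real.log ((m : ℝ) + 1) - Real.log m := by
  have hm0 : (m : ℝ) ≠ 0 := by exact_mod_cast hm
  have hm1 : (m : ℝ) + 1 ≠ 0 := by positivity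
  rw [← Real.log_div hm1 hm0]
  refine le_trans (le_of_eq ?_) (Real.one_sub_inv_le_log_of_pos (by positivity))
  field_simp
  ring

lemma log_sub_log_le_inv {m : ℕ} (hm : m ≠ 0) :
    Real.log ((m : ℝ) + 1) - Real.log m ≤ (m : ℝ)⁻¹ := by
  have hm0 : (m : ℝ) ≠ 0 := by exact_mod_cast hm
  rw [← Real.log_div (by positivity) hm0]
  refine (Real.log_le_sub_one_of_pos (by positivity)).trans_eq ?_
  field_simp
  ring

lemma sum_log_pow_div_le {k : ℕ} (hk : k ≠ 0) (n : ℕ) :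
    ∑ m ∈ range n, Real.log m ^ k / (m + 1) ≤ Real.log n ^ (k + 1) / (k + 1) := by
  induction n with
  | zero => simp
  | succ m ih =>
    rcases eq_or_ne m 0 with rfl | hm
    · simp [hk]
    have hlog : 0 ≤ Real.log m := Real.log_natCast_nonneg m
    have hstep : Real.log m ^ k / (m + 1) ≤
        (Real.log ((m : ℝ) + 1) ^ (k + 1) - Real.log m ^ (k + 1)) / (k + 1) := by
      rw [le_div_iff₀ (by positivity)]
      calc Real.log m ^ k / (m + 1) * (k + 1)
          = (k + 1) * Real.log m ^ k * ((m : ℝ) + 1)⁻¹ := by ring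
        _ ≤ (k + 1) * Real.log m ^ k * (Real.log ((m : ℝ) + 1) - Real.log m) := by
            gcongr
            exact inv_succ_le_log_sub_log hm
        _ ≤ _ := mul_pow_mul_sub_le hlog (by simpa using log_natCast_mono m.le_succ) k
    rw [sum_range_succ, Nat.cast_succ]
    rw [sub_div] at hstep
    linarith

lemma log_pow_succ_sub_le {k m : ℕ} (hm : m ≠ 0) :
    Real.log ((m : ℝ) + 1) ^ (k + 1) / (k + 1) - Real.log m ^ (k + 1) / (k + 1) ≤
      Real.log m ^ k / (m + 1) + ((2 - ((m : ℝ) + 1)⁻¹) * Real.log ((m : ℝ) + 1) ^ k -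
        (2 - (m : ℝ)⁻¹) * Real.log m ^ k) := by
  have hm1 : (1 : ℝ) ≤ m := by exact_mod_cast Nat.one_le_iff_ne_zero.2 hm
  have hlog : 0 ≤ Real.log m := Real.log_natCast_nonneg m
  have hmono : Real.log m ≤ Real.log ((m : ℝ) + 1) := by simpa using log_natCast_mono m.le_succ
  have hincr := log_sub_log_le_inv hm
  set a := Real.log m
  set b := Real.log ((m : ℝ) + 1)
  have hpow : a ^ k ≤ b ^ k := pow_le_pow_left₀ hlog hmono k
  have hstep : b ^ (k + 1) / (k + 1) - a ^ (k + 1) / (k + 1) ≤ b ^ k * (b - a) := by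
    rw [← sub_div, div_le_iff₀ (by positivity)]
    exact (sub_pow_le_mul_pow_mul hlog hmono k).trans_eq (by ring)
  have hfirst : a ^ k * (b - a) ≤ a ^ k * (m : ℝ)⁻¹ := by gcongr
  have hsecond : (b ^ k - a ^ k) * (b - a) ≤ (b ^ k - a ^ k) * (2 - ((m : ℝ) + 1)⁻¹) := by
    refine mul_le_mul_of_nonneg_left ?_ (sub_nonneg.2 hpow)
    linarith [inv_le_one_of_one_le₀ hm1,
      inv_le_one_of_one_le₀ (show (1 : ℝ) ≤ m + 1 by linarith)]
  rw [div_eq_mul_inv (a ^ k)]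
  linarith

lemma le_sum_log_pow_div {k : ℕ} (hk : k ≠ 0) (n : ℕ) :
    Real.log n ^ (k + 1) / (k + 1) - 2 * Real.log n ^ k ≤
      ∑ m ∈ range n, Real.log m ^ k / (m + 1) := by
  -- The term `1 / n` absorbs the telescoping differences `1 / m - 1 / (m + 1)`.
  have hsharp : Real.log n ^ (k + 1) / (k + 1) - (2 - (n : ℝ)⁻¹) * Real.log n ^ k ≤
      ∑ m ∈ range n, Real.log m ^ k / (m + 1) := by
    induction n with
    | zero => simp [hk]
    | succ m ih =>
      rcases eq_or_ne m 0 with rfl | hm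
      · simp [hk]
      rw [sum_range_succ, Nat.cast_succ]
      linarith [log_pow_succ_sub_le (k := k) hm]
  refine le_trans ?_ hsharp
  gcongr
  exact sub_le_self _ (by positivity)

lemma sum_inv_succ_sq_le (n : ℕ) : ∑ m ∈ range n, ((m : ℝ) + 1)⁻¹ ^ 2 ≤ 2 := by
  have hshift : ∑ m ∈ range n, ((m : ℝ) + 1)⁻¹ ^ 2 = ∑ m ∈ Ioo 0 (n + 1), ((m : ℝ) ^ 2)⁻¹ := by
    rw [show Ioo 0 (n + 1) = Ico (0 + 1) (n + 1) from rfl, range_eq_Ico,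
      ← sum_Ico_add' (fun m : ℕ => ((m : ℝ) ^ 2)⁻¹)]
    simp
  rw [hshift]
  exact (sum_Ioo_inv_sq_le 0 (n + 1)).trans_eq (by norm_num)

lemma sum_inv_succ_sq_mul_log_pow_le (k n : ℕ) :
    ∑ m ∈ range n, ((m : ℝ) + 1)⁻¹ ^ 2 * Real.log m ^ k ≤ 2 * Real.log n ^ k :=
  calc _ ≤ ∑ m ∈ range n, ((m : ℝ) + 1)⁻¹ ^ 2 * Real.log n ^ k := by
        refine sum_le_sum fun m hm => ?_
        have hlog := log_natCast_mono (mem_range.1 hm).le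
        gcongr
    _ ≤ 2 * Real.log n ^ k := by
        rw [← sum_mul]
        exact mul_le_mul_of_nonneg_right (sum_inv_succ_sq_le n)
          (pow_nonneg (Real.log_natCast_nonneg n) k)

/-- The characteristic function of the centred sum of the logarithms of the Feller marks. -/
local notation "logCharFun" => weightedCharFun fellerProb fun m => Real.log m

/-- The variance of the sum of the logarithms of the Feller marks. -/
local notation "logVar" => weightedVar fellerProb fun m => Real.log m

/-- The third cumulant of the sum of the logarithms of the Feller marks. -/
local notation "logThirdCumulant" => weightedThirdCumulant fellerProb fun m => Real.log m

lemma logVar_nonneg (n : ℕ) : 0 ≤ logVar n :=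
  sum_nonneg fun _ _ => mul_nonneg (mul_one_sub_nonneg _) (sq_nonneg _)

lemma logVar_eq (n : ℕ) :
    logVar n = ∑ m ∈ range n, Real.log m ^ 2 / (m + 1) -
      ∑ m ∈ range n, ((m : ℝ) + 1)⁻¹ ^ 2 * Real.log m ^ 2 := by
  rw [weightedVar, ← sum_sub_distrib]
  refine sum_congr rfl fun m _ => ?_
  rw [coe_fellerProb]
  ring

lemma logVar_le (n : ℕ) : logVar n ≤ Real.log n ^ 3 / 3 := by
  have hsum := sum_log_pow_div_le two_ne_zero n
  have hsq : 0 ≤ ∑ m ∈ range n, ((m : ℝ) + 1)⁻¹ ^ 2 * Real.log m ^ 2 :=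
    sum_nonneg fun m _ => by positivity
  norm_num at hsum
  linarith [logVar_eq n]

lemma le_logVar (n : ℕ) : Real.log n ^ 3 / 3 - 4 * Real.log n ^ 2 ≤ logVar n := by
  have hsum := le_sum_log_pow_div two_ne_zero n
  norm_num at hsum
  linarith [logVar_eq n, sum_inv_succ_sq_mul_log_pow_le 2 n]

lemma logThirdCumulant_le (n : ℕ) : logThirdCumulant n ≤ Real.log n ^ 4 / 4 := by
  have hsum := sum_log_pow_div_le three_ne_zero n
  norm_num at hsum
  refine le_trans (sum_le_sum fun m _ => ?_) hsum
  rw [div_eq_inv_mul, ← one_div, ← coe_fellerProb]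
  obtain ⟨h0, h1⟩ := (fellerProb m).2
  refine mul_le_mul_of_nonneg_right ?_ (pow_nonneg (Real.log_natCast_nonneg m) 3)
  nlinarith [mul_nonneg h0 h0, mul_nonneg (mul_nonneg h0 h0) (sub_nonneg.2 h1)]

lemma le_logThirdCumulant (n : ℕ) :
    Real.log n ^ 4 / 4 - 8 * Real.log n ^ 3 ≤ logThirdCumulant n := by
  have hsum := le_sum_log_pow_div three_ne_zero n
  norm_num at hsum
  suffices ∑ m ∈ range n, Real.log m ^ 3 / (m + 1) -
      3 * ∑ m ∈ range n, ((m : ℝ) + 1)⁻¹ ^ 2 * Real.log m ^ 3 ≤ logThirdCumulant n by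
    linarith [sum_inv_succ_sq_mul_log_pow_le 3 n]
  rw [mul_sum, ← sum_sub_distrib]
  refine sum_le_sum fun m _ => ?_
  rw [div_eq_inv_mul, ← one_div, ← coe_fellerProb, ← mul_assoc, ← sub_mul]
  have h0 := (fellerProb m).2.1
  refine mul_le_mul_of_nonneg_right ?_ (pow_nonneg (Real.log_natCast_nonneg m) 3)
  linarith [pow_nonneg h0 3, show (fellerProb m : ℝ) * (1 - fellerProb m) *
    (1 - 2 * fellerProb m) = fellerProb m - 3 * (fellerProb m : ℝ) ^ 2 +
      2 * (fellerProb m : ℝ) ^ 3 by ring]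

lemma abs_mul_log_le_one {θ ℓ : ℝ} {n : ℕ} (hθ : |θ| * ℓ ≤ 1) (hn : Real.log n ≤ ℓ) :
    ∀ m ∈ range n, |θ * Real.log m| ≤ 1 := by
  intro m hm
  rw [abs_mul, abs_of_nonneg (Real.log_natCast_nonneg m)]
  refine le_trans ?_ hθ
  gcongr
  exact (log_natCast_mono (mem_range.1 hm).le).trans hn

lemma log_floor_exp_mem_Icc {ℓ : ℝ} (hℓ : 0 ≤ ℓ) :
    Real.log ⌊Real.exp ℓ⌋₊ ∈ Set.Icc (ℓ - 1) ℓ := by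
  have hone : 1 ≤ ⌊Real.exp ℓ⌋₊ := (Nat.one_le_floor_iff _).2 (Real.one_le_exp hℓ)
  have hone' : (1 : ℝ) ≤ ⌊Real.exp ℓ⌋₊ := by exact_mod_cast hone
  have hpos : (0 : ℝ) < ⌊Real.exp ℓ⌋₊ := by linarith
  refine ⟨?_, (Real.log_le_iff_le_exp hpos).2 (Nat.floor_le (Real.exp_pos ℓ).le)⟩
  rw [Real.le_log_iff_exp_le hpos, Real.exp_sub, div_le_iff₀ (Real.exp_pos _)]
  nlinarith [Nat.lt_floor_add_one (Real.exp ℓ), Real.add_one_le_exp (1 : ℝ)]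

lemma norm_logCharFun_le_exp {n : ℕ} {θ ℓ : ℝ} (hn : n ≠ 0) (hℓ : 48 ≤ ℓ) (hℓn : ℓ ≤ Real.log n)
    (hθ : |θ| * ℓ ≤ 1) : ‖logCharFun n θ‖ ≤ Real.exp (-(θ ^ 2 * ℓ ^ 3 / 240)) := by
  -- Only the marks up to `exp ℓ` are used: on them `|θ * log m| ≤ 1`.
  set N := ⌊Real.exp ℓ⌋₊
  obtain ⟨hlog, hlog'⟩ := log_floor_exp_mem_Icc (show 0 ≤ ℓ by linarith)
  have hNn : N ≤ n := by
    have hexp : Real.exp ℓ ≤ n := by rwa [← Real.le_log_iff_exp_le (by positivity)]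
    exact_mod_cast (Nat.floor_le (Real.exp_pos ℓ).le).trans hexp
  have hvar : ℓ ^ 3 / 48 ≤ logVar N :=
    calc ℓ ^ 3 / 48 = (ℓ / 2) ^ 2 * (ℓ / 12) := by ring
      _ ≤ Real.log N ^ 2 * (Real.log N / 3 - 4) := by
          gcongr <;> linarith
      _ = Real.log N ^ 3 / 3 - 4 * Real.log N ^ 2 := by ring
      _ ≤ logVar N := le_logVar N
  calc ‖logCharFun n θ‖ ≤ ‖logCharFun N θ‖ := norm_weightedCharFun_anti _ _ _ hNn
    _ ≤ Real.exp (-(θ ^ 2 * logVar N) / 5) :=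
        norm_weightedCharFun_le_exp _ (abs_mul_log_le_one hθ hlog')
    _ ≤ Real.exp (-(θ ^ 2 * ℓ ^ 3 / 240)) := by
        rw [Real.exp_le_exp]
        linarith [mul_le_mul_of_nonneg_left hvar (sq_nonneg θ)]

lemma norm_logCharFun_sub_le {n : ℕ} {θ : ℝ} (hθ : |θ| * Real.log n ≤ 1) :
    ‖logCharFun n θ - Complex.exp (((-(θ ^ 2 * logVar n / 2) : ℝ) : ℂ) -
      ((θ ^ 3 * logThirdCumulant n / 6 : ℝ) : ℂ) * Complex.I)‖ ≤
      θ ^ 4 * (Real.log n ^ 5 / 5) := by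
  have hsum := sum_log_pow_div_le four_ne_zero n
  norm_num at hsum
  refine (norm_weightedCharFun_sub_le _ (abs_mul_log_le_one hθ le_rfl)).trans ?_
  gcongr
  refine le_trans (sum_congr rfl fun m _ => ?_).le hsum
  rw [coe_fellerProb]
  ring

/-! ### Normalisation by `κ ^ 3`, where `log n = κ ^ 2` -/

lemma abs_mul_logVar_sub_le {n : ℕ} {κ : ℝ} (hκ : 0 < κ) (hn : Real.log n = κ ^ 2) (s : ℝ) :
    |(√3 * s / κ ^ 3) ^ 2 * logVar n / 2 - s ^ 2 / 2| ≤ 6 * |s| ^ 2 / κ ^ 2 := by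
  have hle := logVar_le n
  have hge := le_logVar n
  rw [hn] at hle hge
  have hsqrt : √3 ^ 2 = 3 := Real.sq_sqrt (by norm_num)
  have hdiff : (√3 * s / κ ^ 3) ^ 2 * logVar n / 2 - s ^ 2 / 2 =
      -(3 / 2 * s ^ 2 / κ ^ 6 * ((κ ^ 2) ^ 3 / 3 - logVar n)) := by
    rw [div_pow, mul_pow, hsqrt]
    field_simp
    ring
  rw [hdiff, abs_neg, abs_of_nonneg (mul_nonneg (by positivity) (sub_nonneg.2 hle)), sq_abs]
  calc _ ≤ 3 / 2 * s ^ 2 / κ ^ 6 * (4 * (κ ^ 2) ^ 2) := by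
        gcongr
        linarith
    _ = 6 * s ^ 2 / κ ^ 2 := by
        field_simp
        ring

lemma sqrt_three_le_two : √3 ≤ 2 := (Real.sqrt_le_left (by norm_num)).2 (by norm_num)

lemma abs_mul_logThirdCumulant_sub_le {n : ℕ} {κ : ℝ} (hκ : 1 ≤ κ) (hn : Real.log n = κ ^ 2)
    (s : ℝ) :
    |(√3 * s / κ ^ 3) ^ 3 * logThirdCumulant n / 6 - √3 / 8 / κ * s ^ 3| ≤
      8 * |s| ^ 3 / κ ^ 2 := by
  have hκ0 : 0 < κ := by linarith
  have hle := logThirdCumulant_le n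
  have hge := le_logThirdCumulant n
  rw [hn] at hle hge
  have hsqrt : √3 ^ 3 = 3 * √3 := by rw [pow_succ, Real.sq_sqrt (by norm_num)]
  have hdiff : (√3 * s / κ ^ 3) ^ 3 * logThirdCumulant n / 6 - √3 / 8 / κ * s ^ 3 =
      -(√3 * s ^ 3 / κ ^ 9 / 2 * ((κ ^ 2) ^ 4 / 4 - logThirdCumulant n)) := by
    rw [div_pow, mul_pow, hsqrt]
    field_simp
    ring
  rw [hdiff, abs_neg, abs_mul, abs_of_nonneg (sub_nonneg.2 hle), abs_div, abs_div, abs_mul,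
    abs_of_nonneg (Real.sqrt_nonneg 3), abs_pow, abs_of_pos (pow_pos hκ0 9),
    abs_of_pos (two_pos (α := ℝ))]
  calc _ ≤ 2 * |s| ^ 3 / κ ^ 9 / 2 * (8 * (κ ^ 2) ^ 3) := by
        gcongr
        · exact sqrt_three_le_two
        · linarith
    _ = 8 * |s| ^ 3 / κ ^ 3 := by field_simp
    _ ≤ 8 * |s| ^ 3 / κ ^ 2 := by
        gcongr
        norm_num

lemma abs_sqrt_three_mul_div {κ : ℝ} (hκ : 0 ≤ κ) (s : ℝ) :
    |√3 * s / κ ^ 3| = √3 * |s| / κ ^ 3 := by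
  rw [abs_div, abs_mul, abs_of_nonneg (Real.sqrt_nonneg 3), abs_of_nonneg (pow_nonneg hκ 3)]

lemma abs_sqrt_three_mul_div_mul_sq_le_one {κ s : ℝ} (hκ : 0 < κ) (hs : √3 * |s| ≤ κ) :
    |√3 * s / κ ^ 3| * κ ^ 2 ≤ 1 := by
  rw [abs_sqrt_three_mul_div hκ.le]
  calc √3 * |s| / κ ^ 3 * κ ^ 2 = √3 * |s| / κ := by field_simp
    _ ≤ 1 := (div_le_one hκ).2 hs

lemma norm_exp_mul_I_sub_one_sub_le (x : ℝ) :
    ‖Complex.exp (x * Complex.I) - 1 - x * Complex.I‖ ≤ 2 * x ^ 2 := by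
  have hnorm : ‖(x : ℂ) * Complex.I‖ = |x| := by simp
  rcases le_total |x| 1 with hx | hx
  · refine (Complex.norm_exp_sub_one_sub_id_le (hnorm.trans_le hx)).trans ?_
    rw [hnorm, sq_abs]
    linarith [sq_nonneg x]
  · refine (norm_sub_le _ _).trans ?_
    have hfirst := Real.norm_exp_I_mul_ofReal_sub_one_le (x := x)
    rw [mul_comm Complex.I, Real.norm_eq_abs] at hfirst
    rw [hnorm]
    nlinarith [sq_abs x]

lemma norm_exp_sub_edgeworthCharFun_le (ρ s : ℝ) :
    ‖Complex.exp (((-(s ^ 2 / 2) : ℝ) : ℂ) - ((ρ * s ^ 3 : ℝ) : ℂ) * Complex.I) -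
      edgeworthCharFun ρ s‖ ≤ 2 * ρ ^ 2 * |s| ^ 6 := by
  have hfactor : Complex.exp (((-(s ^ 2 / 2) : ℝ) : ℂ) - ((ρ * s ^ 3 : ℝ) : ℂ) * Complex.I) -
      edgeworthCharFun ρ s = (gaussianExp s : ℂ) *
        (Complex.exp ((-(ρ * s ^ 3) : ℝ) * Complex.I) - 1 -
          (-(ρ * s ^ 3) : ℝ) * Complex.I) := by
    have hexp : Complex.exp (((-(s ^ 2 / 2) : ℝ) : ℂ) - ((ρ * s ^ 3 : ℝ) : ℂ) * Complex.I) =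
        (gaussianExp s : ℂ) * Complex.exp ((-(ρ * s ^ 3) : ℝ) * Complex.I) := by
      rw [gaussianExp, neg_div, Complex.ofReal_exp, ← Complex.exp_add,
        Complex.ofReal_neg (ρ * s ^ 3), neg_mul, ← sub_eq_add_neg]
    rw [hexp, edgeworthCharFun, Complex.ofReal_neg (ρ * s ^ 3)]
    ring
  rw [hfactor, norm_mul, Complex.norm_of_nonneg (gaussianExp_pos s).le]
  calc _ ≤ 1 * (2 * (-(ρ * s ^ 3)) ^ 2) := by
        gcongr
        · exact gaussianExp_le_one s
        · exact norm_exp_mul_I_sub_one_sub_le _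
    _ = 2 * ρ ^ 2 * |s| ^ 6 := by
        rw [Even.pow_abs (by decide)]
        ring

lemma norm_logCharFun_sub_edgeworthCharFun_le {n : ℕ} {κ s : ℝ} (hκ : 1 ≤ κ)
    (hn : Real.log n = κ ^ 2) (hs : √3 * |s| ≤ κ) :
    ‖logCharFun n (√3 * s / κ ^ 3) - edgeworthCharFun (√3 / 8 / κ) s‖ ≤
      6 * |s| ^ 2 * (1 + |s|) ^ 4 / κ ^ 2 := by
  have hκ0 : 0 < κ := by linarith
  have hsqrt : √3 ^ 2 = 3 := Real.sq_sqrt (by norm_num)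
  set θ := √3 * s / κ ^ 3 with hθ
  set ρ := √3 / 8 / κ with hρ
  have hcumulants : ‖logCharFun n θ - Complex.exp (((-(θ ^ 2 * logVar n / 2) : ℝ) : ℂ) -
      ((θ ^ 3 * logThirdCumulant n / 6 : ℝ) : ℂ) * Complex.I)‖ ≤ 9 / 5 * |s| ^ 4 / κ ^ 2 := by
    refine (norm_logCharFun_sub_le (by simpa only [hn] using
      abs_sqrt_three_mul_div_mul_sq_le_one hκ0 hs)).trans_eq ?_
    rw [hθ, hn, div_pow, mul_pow, show √3 ^ 4 = (√3 ^ 2) ^ 2 by ring, hsqrt,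
      Even.pow_abs (by decide)]
    field_simp
    ring
  have hexp := norm_exp_ofReal_sub_mul_I_sub_le
    (neg_nonpos.2 (div_nonneg (mul_nonneg (sq_nonneg θ) (logVar_nonneg n)) zero_le_two))
    (neg_nonpos.2 (div_nonneg (sq_nonneg s) zero_le_two)) (θ ^ 3 * logThirdCumulant n / 6)
    (ρ * s ^ 3)
  rw [neg_sub_neg, abs_sub_comm] at hexp
  have hedgeworth := norm_exp_sub_edgeworthCharFun_le ρ s
  have hρsq : 2 * ρ ^ 2 * |s| ^ 6 = 3 / 32 * |s| ^ 6 / κ ^ 2 := by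
    rw [hρ, div_pow, div_pow, hsqrt]
    ring
  refine (norm_sub_le_norm_sub_add_norm_sub _ _ _).trans ((add_le_add hcumulants
    ((norm_sub_le_norm_sub_add_norm_sub _ _ _).trans (add_le_add (hexp.trans (add_le_add
      (abs_mul_logVar_sub_le hκ0 hn s) (abs_mul_logThirdCumulant_sub_le hκ hn s)))
        hedgeworth))).trans ?_)
  rw [hρsq, ← add_div, ← add_div, ← add_div]
  gcongr
  have ht := abs_nonneg s
  have := pow_nonneg ht 3
  nlinarith [pow_nonneg ht 4, pow_nonneg ht 5, pow_nonneg ht 6]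

lemma norm_logCharFun_le_exp_sq {n : ℕ} {κ s : ℝ} (hκ : 7 ≤ κ) (hn : Real.log n = κ ^ 2)
    (hs : √3 * |s| ≤ κ) : ‖logCharFun n (√3 * s / κ ^ 3)‖ ≤ Real.exp (-(|s| ^ 2 / 80)) := by
  have hκ0 : 0 < κ := by linarith
  have hn0 : n ≠ 0 := by
    rintro rfl
    exact (pow_pos hκ0 2).ne (by simpa using hn)
  refine (norm_logCharFun_le_exp hn0 (by nlinarith) hn.ge
    (abs_sqrt_three_mul_div_mul_sq_le_one hκ0 hs)).trans_eq ?_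
  rw [div_pow, mul_pow, Real.sq_sqrt (by norm_num), sq_abs]
  congr 2
  field_simp
  ring

lemma norm_logCharFun_le_exp_inv {n : ℕ} {κ s : ℝ} (hκ : 0 < κ) (hn : Real.log n = κ ^ 2)
    (hs : κ ≤ √3 * |s|) (hs' : 48 ≤ κ ^ 3 / (√3 * |s|)) :
    ‖logCharFun n (√3 * s / κ ^ 3)‖ ≤ Real.exp (-(κ ^ 3 / (√3 * |s|) / 240)) := by
  have hn0 : n ≠ 0 := by
    rintro rfl
    exact (pow_pos hκ 2).ne (by simpa using hn)
  have hs0 : 0 < √3 * |s| := hκ.trans_le hs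
  have hle : κ ^ 3 / (√3 * |s|) ≤ Real.log n := by
    rw [hn, div_le_iff₀ hs0, pow_succ]
    gcongr
  refine (norm_logCharFun_le_exp hn0 hs' hle ?_).trans_eq ?_
  · rw [abs_sqrt_three_mul_div hκ.le]
    exact (div_mul_div_cancel₀ (pow_ne_zero 3 hκ.ne')).trans (div_self hs0.ne') |>.le
  · rw [← sq_abs, abs_sqrt_three_mul_div hκ.le]
    congr 2
    field_simp

lemma norm_logCharFun_le_two_mul_exp {n : ℕ} {κ s : ℝ} (hκ : 22 ≤ κ) (hn : Real.log n = κ ^ 2)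
    (hs : |s| ^ 2 ≤ κ ^ 3) :
    ‖logCharFun n (√3 * s / κ ^ 3)‖ ≤ 2 * Real.exp (-(|s| / 480)) := by
  have hκ0 : 0 < κ := by linarith
  rcases le_total (√3 * |s|) κ with hcase | hcase
  · refine (norm_logCharFun_le_exp_sq (by linarith) hn hcase).trans ?_
    have htwo : Real.exp (1 / 480) ≤ 2 :=
      (Real.le_log_iff_exp_le two_pos).1 (by linarith [Real.log_two_gt_d9])
    calc Real.exp (-(|s| ^ 2 / 80)) ≤ Real.exp (1 / 480 + -(|s| / 480)) := by
          rw [Real.exp_le_exp]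
          nlinarith [sq_nonneg (12 * |s| - 1)]
      _ ≤ 2 * Real.exp (-(|s| / 480)) := by
          rw [Real.exp_add]
          gcongr
  · have hs0 : 0 < √3 * |s| := hκ0.trans_le hcase
    have hs1 : 0 < |s| := pos_of_mul_pos_right hs0 (Real.sqrt_nonneg 3)
    have hlower : |s| / 2 ≤ κ ^ 3 / (√3 * |s|) := by
      rw [le_div_iff₀ hs0]
      calc |s| / 2 * (√3 * |s|) ≤ |s| / 2 * (2 * |s|) := by
            gcongr
            exact sqrt_three_le_two
        _ = |s| ^ 2 := by ring
        _ ≤ κ ^ 3 := hs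
    have hlarge : 48 ≤ κ ^ 3 / (√3 * |s|) := by
      have hsq : (96 * |s|) ^ 2 ≤ (κ ^ 3) ^ 2 :=
        calc (96 * |s|) ^ 2 = 9216 * |s| ^ 2 := by ring
          _ ≤ 22 ^ 3 * κ ^ 3 := by
              gcongr
              norm_num
          _ ≤ κ ^ 3 * κ ^ 3 := by gcongr
          _ = (κ ^ 3) ^ 2 := (sq _).symm
      rw [le_div_iff₀ hs0]
      linarith [le_of_sq_le_sq hsq (pow_pos hκ0 3).le,
        mul_le_mul_of_nonneg_right sqrt_three_le_two hs1.le]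
    refine (norm_logCharFun_le_exp_inv hκ0 hn hcase hlarge).trans ?_
    calc Real.exp (-(κ ^ 3 / (√3 * |s|) / 240)) ≤ Real.exp (-(|s| / 480)) := by
          rw [Real.exp_le_exp]
          linarith
      _ ≤ 2 * Real.exp (-(|s| / 480)) := le_mul_of_one_le_left (Real.exp_pos _).le one_le_two

/-! ### The Edgeworth expansion for the sum of the logarithms of the marks -/

lemma exists_pow_mul_exp_neg_le (k : ℕ) {c : ℝ} (hc : 0 < c) :
    ∃ C, ∀ t, 0 ≤ t → (1 + t) ^ k * Real.exp (-(c * t)) ≤ C := by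
  refine ⟨k.factorial / c ^ k * Real.exp c, fun t ht => ?_⟩
  have hexp := Real.pow_div_factorial_le_exp (c * (1 + t)) (by positivity) k
  rw [div_le_iff₀ (by positivity), mul_pow] at hexp
  rw [div_mul_eq_mul_div, le_div_iff₀ (pow_pos hc k), Real.exp_neg, mul_right_comm,
    ← div_eq_mul_inv, div_le_iff₀ (Real.exp_pos _), mul_assoc, ← Real.exp_add]
  calc (1 + t) ^ k * c ^ k = c ^ k * (1 + t) ^ k := mul_comm _ _
    _ ≤ Real.exp (c * (1 + t)) * k.factorial := hexp
    _ = k.factorial * Real.exp (c + c * t) := by rw [mul_comm, mul_add, mul_one]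

lemma gaussianExp_le_two_mul_exp (y : ℝ) : gaussianExp y ≤ 2 * Real.exp (-(1 * |y|)) := by
  have htwo : Real.exp (1 / 2) ≤ 2 :=
    (Real.le_log_iff_exp_le two_pos).1 (by linarith [Real.log_two_gt_d9])
  calc gaussianExp y ≤ Real.exp (1 / 2 + -(1 * |y|)) := by
        rw [gaussianExp, Real.exp_le_exp, ← sq_abs]
        linarith [sq_nonneg (|y| - 1)]
    _ ≤ 2 * Real.exp (-(1 * |y|)) := by
        rw [Real.exp_add]
        gcongr

lemma exists_pow_mul_gaussianExp_le (k : ℕ) : ∃ C, ∀ y, (1 + |y|) ^ k * gaussianExp y ≤ C := by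
  obtain ⟨C, hC⟩ := exists_pow_mul_exp_neg_le k one_pos
  refine ⟨2 * C, fun y => ?_⟩
  calc (1 + |y|) ^ k * gaussianExp y ≤ (1 + |y|) ^ k * (2 * Real.exp (-(1 * |y|))) := by
        gcongr
        exact gaussianExp_le_two_mul_exp y
    _ = 2 * ((1 + |y|) ^ k * Real.exp (-(1 * |y|))) := by ring
    _ ≤ 2 * C := by
        gcongr
        exact hC _ (abs_nonneg y)

lemma norm_edgeworthCharFun_le {ρ : ℝ} (hρ : |ρ| ≤ 1) (s : ℝ) :
    ‖edgeworthCharFun ρ s‖ ≤ (1 + |s|) ^ 3 * gaussianExp s := by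
  have hfactor : ‖1 - ((ρ * s ^ 3 : ℝ) : ℂ) * Complex.I‖ ≤ (1 + |s|) ^ 3 := by
    refine (norm_sub_le _ _).trans ?_
    rw [norm_one, norm_mul, Complex.norm_I, mul_one, Complex.norm_real, Real.norm_eq_abs, abs_mul,
      abs_pow]
    calc 1 + |ρ| * |s| ^ 3 ≤ 1 + 1 * |s| ^ 3 := by gcongr
      _ ≤ (1 + |s|) ^ 3 := by nlinarith [abs_nonneg s]
  rw [edgeworthCharFun, norm_mul, Complex.norm_of_nonneg (gaussianExp_pos s).le, mul_comm]
  exact mul_le_mul_of_nonneg_right hfactor (gaussianExp_pos s).le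

lemma exists_pow_mul_norm_edgeworthCharFun_le (k : ℕ) :
    ∃ C, ∀ ρ s : ℝ, |ρ| ≤ 1 → (1 + |s|) ^ k * ‖edgeworthCharFun ρ s‖ ≤ C := by
  obtain ⟨C, hC⟩ := exists_pow_mul_gaussianExp_le (k + 3)
  refine ⟨C, fun ρ s hρ => ?_⟩
  calc _ ≤ (1 + |s|) ^ k * ((1 + |s|) ^ 3 * gaussianExp s) := by
        gcongr
        exact norm_edgeworthCharFun_le hρ s
    _ = (1 + |s|) ^ (k + 3) * gaussianExp s := by ring
    _ ≤ C := hC s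

lemma exists_pow_mul_norm_logCharFun_le (k : ℕ) :
    ∃ C, ∀ (n : ℕ) (κ s : ℝ), 22 ≤ κ → Real.log n = κ ^ 2 → |s| ^ 2 ≤ κ ^ 3 →
      (1 + |s|) ^ k * ‖logCharFun n (√3 * s / κ ^ 3)‖ ≤ C := by
  obtain ⟨C, hC⟩ := exists_pow_mul_exp_neg_le k (c := 1 / 480) (by norm_num)
  refine ⟨2 * C, fun n κ s hκ hn hs => ?_⟩
  calc _ ≤ (1 + |s|) ^ k * (2 * Real.exp (-(|s| / 480))) := by
        gcongr
        exact norm_logCharFun_le_two_mul_exp hκ hn hs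
    _ = 2 * ((1 + |s|) ^ k * Real.exp (-(1 / 480 * |s|))) := by
        rw [one_div_mul_eq_div]
        ring
    _ ≤ 2 * C := by
        gcongr
        exact hC _ (abs_nonneg s)

lemma abs_sqrt_three_div_le_one {κ : ℝ} (hκ : 1 ≤ κ) : |√3 / 8 / κ| ≤ 1 := by
  rw [abs_of_nonneg (by positivity), div_le_one (by linarith)]
  linarith [sqrt_three_le_two]

lemma abs_gaussianExp_sub_one_le (y : ℝ) : |gaussianExp y - 1| ≤ y ^ 2 := by
  rw [abs_sub_comm, abs_of_nonneg (sub_nonneg.2 (gaussianExp_le_one y)), gaussianExp]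
  linarith [Real.add_one_le_exp (-y ^ 2 / 2), sq_nonneg y]

lemma exists_norm_gaussianExp_sub_one_mul_edgeworthCharFun_le :
    ∃ C, ∀ ρ τ s : ℝ, |ρ| ≤ 1 →
      (1 + |s|) ^ 2 * ‖((gaussianExp (τ * s) - 1 : ℝ) : ℂ) * edgeworthCharFun ρ s‖ ≤
        C * τ ^ 2 * |s| := by
  obtain ⟨C, hC⟩ := exists_pow_mul_norm_edgeworthCharFun_le 3
  refine ⟨C, fun ρ τ s hρ => ?_⟩
  rw [norm_mul, Complex.norm_real, Real.norm_eq_abs]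
  calc _ ≤ (1 + |s|) ^ 2 * ((τ * s) ^ 2 * ‖edgeworthCharFun ρ s‖) := by
        gcongr
        exact abs_gaussianExp_sub_one_le _
    _ = τ ^ 2 * |s| * (|s| * ((1 + |s|) ^ 2 * ‖edgeworthCharFun ρ s‖)) := by
        rw [mul_pow, ← sq_abs s]
        ring
    _ ≤ τ ^ 2 * |s| * ((1 + |s|) * ((1 + |s|) ^ 2 * ‖edgeworthCharFun ρ s‖)) := by
        gcongr
        linarith
    _ = τ ^ 2 * |s| * ((1 + |s|) ^ 3 * ‖edgeworthCharFun ρ s‖) := by ring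
    _ ≤ τ ^ 2 * |s| * C := by
        gcongr
        exact hC ρ s hρ
    _ = C * τ ^ 2 * |s| := by ring

lemma exists_norm_logCharFun_sub_edgeworthCharFun_le :
    ∃ C, ∀ (n : ℕ) (v s : ℝ), 3 ≤ v → Real.log n = (v ^ 3) ^ 2 → √3 * |s| ≤ v ^ 3 →
      (1 + |s|) ^ 2 * ‖logCharFun n (√3 * s / (v ^ 3) ^ 3) - edgeworthCharFun (√3 / 8 / v ^ 3) s‖ ≤
        C / v ^ 4 * |s| := by
  obtain ⟨C₁, hC₁⟩ := exists_pow_mul_norm_logCharFun_le 15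
  obtain ⟨C₂, hC₂⟩ := exists_pow_mul_norm_edgeworthCharFun_le 15
  set B := 1 + 36 * |C₁ + C₂|
  refine ⟨B, fun n v s hv hn hs => ?_⟩
  have hκ : 22 ≤ v ^ 3 := (by norm_num : (22 : ℝ) ≤ 3 ^ 3).trans (by gcongr)
  have ht := abs_nonneg s
  have hsq : |s| ^ 2 ≤ (v ^ 3) ^ 3 := by
    have hle : |s| ≤ v ^ 3 := by nlinarith [Real.one_le_sqrt.2 (by norm_num : (1 : ℝ) ≤ 3)]
    exact (pow_le_pow_left₀ ht hle 2).trans (pow_le_pow_right₀ (by linarith) (by norm_num))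
  set D := ‖logCharFun n (√3 * s / (v ^ 3) ^ 3) - edgeworthCharFun (√3 / 8 / v ^ 3) s‖
  have hsmall : D ≤ 6 * |s| ^ 2 * (1 + |s|) ^ 4 / (v ^ 3) ^ 2 :=
    norm_logCharFun_sub_edgeworthCharFun_le (by linarith) hn hs
  have hdecay : (1 + |s|) ^ 15 * D ≤ C₁ + C₂ := by
    refine (mul_le_mul_of_nonneg_left (norm_sub_le _ _) (by positivity)).trans ?_
    rw [mul_add]
    exact add_le_add (hC₁ n _ s hκ hn hsq) (hC₂ _ s (abs_sqrt_three_div_le_one (by linarith)))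
  have : 0 ≤ D := norm_nonneg _
  -- Using `hsmall` twice and `hdecay` once gives the rate `(κ⁻²) ^ (2 / 3) = v⁻⁴` at `κ = v ^ 3`.
  have hcube : ((1 + |s|) ^ 2 * D) ^ 3 ≤ (B / v ^ 4 * |s|) ^ 3 :=
    calc ((1 + |s|) ^ 2 * D) ^ 3 = (1 + |s|) ^ 6 * D ^ 2 * D := by ring
      _ ≤ (1 + |s|) ^ 6 * (6 * |s| ^ 2 * (1 + |s|) ^ 4 / (v ^ 3) ^ 2) ^ 2 * D := by gcongr
      _ = 36 * |s| ^ 3 / v ^ 12 * (|s| * (1 + |s|) ^ 14 * D) := by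
          field_simp
          ring
      _ ≤ 36 * |s| ^ 3 / v ^ 12 * ((1 + |s|) * (1 + |s|) ^ 14 * D) := by
          gcongr
          linarith
      _ = |s| ^ 3 / v ^ 12 * (36 * ((1 + |s|) ^ 15 * D)) := by ring
      _ ≤ |s| ^ 3 / v ^ 12 * B ^ 3 := by
          gcongr
          refine le_trans ?_ (le_self_pow₀ (by linarith [abs_nonneg (C₁ + C₂)]) three_ne_zero)
          linarith [le_abs_self (C₁ + C₂)]
      _ = (B / v ^ 4 * |s|) ^ 3 := by ring
  exact le_of_pow_le_pow_left₀ three_ne_zero (by positivity) hcube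

lemma pow_four_le_three_mul_sq {v t : ℝ} (hv : 1 ≤ v) (ht : v ^ 3 ≤ √3 * t) :
    v ^ 4 ≤ 3 * t ^ 2 :=
  calc v ^ 4 ≤ v ^ 6 := pow_le_pow_right₀ hv (by norm_num)
    _ = (v ^ 3) ^ 2 := by ring
    _ ≤ (√3 * t) ^ 2 := by gcongr
    _ = 3 * t ^ 2 := by rw [mul_pow, Real.sq_sqrt (by norm_num)]

lemma sq_mul_le_div_mul {v t x C : ℝ} (hv : 1 ≤ v) (ht0 : 0 ≤ t) (ht : v ^ 3 ≤ √3 * t)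
    (hx0 : 0 ≤ x) (hx : (1 + t) ^ 3 * x ≤ C) : (1 + t) ^ 2 * x ≤ 3 * C / v ^ 4 * t := by
  rw [div_mul_eq_mul_div, le_div_iff₀ (by positivity)]
  calc (1 + t) ^ 2 * x * v ^ 4 ≤ (1 + t) ^ 2 * x * (3 * t ^ 2) := by
        gcongr
        exact pow_four_le_three_mul_sq hv ht
    _ = 3 * t * (t * ((1 + t) ^ 2 * x)) := by ring
    _ ≤ 3 * t * ((1 + t) * ((1 + t) ^ 2 * x)) := by
        gcongr
        linarith
    _ = 3 * ((1 + t) ^ 3 * x) * t := by ring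
    _ ≤ 3 * C * t := by gcongr

lemma exists_sq_mul_gaussianExp_le :
    ∃ C, ∀ v s : ℝ, 1 ≤ v → (v ^ 3) ^ 3 ≤ |s| ^ 2 →
      (1 + |s|) ^ 2 * gaussianExp ((v ^ 4)⁻¹ * s) ≤ C / v ^ 4 * |s| := by
  obtain ⟨C, hC⟩ := exists_pow_mul_gaussianExp_le 17
  refine ⟨4 * C, fun v s hv hs => ?_⟩
  have hv0 : 0 < v := by linarith
  have hs1 : 1 ≤ |s| :=
    (one_le_sq_iff₀ (abs_nonneg s)).1 ((one_le_pow₀ (one_le_pow₀ hv)).trans hs)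
  set y := (v ^ 4)⁻¹ * s
  have hsy : |s| = v ^ 4 * |y| := by
    rw [abs_mul, abs_of_pos (inv_pos.2 (pow_pos hv0 4)), mul_inv_cancel_left₀ (by positivity)]
  have hvy : v ≤ |y| ^ 2 := by
    rw [hsy, mul_pow] at hs
    refine le_of_mul_le_mul_left ?_ (pow_pos hv0 8)
    linarith
  have hgauss := (gaussianExp_pos y).le
  rw [div_mul_eq_mul_div, le_div_iff₀ (by positivity)]
  calc (1 + |s|) ^ 2 * gaussianExp y * v ^ 4 ≤ (|s| + |s|) ^ 2 * gaussianExp y * v ^ 4 := by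
        gcongr
    _ = 4 * (v ^ 8 * |y| * gaussianExp y) * |s| := by
        rw [hsy]
        ring
    _ ≤ 4 * ((|y| ^ 2) ^ 8 * |y| * gaussianExp y) * |s| := by gcongr
    _ = 4 * (|y| ^ 17 * gaussianExp y) * |s| := by ring
    _ ≤ 4 * ((1 + |y|) ^ 17 * gaussianExp y) * |s| := by
        gcongr
        linarith
    _ ≤ 4 * C * |s| := by
        gcongr
        exact hC y

lemma exists_norm_gaussianExp_mul_logCharFun_le :
    ∃ C, ∀ (n : ℕ) (v s : ℝ), 3 ≤ v → Real.log n = (v ^ 3) ^ 2 → v ^ 3 ≤ √3 * |s| →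
      (1 + |s|) ^ 2 *
        ‖(gaussianExp ((v ^ 4)⁻¹ * s) : ℂ) * logCharFun n (√3 * s / (v ^ 3) ^ 3)‖ ≤
          C / v ^ 4 * |s| := by
  obtain ⟨C₁, hC₁⟩ := exists_pow_mul_norm_logCharFun_le 3
  obtain ⟨C₂, hC₂⟩ := exists_sq_mul_gaussianExp_le
  refine ⟨max (3 * C₁) C₂, fun n v s hv hn hs => ?_⟩
  have hκ : 22 ≤ v ^ 3 := (by norm_num : (22 : ℝ) ≤ 3 ^ 3).trans (by gcongr)
  have hgauss := (gaussianExp_pos ((v ^ 4)⁻¹ * s)).le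
  rw [norm_mul, Complex.norm_of_nonneg hgauss]
  rcases le_total (|s| ^ 2) ((v ^ 3) ^ 3) with hnear | hfar
  · calc _ ≤ (1 + |s|) ^ 2 * (1 * ‖logCharFun n (√3 * s / (v ^ 3) ^ 3)‖) := by
          gcongr
          exact gaussianExp_le_one _
      _ ≤ 3 * C₁ / v ^ 4 * |s| := by
          rw [one_mul]
          exact sq_mul_le_div_mul (by linarith) (abs_nonneg s) hs (norm_nonneg _)
            (hC₁ n _ s hκ hn hnear)
      _ ≤ max (3 * C₁) C₂ / v ^ 4 * |s| := by
          gcongr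
          exact le_max_left _ _
  · calc _ ≤ (1 + |s|) ^ 2 * (gaussianExp ((v ^ 4)⁻¹ * s) * 1) := by
          gcongr
          exact norm_weightedCharFun_le_one _ _ _ _
      _ ≤ C₂ / v ^ 4 * |s| := by
          rw [mul_one]
          exact hC₂ v s (by linarith) hfar
      _ ≤ max (3 * C₁) C₂ / v ^ 4 * |s| := by
          gcongr
          exact le_max_right _ _

lemma norm_ofReal_mul_sub_le {γ : ℝ} (hγ0 : 0 ≤ γ) (hγ1 : γ ≤ 1) (ψ g : ℂ) :
    ‖(γ : ℂ) * ψ - g‖ ≤ ‖((γ - 1 : ℝ) : ℂ) * g‖ + ‖ψ - g‖ := by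
  have hsplit : (γ : ℂ) * ψ - g = ((γ - 1 : ℝ) : ℂ) * g + (γ : ℂ) * (ψ - g) := by
    push_cast
    ring
  have hscale : ‖(γ : ℂ) * (ψ - g)‖ ≤ ‖ψ - g‖ := by
    rw [norm_mul, Complex.norm_of_nonneg hγ0]
    exact mul_le_of_le_one_left (norm_nonneg _) hγ1
  rw [hsplit]
  exact (norm_add_le _ _).trans (add_le_add le_rfl hscale)

lemma exists_norm_smoothed_logCharFun_sub_edgeworthCharFun_le :
    ∃ C, ∀ (n : ℕ) (v s : ℝ), 3 ≤ v → Real.log n = (v ^ 3) ^ 2 →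
      (1 + |s|) ^ 2 *
        ‖(gaussianExp ((v ^ 4)⁻¹ * s) : ℂ) * logCharFun n (√3 * s / (v ^ 3) ^ 3) -
          edgeworthCharFun (√3 / 8 / v ^ 3) s‖ ≤ C / v ^ 4 * |s| := by
  obtain ⟨C₁, hC₁⟩ := exists_norm_gaussianExp_sub_one_mul_edgeworthCharFun_le
  obtain ⟨C₂, hC₂⟩ := exists_norm_logCharFun_sub_edgeworthCharFun_le
  obtain ⟨C₃, hC₃⟩ := exists_norm_gaussianExp_mul_logCharFun_le
  obtain ⟨C₄, hC₄⟩ := exists_pow_mul_norm_edgeworthCharFun_le 3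
  refine ⟨max (|C₁| + C₂) (C₃ + 3 * C₄), fun n v s hv hn => ?_⟩
  have hv1 : 1 ≤ v := by linarith
  have hρ := abs_sqrt_three_div_le_one (one_le_pow₀ hv1 : 1 ≤ v ^ 3)
  set ψ := logCharFun n (√3 * s / (v ^ 3) ^ 3)
  set g := edgeworthCharFun (√3 / 8 / v ^ 3) s
  set γ := gaussianExp ((v ^ 4)⁻¹ * s)
  have ht := abs_nonneg s
  rcases le_total (√3 * |s|) (v ^ 3) with hcentral | htail
  · calc _ ≤ (1 + |s|) ^ 2 * (‖((γ - 1 : ℝ) : ℂ) * g‖ + ‖ψ - g‖) := by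
          gcongr
          exact norm_ofReal_mul_sub_le (gaussianExp_pos _).le (gaussianExp_le_one _) ψ g
      _ ≤ C₁ * ((v ^ 4)⁻¹) ^ 2 * |s| + C₂ / v ^ 4 * |s| := by
          rw [mul_add]
          exact add_le_add (hC₁ _ _ s hρ) (hC₂ n v s hv hn hcentral)
      _ ≤ |C₁| * (v ^ 4)⁻¹ * |s| + C₂ / v ^ 4 * |s| := by
          gcongr
          · exact le_abs_self C₁
          · exact pow_le_of_le_one (by positivity) (inv_le_one_of_one_le₀ (one_le_pow₀ hv1))
              two_ne_zero
      _ = (|C₁| + C₂) / v ^ 4 * |s| := by ring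
      _ ≤ _ := by
          gcongr
          exact le_max_left _ _
  · calc _ ≤ (1 + |s|) ^ 2 * (‖(γ : ℂ) * ψ‖ + ‖g‖) := by
          gcongr
          exact norm_sub_le _ _
      _ ≤ C₃ / v ^ 4 * |s| + 3 * C₄ / v ^ 4 * |s| := by
          rw [mul_add]
          exact add_le_add (hC₃ n v s hv hn htail)
            (sq_mul_le_div_mul hv1 ht htail (norm_nonneg _) (hC₄ _ s hρ))
      _ = (C₃ + 3 * C₄) / v ^ 4 * |s| := by ring
      _ ≤ _ := by
          gcongr
          exact le_max_right _ _

lemma exists_abs_fellerMean_markLog_sub_edgeworth_le :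
    ∃ C, ∀ (n : ℕ) (v : ℝ), 3 ≤ v → Real.log n = (v ^ 3) ^ 2 → ∀ x,
      |fellerMean n (fun A => if (markLog A - fellerMean n markLog) / ((√3)⁻¹ * (v ^ 3) ^ 3) < x
        then (1 : ℝ) else 0) - edgeworth (√3 / 8 / v ^ 3) x| ≤ C / v ^ 4 := by
  obtain ⟨C, hC⟩ := exists_norm_smoothed_logCharFun_sub_edgeworthCharFun_le
  refine ⟨C * Real.pi + 96, fun n v hv hn x => ?_⟩
  have hv0 : 0 < v := by linarith
  set X : Finset ℕ → ℝ := fun A =>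
    (markLog A - fellerMean n markLog) / ((√3)⁻¹ * (v ^ 3) ^ 3)
  have hcharFun (s : ℝ) :
      charFun (markLaw fellerProb n X) s = logCharFun n (√3 * s / (v ^ 3) ^ 3) := by
    rw [charFun_markLaw, ← markMean_exp_eq_weightedCharFun, ← markMean_sum_mem]
    congr! 5 with A
    change s * ((markLog A - fellerMean n markLog) / ((√3)⁻¹ * (v ^ 3) ^ 3)) =
      √3 * s / (v ^ 3) ^ 3 * (markLog A - fellerMean n markLog)
    field_simp
  have hle (s : ℝ) (_ : s ≠ 0) :
      ‖(gaussianExp ((v ^ 4)⁻¹ * s) : ℂ) * charFun (markLaw fellerProb n X) s -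
        edgeworthCharFun (√3 / 8 / v ^ 3) s‖ ≤ |s| * (C / v ^ 4 * (1 + s ^ 2)⁻¹) := by
    rw [hcharFun]
    have hsq : 1 + s ^ 2 ≤ (1 + |s|) ^ 2 := by
      rw [← sq_abs]
      linarith [abs_nonneg s]
    have hC' := (mul_le_mul_of_nonneg_right hsq (norm_nonneg _)).trans (hC n v s hv hn)
    rw [← div_eq_mul_inv, mul_div_assoc', le_div_iff₀ (by positivity)]
    linarith
  have hmain := abs_measureReal_Iio_sub_edgeworth_le (integrable_markLaw fellerProb n X id)
    (abs_sqrt_three_div_le_one (one_le_pow₀ (by linarith : 1 ≤ v))) (inv_pos.2 (pow_pos hv0 4))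
    (integrable_inv_one_add_sq.const_mul _) hle x
  rw [measureReal_Iio_markLaw, integral_const_mul, integral_univ_inv_one_add_sq] at hmain
  exact hmain.trans_eq (by ring)

/-! ### From the sum of the logarithms of the marks to the order -/

lemma markMean_ite_lt_le {p : ℕ → unitInterval} {n : ℕ} {Y Z bad : Finset ℕ → ℝ} {δ : ℝ}
    (hbad : ∀ A ⊆ range n, 0 ≤ bad A) (h : ∀ A ⊆ range n, bad A < 1 → Z A ≤ Y A + δ) (x : ℝ) :
    markMean p n (fun A => if Y A < x then (1 : ℝ) else 0) ≤
      markMean p n (fun A => if Z A < x + δ then (1 : ℝ) else 0) + markMean p n bad := by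
  rw [← markMean_add]
  refine markMean_mono fun A hA => ?_
  have hA0 := hbad A hA
  rcases lt_or_ge (bad A) 1 with hlt | hge
  · have hZ := h A hA hlt
    split_ifs <;> linarith
  · split_ifs <;> linarith

lemma abs_markMean_ite_lt_sub_le {p : ℕ → unitInterval} {n : ℕ} {Y Z bad : Finset ℕ → ℝ}
    {δ ε : ℝ} (hδ : 0 ≤ δ) (hbad : ∀ A ⊆ range n, 0 ≤ bad A)
    (h : ∀ A ⊆ range n, bad A < 1 → |Y A - Z A| ≤ δ) {φ : ℝ → ℝ} {K : NNReal}
    (hφ : LipschitzWith K φ)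
    (hZ : ∀ x, |markMean p n (fun A => if Z A < x then (1 : ℝ) else 0) - φ x| ≤ ε) (x : ℝ) :
    |markMean p n (fun A => if Y A < x then (1 : ℝ) else 0) - φ x| ≤
      ε + K * δ + markMean p n bad := by
  have hupper := markMean_ite_lt_le (p := p) hbad
    (fun A hA hlt => by linarith [(abs_le.1 (h A hA hlt)).1] : ∀ A ⊆ range n, _ → Z A ≤ Y A + δ) x
  have hlower := markMean_ite_lt_le (p := p) hbad
    (fun A hA hlt => by linarith [(abs_le.1 (h A hA hlt)).2] : ∀ A ⊆ range n, _ → Y A ≤ Z A + δ)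
      (x - δ)
  rw [sub_add_cancel] at hlower
  have hφupper := abs_le.1 (hφ.dist_le_mul (x + δ) x)
  have hφlower := abs_le.1 (hφ.dist_le_mul (x - δ) x)
  rw [Real.dist_eq, add_sub_cancel_left, abs_of_nonneg hδ] at hφupper
  rw [Real.dist_eq, sub_sub_cancel_left, abs_neg, abs_of_nonneg hδ] at hφlower
  rw [abs_le]
  constructor <;>
    linarith [abs_le.1 (hZ (x + δ)), abs_le.1 (hZ (x - δ))]

/-- The deviation of `d` is controlled by Chebyshev's inequality, the size of `e` by Markov's. -/
lemma abs_markMean_centred_lt_sub_le {p : ℕ → unitInterval} {n : ℕ} {T X d e : Finset ℕ → ℝ}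
    {B η ε : ℝ} (hB : 0 < B) (hη : 0 < η) (hT : ∀ A ⊆ range n, T A = X A + d A - e A)
    (he : ∀ A ⊆ range n, 0 ≤ e A) (heB : markMean p n e ≤ η * B) {φ : ℝ → ℝ} {K : NNReal}
    (hφ : LipschitzWith K φ)
    (hX : ∀ x, |markMean p n (fun A => if (X A - markMean p n X) / B < x then (1 : ℝ) else 0) -
      φ x| ≤ ε) (x : ℝ) :
    |markMean p n (fun A => if (T A - markMean p n T) / B < x then (1 : ℝ) else 0) - φ x| ≤
      ε + K * (2 * η) + (markVar p n d / (η * B) ^ 2 + markMean p n e / (η * B)) := by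
  have hηB : 0 < η * B := mul_pos hη hB
  have hmeanT : markMean p n T = markMean p n X + markMean p n d - markMean p n e := by
    rw [markMean_congr hT, markMean_sub, markMean_add]
  have hmeane : 0 ≤ markMean p n e := markMean_nonneg he
  set bad : Finset ℕ → ℝ := fun A =>
    1 / (η * B) ^ 2 * (d A - markMean p n d) ^ 2 + 1 / (η * B) * e A with hbad
  have hmeanbad :
      markMean p n bad = markVar p n d / (η * B) ^ 2 + markMean p n e / (η * B) := by
    rw [hbad, markMean_add, markMean_const_mul, markMean_const_mul, one_div_mul_eq_div,
      one_div_mul_eq_div, markVar]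
  rw [← hmeanbad]
  refine abs_markMean_ite_lt_sub_le (by positivity) (fun A hA => ?_) (fun A hA hlt => ?_) hφ hX x
  · have := he A hA
    positivity
  · have he0 := he A hA
    have hd0 : 0 ≤ 1 / (η * B) ^ 2 * (d A - markMean p n d) ^ 2 := by positivity
    have hd1 : 1 / (η * B) ^ 2 * (d A - markMean p n d) ^ 2 < 1 := by
      have : 0 ≤ 1 / (η * B) * e A := by positivity
      linarith
    have he1 : 1 / (η * B) * e A < 1 := by linarith
    rw [one_div_mul_eq_div, div_lt_one (by positivity)] at hd1 he1
    have hd := abs_lt.1 (abs_lt_of_sq_lt_sq hd1 hηB.le)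
    rw [← sub_div, abs_div, abs_of_pos hB, div_le_iff₀ hB, hT A hA, hmeanT, abs_le]
    constructor <;> linarith

lemma harmonic_le_two_mul_log {n : ℕ} (hn : 1 ≤ Real.log n) :
    (harmonic n : ℝ) ≤ 2 * Real.log n := by
  linarith [harmonic_le_one_add_log n]

lemma log_ceil_pow_three_le {L : ℝ} (hL : 2 ≤ L) : Real.log ⌈L ^ 3⌉₊ ≤ 4 * Real.log L := by
  have hpos : 0 < L ^ 3 := by positivity
  have hle : (⌈L ^ 3⌉₊ : ℝ) ≤ L ^ 4 :=
    calc (⌈L ^ 3⌉₊ : ℝ) ≤ L ^ 3 + 1 := (Nat.ceil_lt_add_one hpos.le).le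
      _ ≤ L ^ 3 + L ^ 3 := by
          gcongr
          exact one_le_pow₀ (by linarith)
      _ = 2 * L ^ 3 := by ring
      _ ≤ L * L ^ 3 := by gcongr
      _ = L ^ 4 := by ring
  calc Real.log ⌈L ^ 3⌉₊ ≤ Real.log (L ^ 4) :=
        Real.log_le_log (by exact_mod_cast Nat.ceil_pos.2 hpos) hle
    _ = 4 * Real.log L := by simp [Real.log_pow]

lemma markVar_discrepancy_ceil_le {n : ℕ} (hn : 3 ≤ Real.log n) :
    markVar fellerProb n (discrepancy (Ioc 0 ⌈Real.log n ^ 3⌉₊) n) ≤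
      9600 * Real.log (Real.log n) ^ 2 * Real.log n := by
  have hlogQ := log_ceil_pow_three_le (by linarith : 2 ≤ Real.log n)
  set Q := ⌈Real.log n ^ 3⌉₊
  have hloglog : 1 ≤ Real.log (Real.log n) := by
    rw [Real.le_log_iff_exp_le (by linarith)]
    linarith [Real.exp_one_lt_d9]
  have hharmonic := harmonic_le_two_mul_log (by linarith : 1 ≤ Real.log n)
  have : 0 ≤ Real.log Q := Real.log_natCast_nonneg Q
  have := harmonic_nonneg n
  refine (markVar_discrepancy_le (sum_logPart_sq_le Q) n).trans ?_
  calc 25 * (32 + 6 * Real.log Q ^ 2) * (harmonic n + 1)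
      ≤ 25 * (32 * Real.log (Real.log n) ^ 2 + 6 * (4 * Real.log (Real.log n)) ^ 2) *
          (3 * Real.log n) := by
        gcongr
        · exact le_mul_of_one_le_right (by norm_num) (one_le_pow₀ hloglog)
        · linarith
    _ = 9600 * Real.log (Real.log n) ^ 2 * Real.log n := by ring

lemma fellerMean_excess_ceil_le {n : ℕ} (hn : 1 ≤ Real.log n) :
    fellerMean n (fun A => excess (Ioc 0 ⌈Real.log n ^ 3⌉₊) (gaps n A)) ≤ 8 := by
  have hQ : 0 < ⌈Real.log n ^ 3⌉₊ := Nat.ceil_pos.2 (by positivity)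
  refine (fellerMean_excess_le hQ n).trans ?_
  have := harmonic_nonneg n
  rw [div_le_iff₀ (by exact_mod_cast hQ)]
  calc 2 * Real.log n * harmonic n ^ 2 ≤ 2 * Real.log n * (2 * Real.log n) ^ 2 := by
        gcongr
        exact harmonic_le_two_mul_log hn
    _ = 8 * Real.log n ^ 3 := by ring
    _ ≤ 8 * ⌈Real.log n ^ 3⌉₊ := by
        gcongr
        exact Nat.le_ceil _

/-- The order `(log L / L) ^ (2 / 3)` of the remainder of the expansion, where `L = log n`. -/
noncomputable def errorRate (L : ℝ) : ℝ := (Real.log L / L) ^ ((2 : ℝ) / 3)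

lemma errorRate_nonneg {L : ℝ} (hL : 1 ≤ L) : 0 ≤ errorRate L :=
  Real.rpow_nonneg (div_nonneg (Real.log_nonneg hL) (by linarith)) _

lemma errorRate_pow_three {L : ℝ} (hL : 1 ≤ L) : errorRate L ^ 3 = (Real.log L / L) ^ 2 := by
  have : 0 ≤ Real.log L / L := div_nonneg (Real.log_nonneg hL) (by linarith)
  rw [errorRate, ← Real.rpow_natCast, ← Real.rpow_mul this, ← Real.rpow_natCast]
  norm_num

lemma inv_pow_four_le_errorRate {v : ℝ} (hv : 3 ≤ v) : (v ^ 4)⁻¹ ≤ errorRate ((v ^ 3) ^ 2) := by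
  have hlog : 1 ≤ Real.log ((v ^ 3) ^ 2) := by
    rw [Real.le_log_iff_exp_le (by positivity)]
    calc Real.exp 1 ≤ 3 := by linarith [Real.exp_one_lt_d9]
      _ ≤ v := hv
      _ ≤ v ^ 6 := le_self_pow₀ (by linarith) (by norm_num)
      _ = (v ^ 3) ^ 2 := by ring
  have hL : 1 ≤ (v ^ 3) ^ 2 := one_le_pow₀ (one_le_pow₀ (by linarith))
  have hcube : (v ^ 4)⁻¹ ^ 3 ≤ errorRate ((v ^ 3) ^ 2) ^ 3 := by
    rw [errorRate_pow_three hL]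
    calc (v ^ 4)⁻¹ ^ 3 = (1 / (v ^ 3) ^ 2) ^ 2 := by
          field_simp
      _ ≤ _ := by gcongr
  exact le_of_pow_le_pow_left₀ three_ne_zero (errorRate_nonneg hL) hcube

lemma exists_pos_le_errorRate (M : ℝ) :
    ∃ c, 0 < c ∧ ∀ L, Real.log 3 ≤ L → L ≤ M → c ≤ errorRate L := by
  have hlog : 1 < Real.log 3 := by
    rw [Real.lt_log_iff_exp_lt (by norm_num)]
    linarith [Real.exp_one_lt_d9]
  have hloglog : 0 < Real.log (Real.log 3) := Real.log_pos hlog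
  have : 0 < max M 1 := lt_max_of_lt_right one_pos
  refine ⟨(Real.log (Real.log 3) / max M 1) ^ ((2 : ℝ) / 3), by positivity, fun L hL hLM => ?_⟩
  have hle : Real.log (Real.log 3) ≤ Real.log L := Real.log_le_log (by linarith) hL
  exact Real.rpow_le_rpow (by positivity)
    (div_le_div₀ (hloglog.le.trans hle) hle (by linarith) (hLM.trans (le_max_left _ _)))
    (by norm_num)

/-- The distribution function of the centred logarithm of the order of a uniform random permutation
of `n` letters, divided by `B`; the cycle type of the permutation is modelled by `gaps n A`. -/
noncomputable def orderCDF (n : ℕ) (B x : ℝ) : ℝ :=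
  fellerMean n fun A =>
    if (Real.log (gaps n A).lcm - fellerMean n fun A => Real.log (gaps n A).lcm) / B < x
    then 1 else 0

lemma sum_ite_log_orderOf_eq_orderCDF (n : ℕ) (B x : ℝ) :
    (∑ σ : Equiv.Perm (Fin n), if (Real.log (orderOf σ) -
      (∑ σ : Equiv.Perm (Fin n), Real.log (orderOf σ)) / n.factorial) / B < x
        then (1 : ℝ) else 0) / n.factorial = orderCDF n B x := by
  have hmean (G : ℕ → ℝ) : (∑ σ : Equiv.Perm (Fin n), G (orderOf σ)) / n.factorial =
      fellerMean n fun A => G (gaps n A).lcm := by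
    simpa only [Fintype.card_fin] using average_orderOf_eq_fellerMean (α := Fin n) G
  rw [hmean fun k => Real.log k, hmean fun k => if (Real.log k - _) / B < x then 1 else 0, orderCDF]

lemma orderCDF_nonneg (n : ℕ) (B x : ℝ) : 0 ≤ orderCDF n B x :=
  markMean_nonneg fun A _ => by split_ifs <;> norm_num

lemma orderCDF_le_one (n : ℕ) (B x : ℝ) : orderCDF n B x ≤ 1 :=
  (markMean_mono (g := fun _ => 1) fun A _ => by split_ifs <;> norm_num).trans_eq
    (markMean_const _ n 1)

lemma div_sq_errorRate_mul_eq {v : ℝ} (hv : 3 ≤ v) :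
    9600 * Real.log ((v ^ 3) ^ 2) ^ 2 * (v ^ 3) ^ 2 /
      (errorRate ((v ^ 3) ^ 2) * ((√3)⁻¹ * (v ^ 3) ^ 3)) ^ 2 = 28800 * errorRate ((v ^ 3) ^ 2) := by
  have hη := (inv_pos.2 (by positivity : 0 < v ^ 4)).trans_le (inv_pow_four_le_errorRate hv)
  have hcube := errorRate_pow_three (one_le_pow₀ (one_le_pow₀ (by linarith)) : 1 ≤ (v ^ 3) ^ 2)
  set η := errorRate ((v ^ 3) ^ 2)
  rw [div_pow, eq_div_iff (by positivity)] at hcube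
  rw [← hcube, mul_pow, mul_pow, inv_pow, Real.sq_sqrt (by norm_num)]
  field_simp
  norm_num

lemma pow_five_le_errorRate_mul {v : ℝ} (hv : 3 ≤ v) :
    v ^ 5 / 2 ≤ errorRate ((v ^ 3) ^ 2) * ((√3)⁻¹ * (v ^ 3) ^ 3) := by
  have : 0 < v := by linarith
  calc v ^ 5 / 2 = (v ^ 4)⁻¹ * (2⁻¹ * (v ^ 3) ^ 3) := by field_simp
    _ ≤ _ := by
        gcongr
        · exact errorRate_nonneg (one_le_pow₀ (one_le_pow₀ (by linarith)))
        · exact inv_pow_four_le_errorRate hv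
        · exact sqrt_three_le_two

lemma div_errorRate_mul_le {v : ℝ} (hv : 3 ≤ v) :
    8 / (errorRate ((v ^ 3) ^ 2) * ((√3)⁻¹ * (v ^ 3) ^ 3)) ≤ 16 * errorRate ((v ^ 3) ^ 2) := by
  have : 0 < v := by linarith
  calc _ ≤ 8 / (v ^ 5 / 2) := by
        gcongr
        exact pow_five_le_errorRate_mul hv
    _ = 16 * ((v ^ 4)⁻¹ * v⁻¹) := by
        field_simp
        norm_num
    _ ≤ 16 * ((v ^ 4)⁻¹ * 1) := by
        gcongr
        exact inv_le_one_of_one_le₀ (by linarith)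
    _ ≤ 16 * errorRate ((v ^ 3) ^ 2) := by
        rw [mul_one]
        gcongr
        exact inv_pow_four_le_errorRate hv

lemma exists_abs_orderCDF_sub_edgeworth_le_of_large :
    ∃ C, 0 ≤ C ∧ ∀ (n : ℕ) (v : ℝ), 3 ≤ v → Real.log n = (v ^ 3) ^ 2 → ∀ x,
      |orderCDF n ((√3)⁻¹ * (v ^ 3) ^ 3) x - edgeworth (√3 / 8 / v ^ 3) x| ≤
        C * errorRate (Real.log n) := by
  obtain ⟨C, hC⟩ := exists_abs_fellerMean_markLog_sub_edgeworth_le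
  refine ⟨|C| + 28832, by positivity, fun n v hv hn x => ?_⟩
  have hL : 3 ≤ Real.log n := by
    rw [hn, ← pow_mul]
    exact hv.trans (le_self_pow₀ (by linarith) (by norm_num))
  have hrate := inv_pow_four_le_errorRate hv
  have hη := (inv_pos.2 (by positivity : 0 < v ^ 4)).trans_le hrate
  have hmarkov := div_errorRate_mul_le hv
  have hscale : 8 ≤ errorRate ((v ^ 3) ^ 2) * ((√3)⁻¹ * (v ^ 3) ^ 3) := by
    refine le_trans ?_ (pow_five_le_errorRate_mul hv)
    linarith [pow_le_pow_left₀ (by norm_num) hv 5]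
  have hchebyshev := div_sq_errorRate_mul_eq hv
  have hvar := markVar_discrepancy_ceil_le hL
  have hexcess := fellerMean_excess_ceil_le (by linarith : 1 ≤ Real.log n)
  set Q := ⌈Real.log n ^ 3⌉₊
  rw [← hn] at hrate hη hmarkov hscale hchebyshev
  set η := errorRate (Real.log n)
  set B := (√3)⁻¹ * (v ^ 3) ^ 3
  refine (abs_markMean_centred_lt_sub_le (X := markLog) (d := discrepancy (Ioc 0 Q) n)
    (e := fun A => excess (Ioc 0 Q) (gaps n A)) (by positivity) hη
    (fun A _ => by simp only [discrepancy, excess]; ring)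
    (fun A hA => excess_nonneg _ fun d hd => (mem_gaps_bounds hA hd).1) (hexcess.trans hscale)
    (lipschitzWith_edgeworth (abs_sqrt_three_div_le_one (one_le_pow₀ (by linarith))))
    (hC n v hv hn) x).trans ?_
  calc _ ≤ |C| * η + 8 * (2 * η) + (28800 * η + 16 * η) := by
        rw [← hchebyshev, div_eq_mul_inv C]
        gcongr
        · exact le_abs_self C
        · exact le_rfl
        · exact le_trans (by gcongr) hmarkov
    _ = (|C| + 28832) * η := by ring

lemma exists_three_le_of_pow_six_le {L : ℝ} (hL : 3 ^ 6 ≤ L) :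
    ∃ v, 3 ≤ v ∧ v ^ 3 = √L ∧ L = (v ^ 3) ^ 2 ∧ (v ^ 3) ^ 3 = L ^ ((3 : ℝ) / 2) := by
  have hL0 : 0 ≤ L := le_trans (by norm_num) hL
  have hcube : (L ^ ((1 : ℝ) / 6)) ^ 3 = √L := by
    rw [Real.sqrt_eq_rpow, ← Real.rpow_natCast, ← Real.rpow_mul hL0]
    norm_num
  have hsq : L = ((L ^ ((1 : ℝ) / 6)) ^ 3) ^ 2 := by rw [hcube, Real.sq_sqrt hL0]
  refine ⟨L ^ ((1 : ℝ) / 6), ?_, hcube, hsq, ?_⟩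
  · rw [hsq, ← pow_mul] at hL
    exact le_of_pow_le_pow_left₀ (by norm_num) (Real.rpow_nonneg hL0 _) hL
  · rw [hcube, Real.sqrt_eq_rpow, ← Real.rpow_natCast, ← Real.rpow_mul hL0]
    norm_num

lemma exists_abs_orderCDF_sub_edgeworth_le :
    ∃ C, 0 < C ∧ ∀ n : ℕ, 3 ≤ n → ∀ x,
      |orderCDF n ((√3)⁻¹ * Real.log n ^ ((3 : ℝ) / 2)) x - edgeworth (√3 / 8 / √(Real.log n)) x| ≤
        C * errorRate (Real.log n) := by
  obtain ⟨C, hC0, hC⟩ := exists_abs_orderCDF_sub_edgeworth_le_of_large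
  obtain ⟨c, hc0, hc⟩ := exists_pos_le_errorRate (3 ^ 6)
  refine ⟨C + 4 / c, by positivity, fun n hn x => ?_⟩
  have hL3 : Real.log 3 ≤ Real.log n := Real.log_le_log (by norm_num) (by exact_mod_cast hn)
  have hL1 : 1 ≤ Real.log n := by
    refine le_trans ?_ hL3
    rw [Real.le_log_iff_exp_le (by norm_num)]
    linarith [Real.exp_one_lt_d9]
  rcases le_total (3 ^ 6) (Real.log n) with hlarge | hsmall
  · obtain ⟨v, hv, hv3, hv6, hv9⟩ := exists_three_le_of_pow_six_le hlarge
    rw [← hv9, ← hv3]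
    refine (hC n v hv hv6 x).trans ?_
    gcongr
    · exact errorRate_nonneg hL1
    · exact le_add_of_nonneg_right (by positivity)
  · calc _ ≤ 4 := abs_sub_edgeworth_le (abs_sqrt_three_div_le_one (Real.one_le_sqrt.2 hL1))
          (orderCDF_nonneg _ _ _) (orderCDF_le_one _ _ _) x
      _ = 4 / c * c := (div_mul_cancel₀ 4 hc0.ne').symm
      _ ≤ (C + 4 / c) * errorRate (Real.log n) := by
          gcongr
          · linarith
          · exact hc _ hL3 hsmall

lemma sub_stdNormalCDF_sub_eq (P L x : ℝ) :
    P - stdNormalCDF x - (3 : ℝ) ^ ((3 : ℝ) / 2) / (24 * √(2 * Real.pi)) *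
      ((1 - x ^ 2) * Real.exp (-x ^ 2 / 2)) / √L = P - edgeworth (√3 / 8 / √L) x := by
  have hthree : (3 : ℝ) ^ ((3 : ℝ) / 2) = 3 * √3 := by
    rw [show (3 : ℝ) / 2 = 1 + 1 / 2 by norm_num, Real.rpow_add (by norm_num), Real.rpow_one,
      Real.sqrt_eq_rpow]
  rw [edgeworth, gaussianExp, hthree, sub_sub]
  congr 2
  rw [div_eq_mul_inv _ (24 * √(2 * Real.pi)), mul_inv]
  ring

end ErdosTuran

/-- Erdős–Turán law on `S_n` with an asymptotic expansion term and remainder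
`O(((log log n)/(log n))^{2/3})`, for the uniform measure on `S_n`. -/
theorem erdos_turan_expansion_symmetric_group :
    ∃ C : ℝ, 0 < C ∧
      ∀ n : ℕ, 3 ≤ n →
        (let mean : ℝ :=
            (∑ σ : Equiv.Perm (Fin n), Real.log (orderOf σ)) / (n.factorial : ℝ);
         ∀ x : ℝ,
          |(∑ σ : Equiv.Perm (Fin n),
                if (Real.log (orderOf σ) - mean) /
                    ((Real.sqrt 3)⁻¹ * Real.log n ^ ((3 : ℝ) / 2)) < x
                then (1 : ℝ) else 0) / (n.factorial : ℝ)
              - stdNormalCDF x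
              - (3 : ℝ) ^ ((3 : ℝ) / 2) / (24 * Real.sqrt (2 * Real.pi)) *
                  ((1 - x ^ 2) * Real.exp (-x ^ 2 / 2)) / Real.sqrt (Real.log n)|
            ≤ C * (Real.log (Real.log n) / Real.log n) ^ ((2 : ℝ) / 3)) := by
  obtain ⟨C, hC0, hC⟩ := ErdosTuran.exists_abs_orderCDF_sub_edgeworth_le
  refine ⟨C, hC0, fun n hn => ?_⟩
  intro mean x
  rw [ErdosTuran.sum_ite_log_orderOf_eq_orderCDF, ErdosTuran.sub_stdNormalCDF_sub_eq]
  exact hC n hn x
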